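/- For every integer α ≥ 1 there exists an integer x such that, in the d_5 tower, L_{2α+2} ≡ x·L_{2α} (mod 7^{α+1}), where congruence of Laurent series means all corresponding coefficients are congruent. -/

import Mathlib

/-!
Write `ξ = q⁻² J₁ / J₄₉` and `η = ξ(q²)`, so that `A₅ = ξ⁻¹⁶ η⁵`, and let `T = q J₇⁴ / J₁⁴` be the
Hauptmodul of level 7 and `S = T(q²)`. Since `T(q) T(q⁷) ξ⁴ = 1`, the operator `U₇` sends
`ξ ^ i η ^ j T ^ a S ^ b` to `T ^ (-a) S ^ (-b)` times a trace `U₇ (ξ ^ i' η ^ j')`. These traces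
satisfy in each index a linear recurrence of order 7, which comes from the modular equation between
`ξ` and `T(q⁷)`, so they are determined by those with `0 ≤ i', j' < 7`, which are polynomials in
`1 / T`, `1 / S` and one further function `g` of level 14.

The modular equation and the table of traces are formal consequences of relations between the
components of `ξ` and `η` in the residue classes of degrees modulo 7. The relations follow from the
dissection of the theta series of Euler and Gauss, and the value of the cyclic invariant `kleinX`
from taking norms over the substitutions `q ↦ ζ ^ i q` with `ζ ^ 7 = 1`.

The divisibility by 7 of the coefficients of the recurrence makes `U₇` preserve lattices spanned by
monomials `7 ^ max(0, a + b - k) T ^ a S ^ b`. For the lattice `Λ` of the even terms, the passage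
from `L_{2α}` to `L_{2α+2}` sends `7 ^ n Λ` into `7 ^ n ℤ T + 7 ^ (n + 1) Λ`. It multiplies `T`
by `4` modulo `7 Λ`, and `L₂` is `63 T` modulo `7 ^ 2 Λ`, so every `L_{2α}` with `α ≥ 1` is `7 T`
times an integer prime to 7, modulo `7 ^ 2 Λ`. If now `L_{2α+2} - x L_{2α}` lies in
`7 ^ (α + 1) Λ`, then `L_{2α+4} - x L_{2α+2}` lies in `7 ^ (α + 1) ℤ T + 7 ^ (α + 2) Λ`, and adding
a multiple of `7 ^ α` to `x` removes the term in `T`.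
-/

noncomputable section

/-- `J b = ∏_{k=1}^∞ (1 - q^{b·k})` as a formal power series with integer coefficients. -/
def J (b : ℕ) : PowerSeries ℤ :=
  PowerSeries.mk fun n =>
    PowerSeries.coeff n
      (∏ k ∈ Finset.range (n + 1), (1 - (PowerSeries.X : PowerSeries ℤ) ^ (b * (k + 1))))

/-! ### The 7-adic growth lattice -/

section Lattice

variable {R : Type*} [CommRing R] {T S : Rˣ} {N : ℕ}

variable (T S) in
/-- The Laurent monomial `T ^ a * S ^ b` in two units. -/
def laurentMonomial (a b : ℤ) : R := ((T ^ a * S ^ b : Rˣ) : R)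

variable (T S N) in
/-- The additive group spanned, modulo `7 ^ N`, by the `7 ^ max(0, a + b - k) T ^ a S ^ b` with
`l₁ ≤ a + 2 b` and `l₂ ≤ 2 a + b`. It measures the 7-adic size of coefficients against the degree
(`k`), and the orders of vanishing at two cusps (`l₁`, `l₂`). -/
def growthLattice (k l₁ l₂ : ℤ) : AddSubgroup R :=
  AddSubgroup.closure
    ({z | ∃ a b : ℤ, l₁ ≤ a + 2 * b ∧ l₂ ≤ 2 * a + b ∧
        z = 7 ^ (a + b - k).toNat * laurentMonomial T S a b} ∪
      Set.range fun r : R => 7 ^ N * r)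

local notation "𝔪" => laurentMonomial T S
local notation "Λ" => growthLattice T S N

theorem laurentMonomial_mul (a b c d : ℤ) : 𝔪 a b * 𝔪 c d = 𝔪 (a + c) (b + d) := by
  rw [laurentMonomial, laurentMonomial, laurentMonomial, ← Units.val_mul, mul_mul_mul_comm,
    ← zpow_add, ← zpow_add]

theorem laurentMonomial_zero : 𝔪 0 0 = 1 := by simp [laurentMonomial]

theorem laurentMonomial_swap (a b : ℤ) : laurentMonomial S T b a = 𝔪 a b := by
  rw [laurentMonomial, laurentMonomial, mul_comm]

namespace growthLattice

variable {k l₁ l₂ k' l₁' l₂' : ℤ}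

theorem seven_pow_mul_mem (r : R) : 7 ^ N * r ∈ Λ k l₁ l₂ :=
  AddSubgroup.subset_closure (Or.inr ⟨r, rfl⟩)

theorem intCast_mul_mem {x : R} (hx : x ∈ Λ k l₁ l₂) (c : ℤ) : (c : R) * x ∈ Λ k l₁ l₂ := by
  rw [← zsmul_eq_mul]
  exact zsmul_mem hx c

theorem seven_pow_mul_monomial_mem {m : ℕ} {a b : ℤ} (h₁ : l₁ ≤ a + 2 * b) (h₂ : l₂ ≤ 2 * a + b)
    (hk : a + b - k ≤ m) : 7 ^ m * 𝔪 a b ∈ Λ k l₁ l₂ := by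
  obtain ⟨d, rfl⟩ : ∃ d : ℕ, m = d + (a + b - k).toNat := ⟨m - (a + b - k).toNat, by omega⟩
  have generator : 7 ^ (a + b - k).toNat * 𝔪 a b ∈ Λ k l₁ l₂ :=
    AddSubgroup.subset_closure (Or.inl ⟨a, b, h₁, h₂, rfl⟩)
  simpa [pow_add, mul_assoc] using intCast_mul_mem generator (7 ^ d)

theorem map_mem {K : R →+ R} {G : AddSubgroup R} (hN : ∀ r, K (7 ^ N * r) ∈ G)
    (hG : ∀ (m : ℕ) (a b : ℤ), l₁ ≤ a + 2 * b → l₂ ≤ 2 * a + b → (m : ℤ) = max 0 (a + b - k) →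
      K (7 ^ m * 𝔪 a b) ∈ G) {x : R} (hx : x ∈ Λ k l₁ l₂) : K x ∈ G := by
  have hle : Λ k l₁ l₂ ≤ G.comap K := by
    rw [growthLattice, AddSubgroup.closure_le]
    rintro z (⟨a, b, h₁, h₂, rfl⟩ | ⟨r, rfl⟩)
    · exact hG _ a b h₁ h₂ (by omega)
    · exact hN r
  exact hle hx

theorem intCast_mul_monomial_mul_mem {a b c : ℤ} (m : ℕ) (hc : (7 : ℤ) ^ m ∣ c) {x : R}
    (hx : x ∈ Λ k l₁ l₂) (hk : k + a + b ≤ k' + m) (h₁ : l₁' ≤ l₁ + a + 2 * b)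
    (h₂ : l₂' ≤ l₂ + 2 * a + b) : c * 𝔪 a b * x ∈ Λ k' l₁' l₂' := by
  obtain ⟨e, rfl⟩ := hc
  refine map_mem (K := AddMonoidHom.mulLeft (((7 ^ m * e : ℤ) : R) * 𝔪 a b)) ?_ ?_ hx
  · intro r
    rw [AddMonoidHom.coe_mulLeft, mul_left_comm]
    exact seven_pow_mul_mem _
  · intro n a' b' h₁' h₂' hn
    have product_mem : 7 ^ (m + n) * 𝔪 (a + a') (b + b') ∈ Λ k' l₁' l₂' :=
      seven_pow_mul_monomial_mem (by omega) (by omega) (by push_cast; omega)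
    convert intCast_mul_mem product_mem e using 1
    rw [AddMonoidHom.coe_mulLeft, ← laurentMonomial_mul]
    push_cast
    ring

theorem monomial_mul_mem {a b : ℤ} {x : R} (hx : x ∈ Λ k l₁ l₂) (hk : k + a + b ≤ k')
    (h₁ : l₁' ≤ l₁ + a + 2 * b) (h₂ : l₂' ≤ l₂ + 2 * a + b) : 𝔪 a b * x ∈ Λ k' l₁' l₂' := by
  simpa using intCast_mul_monomial_mul_mem (c := 1) 0 (by simp) hx (by simpa) h₁ h₂

theorem mono {x : R} (hx : x ∈ Λ k l₁ l₂) (hk : k ≤ k') (h₁ : l₁' ≤ l₁) (h₂ : l₂' ≤ l₂) :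
    x ∈ Λ k' l₁' l₂' := by
  simpa [laurentMonomial_zero] using
    monomial_mul_mem (a := 0) (b := 0) hx (by simpa) (by simpa) (by simpa)

theorem intCast_mul_monomial_mem {a b c : ℤ} (m : ℕ) (hc : (7 : ℤ) ^ m ∣ c)
    (hk : a + b ≤ k + m) (h₁ : l₁ ≤ a + 2 * b) (h₂ : l₂ ≤ 2 * a + b) :
    c * 𝔪 a b ∈ Λ k l₁ l₂ := by
  have one_mem : (1 : R) ∈ Λ 0 0 0 := by
    simpa [laurentMonomial_zero] using seven_pow_mul_monomial_mem
      (T := T) (S := S) (N := N) (k := 0) (l₁ := 0) (l₂ := 0) (m := 0) (a := 0) (b := 0)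
  simpa using intCast_mul_monomial_mul_mem m hc one_mem (by omega) (by omega) (by omega)

theorem swap (k l₁ l₂ : ℤ) : growthLattice S T N k l₂ l₁ = Λ k l₁ l₂ := by
  rw [growthLattice, growthLattice]
  congr 2
  ext z
  constructor
  · rintro ⟨b, a, h₂, h₁, rfl⟩
    exact ⟨a, b, by omega, by omega, by rw [laurentMonomial_swap, add_comm a]⟩
  · rintro ⟨a, b, h₁, h₂, rfl⟩
    exact ⟨b, a, by omega, by omega, by rw [laurentMonomial_swap, add_comm a]⟩

end growthLattice

end Lattice

section Recurrence

variable {R : Type*} [CommRing R] {T S : Rˣ} {N : ℕ}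

local notation "𝔪" => laurentMonomial T S

/-- The modular equation of level 7 between `t` and `ξ`, as the set of `(c, e, s)` for which
`c * t ^ e * ξ ^ s` occurs in it: the sum of these monomials is `1`. -/
def modularTerms : Finset (ℤ × ℕ × ℕ) :=
  {(1, 2, 7), (7, 2, 6), (21, 2, 5), (49, 2, 4), (147, 2, 3), (343, 2, 2), (343, 2, 1),
    (7, 1, 3), (35, 1, 2), (49, 1, 1)}

/-- The order 7 linear recurrence satisfied by `i ↦ U (f * ξ ^ (-i))` when `ξ` satisfies the modular
equation over `t`. -/
def ModularRec (t : R) (v : ℤ → R) : Prop :=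
  ∀ i, v i = ∑ x ∈ modularTerms, x.1 * t ^ x.2.1 * v (i - x.2.2)

theorem modularTerms_bounds : ∀ x ∈ modularTerms,
    ∃ m ≤ 3, (7 : ℤ) ^ m ∣ x.1 ∧ 7 * x.2.1 ≤ 2 * x.2.2 + 7 * m ∧ 2 * x.2.2 ≤ 7 * x.2.1 ∧
      1 ≤ x.2.2 ∧ x.2.2 ≤ 7 := by
  decide

variable (T S N) in
/-- The lattice in which the solution `u i j` of the modular recurrences in both indices is shown to
lie, weakened by `7 ^ (-d)`. -/
def boundLattice (d i j : ℤ) : AddSubgroup R :=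
  growthLattice T S N (2 * (i + j) / 7 + 1 + d) ((2 * (i + 2 * j) + 6) / 7)
    ((2 * (2 * i + j) + 6) / 7)

local notation "𝓑" => boundLattice T S N

theorem boundLattice_swap (d i j : ℤ) : boundLattice S T N d j i = 𝓑 d i j := by
  rw [boundLattice, boundLattice, growthLattice.swap, add_comm j i, add_comm (2 * j) i,
    add_comm j (2 * i)]

theorem mul_mem_boundLattice {a b c d i j d' i' j' : ℤ} (m : ℕ) (hc : (7 : ℤ) ^ m ∣ c) {x : R}
    (hx : x ∈ 𝓑 d i j) (hk : 7 * (a + b) ≤ 2 * ((i' - i) + (j' - j)) + 7 * (m + d' - d))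
    (h₁ : 2 * ((i' - i) + 2 * (j' - j)) ≤ 7 * (a + 2 * b))
    (h₂ : 2 * (2 * (i' - i) + (j' - j)) ≤ 7 * (2 * a + b)) :
    c * 𝔪 a b * x ∈ 𝓑 d' i' j' :=
  growthLattice.intCast_mul_monomial_mul_mem m hc hx (by omega) (by omega) (by omega)

theorem coe_pow_eq_laurentMonomial (e : ℕ) : (T : R) ^ e = 𝔪 e 0 := by simp [laurentMonomial]

theorem laurentMonomial_neg_mul (a b : ℤ) : 𝔪 (-a) (-b) * 𝔪 a b = 1 := by
  rw [laurentMonomial_mul, neg_add_cancel, neg_add_cancel, laurentMonomial_zero]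

theorem ModularRec.eq_sum_add_seven_pow_mul {v : ℤ → R} (hv : ModularRec (T : R) v) (d : ℕ)
    {i j : ℤ} (h : ∀ k, i - 7 ≤ k → k < i → v k ∈ 𝓑 0 k j) :
    ∃ z ∈ 𝓑 d i j, v i =
      ∑ x ∈ modularTerms with ¬ (7 : ℤ) ^ d ∣ x.1, x.1 * (T : R) ^ x.2.1 * v (i - x.2.2)
        + 7 ^ d * z := by
  refine ⟨∑ x ∈ modularTerms with (7 : ℤ) ^ d ∣ x.1,
    ((x.1 / 7 ^ d : ℤ) : R) * 𝔪 x.2.1 0 * v (i - x.2.2), sum_mem ?_, ?_⟩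
  · intro x hx
    obtain ⟨hx, hd⟩ := Finset.mem_filter.1 hx
    obtain ⟨m, -, hm, hbelow, habove, hpos, hle⟩ := modularTerms_bounds x hx
    have hdvd : (7 : ℤ) ^ (m - d) ∣ x.1 / 7 ^ d := by
      rcases le_total d m with hdm | hdm
      · exact (Int.dvd_div_iff_mul_dvd hd).2 (by rwa [← pow_add, Nat.add_sub_cancel' hdm])
      · simp [Nat.sub_eq_zero_of_le hdm]
    exact mul_mem_boundLattice (m - d) hdvd (h (i - x.2.2) (by omega) (by omega)) (by omega)
      (by omega) (by omega)
  · rw [hv i, ← Finset.sum_filter_not_add_sum_filter _ fun x : ℤ × ℕ × ℕ => (7 : ℤ) ^ d ∣ x.1,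
      Finset.mul_sum]
    congr 1
    refine Finset.sum_congr rfl fun x hx => ?_
    obtain ⟨q, hq⟩ := (Finset.mem_filter.1 hx).2
    rw [hq, Int.mul_ediv_cancel_left _ (by positivity), coe_pow_eq_laurentMonomial (S := S)]
    push_cast
    ring

theorem ModularRec.mem_boundLattice_of_lt {v : ℤ → R} (hv : ModularRec (T : R) v) {i j : ℤ}
    (h : ∀ k, i - 7 ≤ k → k < i → v k ∈ 𝓑 0 k j) : v i ∈ 𝓑 0 i j := by
  obtain ⟨z, hz, hvz⟩ := hv.eq_sum_add_seven_pow_mul 0 h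
  rw [Finset.filter_false_of_mem (by simp), Finset.sum_empty, zero_add, pow_zero, one_mul] at hvz
  rwa [hvz]

theorem ModularRec.eq_sub_sum {v : ℤ → R} (hv : ModularRec (T : R) v) (i : ℤ) :
    v i = 𝔪 (-2) 0 * v (i + 7) -
      ∑ x ∈ modularTerms.erase (1, 2, 7), x.1 * 𝔪 (x.2.1 - 2) 0 * v (i + 7 - x.2.2) := by
  have inverse : 𝔪 (-2) 0 * (T : R) ^ 2 = 1 := by
    simpa [coe_pow_eq_laurentMonomial (S := S)] using laurentMonomial_neg_mul (T := T) (S := S) 2 0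
  have shift (x : ℤ × ℕ × ℕ) : 𝔪 (-2) 0 * (x.1 * (T : R) ^ x.2.1 * v (i + 7 - x.2.2)) =
      x.1 * 𝔪 (x.2.1 - 2) 0 * v (i + 7 - x.2.2) := by
    have hmul := laurentMonomial_mul (T := T) (S := S) (-2) 0 x.2.1 0
    rw [add_zero, neg_add_eq_sub] at hmul
    rw [coe_pow_eq_laurentMonomial (S := S), ← hmul]
    ring
  rw [hv (i + 7), ← Finset.add_sum_erase _ _ (by decide : (1, 2, 7) ∈ modularTerms), mul_add,
    Finset.mul_sum, Finset.sum_congr rfl fun x _ => shift x]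
  simp only [Int.cast_one, Nat.cast_ofNat, add_sub_cancel_right]
  linear_combination (-v i) * inverse

theorem ModularRec.mem_boundLattice_of_gt {v : ℤ → R} (hv : ModularRec (T : R) v) {i j : ℤ}
    (h : ∀ k, i < k → k ≤ i + 7 → v k ∈ 𝓑 0 k j) : v i ∈ 𝓑 0 i j := by
  have leading : ((1 : ℤ) : R) * 𝔪 (-2) 0 * v (i + 7) ∈ 𝓑 0 i j :=
    mul_mem_boundLattice 0 (by simp) (h (i + 7) (by omega) le_rfl) (by omega) (by omega) (by omega)
  rw [Int.cast_one, one_mul] at leading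
  rw [hv.eq_sub_sum (S := S)]
  refine sub_mem leading (sum_mem fun x hx => ?_)
  obtain ⟨m, -, hm, hbelow, habove, hpos, -⟩ := modularTerms_bounds x (Finset.mem_of_mem_erase hx)
  have hlt : x.2.2 < 7 := (by decide : ∀ x ∈ modularTerms.erase (1, 2, 7), x.2.2 < 7) x hx
  exact mul_mem_boundLattice m hm (h (i + 7 - x.2.2) (by omega) (by omega)) (by omega) (by omega)
    (by omega)

theorem int_induction_of_window {P : ℤ → Prop} (w : ℕ) (base : ∀ i : ℤ, -w < i → i ≤ 0 → P i)
    (up : ∀ i : ℤ, (∀ k, i - w ≤ k → k < i → P k) → P i)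
    (down : ∀ i : ℤ, (∀ k, i < k → k ≤ i + w → P k) → P i) (i : ℤ) : P i := by
  have window : ∀ n : ℕ, ∀ i : ℤ, -w - n < i → i ≤ n → P i := by
    intro n
    induction n with
    | zero => exact fun i h h' => base i (by simpa using h) (by simpa using h')
    | succ n ih =>
      intro i h h'
      push_cast at h h'
      by_cases hi : i ≤ n
      · by_cases hi' : -w - n < i
        · exact ih i hi' hi
        · exact down i fun k hk hk' => ih k (by omega) (by omega)
      · exact up i fun k hk hk' => ih k (by omega) (by omega)
  exact window (i.natAbs + 1) i (by omega) (by omega)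

theorem ModularRec.mem_boundLattice {v : ℤ → R} (hv : ModularRec (T : R) v) {j : ℤ}
    (base : ∀ i, -7 < i → i ≤ 0 → v i ∈ 𝓑 0 i j) (i : ℤ) : v i ∈ 𝓑 0 i j :=
  int_induction_of_window (P := fun i => v i ∈ 𝓑 0 i j) 7 base
    (fun _ h => hv.mem_boundLattice_of_lt h) (fun _ h => hv.mem_boundLattice_of_gt h) i

theorem mem_boundLattice_of_modularRec {u : ℤ → ℤ → R}
    (hleft : ∀ j, ModularRec (T : R) (u · j)) (hright : ∀ i, ModularRec (S : R) (u i))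
    (base : ∀ i j, -7 < i → i ≤ 0 → -7 < j → j ≤ 0 → u i j ∈ 𝓑 0 i j) (i j : ℤ) :
    u i j ∈ 𝓑 0 i j := by
  rw [← boundLattice_swap]
  refine (hright i).mem_boundLattice (fun j hj hj' => ?_) j
  rw [boundLattice_swap]
  exact (hleft j).mem_boundLattice (fun i hi hi' => base i j hi hi' hj hj') i

end Recurrence

/-! ### The table of traces -/

section TraceTable

variable {R : Type*} [CommRing R] {T S : Rˣ} {N : ℕ}

local notation "𝔪" => laurentMonomial T S
local notation "Λ" => growthLattice T S N

/-- The value at `(x, y, g)` of the polynomial whose terms `c * x ^ a * y ^ b * g ^ e` are listed as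
`(c, a, b, e)`. -/
def evalTerms (x y g : R) (l : List (ℤ × ℕ × ℕ × ℕ)) : R :=
  (l.map fun t => (t.1 : R) * x ^ t.2.1 * y ^ t.2.2.1 * g ^ t.2.2.2).sum

theorem evalTerms_nil (x y g : R) : evalTerms x y g [] = 0 := rfl

theorem evalTerms_cons (x y g : R) (c : ℤ) (a b e : ℕ) (l : List (ℤ × ℕ × ℕ × ℕ)) :
    evalTerms x y g ((c, a, b, e) :: l) = c * x ^ a * y ^ b * g ^ e + evalTerms x y g l := by
  simp [evalTerms]

/-- The traces `U (ξ ^ i * η ^ j)` for `i, j < 7`, as polynomials in `1 / T`, `1 / S` and the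
function `g` generating the function field of level 14 over `1 / T` and `1 / S`; see `evalTerms` for
the encoding. -/
def traceTable : ℕ → ℕ → List (ℤ × ℕ × ℕ × ℕ)
  | 0, 0 => [(1, 0, 0, 0)]
  | 0, 1 => [(-1, 0, 0, 0)]
  | 0, 2 => [(1, 0, 0, 0)]
  | 0, 3 => [(-7, 0, 0, 0)]
  | 0, 4 => [(-7, 0, 0, 0), (-4, 0, 1, 0)]
  | 0, 5 => [(49, 0, 0, 0), (10, 0, 1, 0)]
  | 0, 6 => [(49, 0, 0, 0)]
  | 1, 0 => [(-1, 0, 0, 0)]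
  | 1, 1 => [(1, 0, 0, 0)]
  | 1, 2 => [(-7, 0, 0, 0), (2, 0, 0, 1)]
  | 1, 3 => [(42, 0, 0, 0), (-7, 0, 0, 1), (1, 0, 1, 0)]
  | 1, 4 => [(-49, 0, 0, 0), (14, 0, 0, 1), (6, 0, 1, 0)]
  | 1, 5 => [(49, 0, 0, 0), (-49, 0, 0, 1), (-21, 0, 1, 0), (-1, 0, 1, 1)]
  | 1, 6 => [(-343, 0, 0, 0), (98, 0, 0, 1), (42, 0, 1, 0), (-8, 0, 1, 1)]
  | 2, 0 => [(1, 0, 0, 0)]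
  | 2, 1 => [(7, 0, 0, 0), (-2, 0, 0, 1)]
  | 2, 2 => [(-7, 0, 0, 0)]
  | 2, 3 => [(-49, 0, 0, 0), (7, 0, 0, 1), (-4, 0, 1, 0), (1, 1, 0, 0)]
  | 2, 4 => [(49, 0, 0, 0)]
  | 2, 5 => [(-343, 0, 0, 0), (98, 0, 0, 1), (-28, 0, 1, 0), (12, 0, 1, 1), (-14, 1, 0, 0)]
  | 2, 6 => [(2058, 0, 0, 0), (-343, 0, 0, 1), (147, 0, 1, 0), (-14, 0, 1, 1), (1, 0, 2, 0),
      (49, 1, 0, 0)]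
  | 3, 0 => [(-7, 0, 0, 0)]
  | 3, 1 => [(-7, 0, 0, 0), (7, 0, 0, 1), (1, 1, 0, 0)]
  | 3, 2 => [(-7, 0, 0, 1), (1, 0, 1, 0), (-4, 1, 0, 0)]
  | 3, 3 => [(49, 0, 0, 0)]
  | 3, 4 => [(343, 0, 0, 0), (-98, 0, 0, 1), (35, 0, 1, 0), (-3, 0, 1, 1), (7, 1, 0, 0)]
  | 3, 5 => [(-343, 0, 0, 0), (-35, 0, 1, 1), (-5, 1, 1, 0)]
  | 3, 6 => [(-2401, 0, 0, 0), (686, 0, 0, 1), (-294, 0, 1, 0), (112, 0, 1, 1), (-6, 0, 2, 0),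
      (98, 1, 0, 0), (28, 1, 1, 0)]
  | 4, 0 => [(-7, 0, 0, 0), (-4, 1, 0, 0)]
  | 4, 1 => [(49, 0, 0, 0), (-14, 0, 0, 1), (6, 1, 0, 0)]
  | 4, 2 => [(49, 0, 0, 0)]
  | 4, 3 => [(-343, 0, 0, 0), (98, 0, 0, 1), (7, 0, 1, 0), (14, 1, 0, 0), (3, 1, 0, 1)]
  | 4, 4 => [(-343, 0, 0, 0), (24, 1, 1, 0)]
  | 4, 5 => [(343, 0, 0, 1), (-98, 0, 1, 0), (77, 0, 1, 1), (1, 0, 2, 0), (-147, 1, 0, 0),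
      (7, 1, 0, 1), (-49, 1, 1, 0)]
  | 4, 6 => [(2401, 0, 0, 0), (-2401, 0, 0, 1), (-245, 0, 1, 0), (-210, 0, 1, 1), (-7, 0, 2, 0),
      (-343, 1, 0, 0), (-35, 1, 0, 1), (-14, 1, 1, 0), (-1, 1, 1, 1)]
  | 5, 0 => [(49, 0, 0, 0), (10, 1, 0, 0)]
  | 5, 1 => [(-294, 0, 0, 0), (49, 0, 0, 1), (-28, 1, 0, 0), (1, 1, 0, 1)]
  | 5, 2 => [(343, 0, 0, 0), (-98, 0, 0, 1), (-14, 0, 1, 0), (56, 1, 0, 0), (-12, 1, 0, 1)]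
  | 5, 3 => [(-343, 0, 0, 0), (-245, 1, 0, 0), (35, 1, 0, 1), (-5, 1, 1, 0)]
  | 5, 4 => [(2401, 0, 0, 0), (-343, 0, 0, 1), (-98, 0, 1, 0), (-7, 0, 1, 1), (441, 1, 0, 0),
      (-77, 1, 0, 1), (-49, 1, 1, 0), (1, 2, 0, 0)]
  | 5, 5 => [(2401, 0, 0, 0), (1715, 0, 1, 0), (-245, 0, 1, 1), (245, 1, 0, 1), (245, 1, 1, 0)]
  | 5, 6 => [(-16807, 0, 0, 0), (4802, 0, 0, 1), (-2744, 0, 1, 0), (882, 0, 1, 1), (84, 0, 2, 0),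
      (686, 1, 0, 0), (-392, 1, 0, 1), (-392, 1, 1, 0), (56, 1, 1, 1), (-14, 2, 0, 0)]
  | 6, 0 => [(49, 0, 0, 0)]
  | 6, 1 => [(343, 0, 0, 0), (-98, 0, 0, 1), (-14, 1, 0, 0), (8, 1, 0, 1)]
  | 6, 2 => [(-343, 0, 0, 0), (343, 0, 0, 1), (49, 0, 1, 0), (49, 1, 0, 0), (14, 1, 0, 1),
      (1, 2, 0, 0)]
  | 6, 3 => [(2401, 0, 0, 0), (-686, 0, 0, 1), (98, 0, 1, 0), (490, 1, 0, 0), (-112, 1, 0, 1),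
      (28, 1, 1, 0), (-6, 2, 0, 0)]
  | 6, 4 => [(-14406, 0, 0, 0), (2401, 0, 0, 1), (-588, 0, 1, 0), (35, 0, 1, 1), (-1715, 1, 0, 0),
      (210, 1, 0, 1), (-21, 1, 1, 0), (1, 1, 1, 1), (-7, 2, 0, 0)]
  | 6, 5 => [(16807, 0, 0, 0), (-4802, 0, 0, 1), (-2058, 0, 1, 0), (392, 0, 1, 1), (-14, 0, 2, 0),
      (3430, 1, 0, 0), (-882, 1, 0, 1), (-56, 1, 1, 1), (84, 2, 0, 0)]
  | 6, 6 => [(-16807, 0, 0, 0), (3430, 0, 1, 0), (-2548, 0, 1, 1), (-294, 0, 2, 0),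
      (-14406, 1, 0, 0), (2548, 1, 0, 1), (-686, 1, 1, 0), (-6, 1, 2, 0), (-294, 2, 0, 0),
      (-6, 2, 1, 0)]
  | _, _ => []

/-- The condition on the term `(c, a, b, e)` under which `c * T ^ (-a) * S ^ (-b) * g ^ e` lies in
the growth lattice with parameters `k`, `l₁`, `l₂`, given that `g` lies in the one with parameters
`0`, `-1`, `-1`. -/
def TermBound (k l₁ l₂ : ℤ) (t : ℤ × ℕ × ℕ × ℕ) : Prop :=
  (7 : ℤ) ^ (-k - t.2.1 - t.2.2.1).toNat ∣ t.1 ∧ l₁ ≤ -t.2.1 - 2 * t.2.2.1 - t.2.2.2 ∧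
    l₂ ≤ -2 * t.2.1 - t.2.2.1 - t.2.2.2 ∧ t.2.2.2 ≤ 1

instance (k l₁ l₂ : ℤ) : DecidablePred (TermBound k l₁ l₂) := fun _ => inferInstanceAs
  (Decidable (_ ∧ _))

theorem traceTable_termBound : ∀ i < 7, ∀ j < 7, ∀ t ∈ traceTable i j,
    TermBound (2 * (-(i : ℤ) + -(j : ℤ)) / 7 + 1) ((2 * (-(i : ℤ) + 2 * -(j : ℤ)) + 6) / 7)
      ((2 * (2 * -(i : ℤ) + -(j : ℤ)) + 6) / 7) t := by
  decide +kernel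

theorem laurentMonomial_neg_natCast (a b : ℕ) :
    𝔪 (-a) (-b) = (↑T⁻¹ : R) ^ a * (↑S⁻¹ : R) ^ b := by
  simp [laurentMonomial]

theorem mem_growthLattice_of_relation {g : R}
    (hg : (↑T⁻¹ * ↑S⁻¹ * g + 7 * ↑T⁻¹ * g : R) = ↑S⁻¹ ^ 2 - ↑T⁻¹ ^ 2) : g ∈ Λ 0 (-1) (-1) := by
  have fixed_point : g = 𝔪 1 (-1) - 𝔪 (-1) 1 - 7 * 𝔪 0 1 * g := by
    simp only [laurentMonomial, zpow_one, zpow_neg_one, zpow_zero, one_mul, Units.val_mul]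
    linear_combination (T : R) * S * hg - (g + 7 * S * g + ↑T⁻¹ * S) * T.mul_inv -
      (g * T * ↑T⁻¹ - T * ↑S⁻¹) * S.mul_inv
  have approx (n : ℕ) : ∃ z ∈ Λ 0 (-1) (-1), ∃ r, g = z + 7 ^ n * r := by
    induction n with
    | zero => exact ⟨0, zero_mem _, g, by simp⟩
    | succ n ih =>
      obtain ⟨z, hz, r, h⟩ := ih
      refine ⟨(1 : ℤ) * 𝔪 1 (-1) - (1 : ℤ) * 𝔪 (-1) 1 - (7 : ℤ) * 𝔪 0 1 * z,
        sub_mem (sub_mem ?_ ?_) ?_, -𝔪 0 1 * r, ?_⟩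
      · exact growthLattice.intCast_mul_monomial_mem 0 (by simp) (by simp) (by simp) (by simp)
      · exact growthLattice.intCast_mul_monomial_mem 0 (by simp) (by simp) (by simp) (by simp)
      · exact growthLattice.intCast_mul_monomial_mul_mem 1 (by simp) hz (by simp) (by simp)
          (by simp)
      · push_cast
        linear_combination fixed_point - 7 * 𝔪 0 1 * h
  obtain ⟨z, hz, r, h⟩ := approx N
  rw [h]
  exact add_mem hz (growthLattice.seven_pow_mul_mem r)

theorem evalTerms_mem_growthLattice {g : R} (hg : g ∈ Λ 0 (-1) (-1)) {k l₁ l₂ : ℤ}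
    {l : List (ℤ × ℕ × ℕ × ℕ)} (hl : ∀ t ∈ l, TermBound k l₁ l₂ t) :
    evalTerms ↑T⁻¹ ↑S⁻¹ g l ∈ Λ k l₁ l₂ := by
  refine AddSubgroup.list_sum_mem _ fun z hz => ?_
  obtain ⟨⟨c, a, b, e⟩, ht, rfl⟩ := List.mem_map.1 hz
  obtain ⟨hc, h₁, h₂, he⟩ := hl _ ht
  dsimp only at hc h₁ h₂ he ⊢
  rw [mul_assoc (c : R), ← laurentMonomial_neg_natCast]
  interval_cases e
  · rw [pow_zero, mul_one]
    exact growthLattice.intCast_mul_monomial_mem _ hc (by omega) (by omega) (by omega)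
  · rw [pow_one]
    exact growthLattice.intCast_mul_monomial_mul_mem _ hc hg (by omega) (by omega) (by omega)

end TraceTable

/-! ### Contraction along the tower -/

section TowerInduction

variable {M : Type*} [AddCommGroup M] {F : ℕ → AddSubgroup M} {p : ℤ} {τ : M}

theorem pow_zsmul_mem_filtration (hpF : ∀ n, ∀ x ∈ F n, p • x ∈ F (n + 1)) {m : ℕ} {x : M}
    (hx : x ∈ F m) (n : ℕ) : p ^ n • x ∈ F (m + n) := by
  induction n with
  | zero => simpa using hx
  | succ n ih =>
    rw [pow_succ', mul_smul]
    exact hpF _ _ ih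

theorem exists_pow_mul_zsmul_sub_zsmul_mem (hp : Prime p) (hτ : τ ∈ F 0)
    (hpF : ∀ n, ∀ x ∈ F n, p • x ∈ F (n + 1)) {c : ℤ} (hc : ¬ p ∣ c) {y : M}
    (hy : y - (p * c) • τ ∈ F 2) (n : ℕ) (t : ℤ) :
    ∃ a : ℤ, (p ^ (n + 1) * t) • τ - a • y ∈ F (n + 2) := by
  obtain ⟨b, a, hab⟩ := hp.coprime_iff_not_dvd.2 hc
  refine ⟨p ^ n * t * a, ?_⟩
  have main_term := zsmul_mem (pow_zsmul_mem_filtration hpF hy n) (-(t * a))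
  have correction := zsmul_mem (pow_zsmul_mem_filtration hpF hτ (n + 2)) (t * b)
  rw [add_comm 2 n] at main_term
  rw [zero_add] at correction
  convert add_mem main_term correction using 1
  have coefficient : p ^ (n + 1) * t = t * a * p ^ n * (p * c) + t * b * p ^ (n + 2) := by
    linear_combination (-p ^ (n + 1) * t) * hab
  rw [coefficient]
  module

theorem exists_not_dvd_sub_zsmul_mem {E : M →+ M} {c e : ℤ} {l : ℕ → M} (hF : Antitone F)
    (hp : Prime p) (hpF : ∀ n, ∀ x ∈ F n, p • x ∈ F (n + 1))
    (hE : ∀ n, ∀ x ∈ F n, ∃ t : ℤ, E x - (p ^ n * t) • τ ∈ F (n + 1))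
    (he : ¬ p ∣ e) (hEτ : E τ - e • τ ∈ F 1) (hl : ∀ n, l (n + 1) = E (l n)) (hc : ¬ p ∣ c)
    (hl₁ : l 1 - (p * c) • τ ∈ F 2) (n : ℕ) :
    ∃ c : ℤ, ¬ p ∣ c ∧ l (n + 1) - (p * c) • τ ∈ F 2 := by
  induction n with
  | zero => exact ⟨c, hc, hl₁⟩
  | succ n ih =>
    obtain ⟨d, hd, h⟩ := ih
    obtain ⟨t, ht⟩ := hE 2 _ h
    refine ⟨e * d + p * t, fun hdvd => ?_, ?_⟩
    · rcases hp.dvd_mul.1 ((dvd_add_left (dvd_mul_right p t)).1 hdvd) with h' | h'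
      exacts [he h', hd h']
    · convert add_mem (hF (by decide : 2 ≤ 2 + 1) ht) (zsmul_mem (hpF 1 _ hEτ) d) using 1
      rw [hl, map_sub, map_zsmul]
      module

/-- Once the leading coefficients `c` and `e` are units modulo `p`, an operator that contracts the
filtration up to multiples of `τ` makes successive members of the tower proportional. -/
theorem exists_sub_zsmul_mem_of_tower {E : M →+ M} {c e : ℤ} {l : ℕ → M} (hF : Antitone F)
    (hp : Prime p) (hτ : τ ∈ F 0) (hpF : ∀ n, ∀ x ∈ F n, p • x ∈ F (n + 1))
    (hE : ∀ n, ∀ x ∈ F n, ∃ t : ℤ, E x - (p ^ n * t) • τ ∈ F (n + 1))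
    (he : ¬ p ∣ e) (hEτ : E τ - e • τ ∈ F 1) (hl : ∀ n, l (n + 1) = E (l n)) (hc : ¬ p ∣ c)
    (hl₁ : l 1 - (p * c) • τ ∈ F 2) (n : ℕ) :
    ∃ x : ℤ, l (n + 2) - x • l (n + 1) ∈ F (n + 2) := by
  have leading := exists_not_dvd_sub_zsmul_mem hF hp hpF hE he hEτ hl hc hl₁
  induction n with
  | zero =>
    obtain ⟨d, -, h⟩ := leading 1
    obtain ⟨a, ha⟩ := exists_pow_mul_zsmul_sub_zsmul_mem hp hτ hpF hc hl₁ 0 d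
    refine ⟨a, ?_⟩
    convert add_mem h ha using 1
    module
  | succ n ih =>
    obtain ⟨x, hx⟩ := ih
    obtain ⟨t, ht⟩ := hE _ _ hx
    obtain ⟨d, hd, h⟩ := leading (n + 1)
    obtain ⟨a, ha⟩ := exists_pow_mul_zsmul_sub_zsmul_mem hp hτ hpF hd h (n + 1) t
    refine ⟨x + a, ?_⟩
    rw [map_sub, map_zsmul, ← hl, ← hl] at ht
    convert add_mem ht ha using 1
    module

end TowerInduction

section Expansion

variable {R : Type*} [CommRing R] {T S : Rˣ} {N : ℕ} {v : ℤ → R} {j : ℤ}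

local notation "𝓑" => boundLattice T S N

theorem intCast_mul_pow_mul_mem_boundLattice {c d i d' i' : ℤ} {e : ℕ} {x : R} (hx : x ∈ 𝓑 d i j)
    (hk : 7 * e ≤ 2 * (i' - i) + 7 * (d' - d)) (h : 2 * (i' - i) ≤ 7 * e) :
    c * (T : R) ^ e * x ∈ 𝓑 d' i' j := by
  rw [coe_pow_eq_laurentMonomial (S := S)]
  exact mul_mem_boundLattice 0 (by simp) hx (by simpa using hk) (by simpa using h) (by linarith)

theorem pow_mul_mem_boundLattice {d i d' i' : ℤ} {e : ℕ} {x : R} (hx : x ∈ 𝓑 d i j)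
    (hk : 7 * e ≤ 2 * (i' - i) + 7 * (d' - d)) (h : 2 * (i' - i) ≤ 7 * e) :
    (T : R) ^ e * x ∈ 𝓑 d' i' j := by
  simpa using intCast_mul_pow_mul_mem_boundLattice (c := 1) hx hk h

/-- The terms of exact order 7 in the modular recurrence for `v i`, divided by 7. -/
def firstOrderTerms (t : R) (v : ℤ → R) (i : ℤ) : R :=
  t ^ 2 * (v (i - 6) + 3 * v (i - 5)) + t * (v (i - 3) + 5 * v (i - 2))

theorem ModularRec.eq_sq_mul_add (hv : ModularRec (T : R) v) (h : ∀ k, v k ∈ 𝓑 0 k j) (i : ℤ) :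
    ∃ z ∈ 𝓑 1 i j, v i = T ^ 2 * v (i - 7) + 7 * z := by
  obtain ⟨z, hz, hvz⟩ := hv.eq_sum_add_seven_pow_mul 1 (i := i) fun k _ _ => h k
  refine ⟨z, hz, hvz.trans ?_⟩
  rw [(by decide : modularTerms.filter (fun x => ¬ (7 : ℤ) ^ 1 ∣ x.1) = {(1, 2, 7)})]
  simp

theorem ModularRec.eq_pow_mul_add (hv : ModularRec (T : R) v) (h : ∀ k, v k ∈ 𝓑 0 k j) (n : ℕ)
    (i : ℤ) : ∃ z ∈ 𝓑 1 i j, v i = T ^ (2 * n) * v (i - 7 * n) + 7 * z := by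
  induction n generalizing i with
  | zero => exact ⟨0, zero_mem _, by simp⟩
  | succ n ih =>
    obtain ⟨z, hz, hvz⟩ := hv.eq_sq_mul_add h i
    obtain ⟨y, hy, hvy⟩ := ih (i - 7)
    refine ⟨z + T ^ 2 * y, add_mem hz (pow_mul_mem_boundLattice hy (by lia) (by lia)), ?_⟩
    rw [hvz, hvy, Nat.cast_succ, (by ring : i - 7 * ((n : ℤ) + 1) = i - 7 - 7 * n)]
    ring

theorem ModularRec.eq_sq_mul_add_firstOrderTerms (hv : ModularRec (T : R) v)
    (h : ∀ k, v k ∈ 𝓑 0 k j) (i : ℤ) :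
    ∃ z ∈ 𝓑 2 i j, v i = T ^ 2 * v (i - 7) + 7 * firstOrderTerms (T : R) v i + 49 * z := by
  obtain ⟨z, hz, hvz⟩ := hv.eq_sum_add_seven_pow_mul 2 (i := i) fun k _ _ => h k
  refine ⟨z, hz, hvz.trans ?_⟩
  rw [(by decide : modularTerms.filter (fun x => ¬ (7 : ℤ) ^ 2 ∣ x.1) =
    {(1, 2, 7), (7, 2, 6), (21, 2, 5), (7, 1, 3), (35, 1, 2)}), firstOrderTerms]
  norm_num
  ring

theorem ModularRec.firstOrderTerms_eq_pow_mul_add (hv : ModularRec (T : R) v)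
    (h : ∀ k, v k ∈ 𝓑 0 k j) (n : ℕ) (i : ℤ) :
    ∃ z ∈ 𝓑 2 i j, firstOrderTerms (T : R) v i =
      T ^ (2 * n) * firstOrderTerms (T : R) v (i - 7 * n) + 7 * z := by
  obtain ⟨z₆, hz₆, h₆⟩ := hv.eq_pow_mul_add h n (i - 6)
  obtain ⟨z₅, hz₅, h₅⟩ := hv.eq_pow_mul_add h n (i - 5)
  obtain ⟨z₃, hz₃, h₃⟩ := hv.eq_pow_mul_add h n (i - 3)
  obtain ⟨z₂, hz₂, h₂⟩ := hv.eq_pow_mul_add h n (i - 2)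
  refine ⟨(1 : ℤ) * T ^ 2 * z₆ + (3 : ℤ) * T ^ 2 * z₅ +
      ((1 : ℤ) * T ^ 1 * z₃ + (5 : ℤ) * T ^ 1 * z₂), add_mem (add_mem ?_ ?_) (add_mem ?_ ?_), ?_⟩
  · exact intCast_mul_pow_mul_mem_boundLattice hz₆ (by lia) (by lia)
  · exact intCast_mul_pow_mul_mem_boundLattice hz₅ (by lia) (by lia)
  · exact intCast_mul_pow_mul_mem_boundLattice hz₃ (by lia) (by lia)
  · exact intCast_mul_pow_mul_mem_boundLattice hz₂ (by lia) (by lia)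
  · rw [firstOrderTerms, firstOrderTerms, h₆, h₅, h₃, h₂]
    simp only [sub_right_comm i _ (7 * (n : ℤ))]
    push_cast
    ring

theorem ModularRec.eq_pow_mul_add_firstOrderTerms (hv : ModularRec (T : R) v)
    (h : ∀ k, v k ∈ 𝓑 0 k j) (n : ℕ) (i : ℤ) :
    ∃ z ∈ 𝓑 2 i j, v i = T ^ (2 * (n + 1)) * v (i - 7 * (n + 1)) +
      7 * (n + 1) * T ^ (2 * n) * firstOrderTerms (T : R) v (i - 7 * n) + 49 * z := by
  induction n generalizing i with
  | zero => simpa using hv.eq_sq_mul_add_firstOrderTerms h i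
  | succ n ih =>
    obtain ⟨x, hx, hvx⟩ := hv.eq_sq_mul_add_firstOrderTerms h i
    obtain ⟨y, hy, hvy⟩ := ih (i - 7)
    obtain ⟨z, hz, hvz⟩ := hv.firstOrderTerms_eq_pow_mul_add h (n + 1) i
    refine ⟨x + T ^ 2 * y + z,
      add_mem (add_mem hx (pow_mul_mem_boundLattice hy (by lia) (by lia))) hz, ?_⟩
    rw [hvx, hvy, hvz, Nat.cast_succ,
      (by ring : i - 7 * ((n : ℤ) + 1 + 1) = i - 7 - 7 * (n + 1)),
      (by ring : i - 7 * ((n : ℤ) + 1) = i - 7 - 7 * n)]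
    push_cast
    ring

end Expansion

section TraceSystem

variable {R : Type*} [CommRing R] {T S : Rˣ} {N : ℕ} {g : R} {u : ℤ → ℤ → R} {K K₁ K₂ : R →+ R}

local notation "𝔪" => laurentMonomial T S
local notation "Λ" => growthLattice T S N
local notation "𝓑" => boundLattice T S N

/-- The properties of the traces `u i j = U (ξ ^ (-i) * η ^ (-j))` on which the tower depends: the
modular recurrence in each index, and the initial values, which involve a function `g` of level 14
related to `1 / T` and `1 / S`. -/
structure TraceSystem (T S : Rˣ) (g : R) (u : ℤ → ℤ → R) : Prop where
  relation : (↑T⁻¹ * ↑S⁻¹ * g + 7 * ↑T⁻¹ * g : R) = ↑S⁻¹ ^ 2 - ↑T⁻¹ ^ 2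
  rec_left : ∀ j, ModularRec (T : R) (u · j)
  rec_right : ∀ i, ModularRec (S : R) (u i)
  table : ∀ i < 7, ∀ j < 7, u (-(i : ℕ)) (-(j : ℕ)) = evalTerms ↑T⁻¹ ↑S⁻¹ g (traceTable i j)

/-- The action on Laurent monomials of the operator `f ↦ U (ξ ^ (-m) * η ^ (-n) * f)`, where
`U (T ^ a * S ^ b * f) = T ^ (-a) * S ^ (-b) * U (ξ ^ (-4 a) * η ^ (-4 b) * f)`. -/
def IsTwistedTrace (T S : Rˣ) (u : ℤ → ℤ → R) (m n : ℤ) (K : R →+ R) : Prop :=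
  ∀ a b : ℤ, K (laurentMonomial T S a b) =
    laurentMonomial T S (-a) (-b) * u (4 * a + m) (4 * b + n)

theorem map_seven_pow_mul (K : R →+ R) (n : ℕ) (x : R) : K (7 ^ n * x) = 7 ^ n * K x := by
  simpa [zsmul_eq_mul] using map_zsmul K (7 ^ n : ℤ) x

namespace TraceSystem

theorem evalTerms_mem (D : TraceSystem T S g u) {k l₁ l₂ : ℤ} {l : List (ℤ × ℕ × ℕ × ℕ)}
    (hl : ∀ t ∈ l, TermBound k l₁ l₂ t) : evalTerms ↑T⁻¹ ↑S⁻¹ g l ∈ Λ k l₁ l₂ :=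
  evalTerms_mem_growthLattice (mem_growthLattice_of_relation D.relation) hl

theorem mem_boundLattice (D : TraceSystem T S g u) (i j : ℤ) : u i j ∈ 𝓑 0 i j := by
  refine mem_boundLattice_of_modularRec D.rec_left D.rec_right (fun i j hi hi' hj hj' => ?_) i j
  obtain ⟨a, rfl⟩ : ∃ a : ℕ, i = -a := ⟨i.natAbs, by omega⟩
  obtain ⟨b, rfl⟩ : ∃ b : ℕ, j = -b := ⟨j.natAbs, by omega⟩
  rw [D.table a (by omega) b (by omega), boundLattice, add_zero]
  exact D.evalTerms_mem (traceTable_termBound a (by omega) b (by omega))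

theorem map_mem_growthLattice (D : TraceSystem T S g u) {m n : ℤ}
    (hK : IsTwistedTrace T S u m n K) {k l₁ l₂ : ℤ} {x : R} (hx : x ∈ Λ k l₁ l₂) :
    K x ∈ Λ ((k + 2 * (m + n)) / 7 + 1) ((l₁ + 2 * (m + 2 * n) + 6) / 7)
      ((l₂ + 2 * (2 * m + n) + 6) / 7) := by
  refine growthLattice.map_mem (fun r => ?_) (fun c a b h₁ h₂ hc => ?_) hx
  · rw [map_seven_pow_mul]
    exact growthLattice.seven_pow_mul_mem _
  · rw [map_seven_pow_mul, hK, ← mul_assoc]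
    convert growthLattice.intCast_mul_monomial_mul_mem c (dvd_refl _) (D.mem_boundLattice _ _)
      ?_ ?_ ?_ using 3
    · simp
    all_goals lia

theorem firstOrderTerms_two_neg_five (D : TraceSystem T S g u) :
    firstOrderTerms (T : R) (u · (-5)) 2 = 1 + 7 * (T ^ 2 * evalTerms ↑T⁻¹ ↑S⁻¹ g
      [(-147, 0, 0, 0), (21, 1, 0, 0), (-14, 0, 1, 0), (49, 0, 0, 1), (-5, 1, 0, 1), (-4, 0, 1, 1),
        (-5, 1, 1, 0)]) := by
  have h₀ : u 0 (-5) = _ := D.table 0 (by decide) 5 (by decide)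
  have h₁ : u (-1) (-5) = _ := D.table 1 (by decide) 5 (by decide)
  have h₃ : u (-3) (-5) = _ := D.table 3 (by decide) 5 (by decide)
  have h₄ : u (-4) (-5) = _ := D.table 4 (by decide) 5 (by decide)
  have hT := T.mul_inv
  have hg := D.relation
  simp only [firstOrderTerms, Int.reduceSub, h₀, h₁, h₃, h₄, traceTable, evalTerms_cons,
    evalTerms_nil]
  push_cast
  grind

theorem map_one_eq (D : TraceSystem T S g u) (hK : IsTwistedTrace T S u 16 (-5) K) :
    ∃ w ∈ Λ 6 2 8, K 1 = 21 * 𝔪 4 0 + 49 * w := by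
  obtain ⟨z, hz, h⟩ := (D.rec_left (-5)).eq_pow_mul_add_firstOrderTerms
    (fun k => D.mem_boundLattice (N := N) k (-5)) 2 16
  have h₁ : u (-5) (-5) = _ := D.table 5 (by decide) 5 (by decide)
  have hK₁ := hK 0 0
  norm_num [D.firstOrderTerms_two_neg_five, laurentMonomial_zero, h₁] at h hK₁
  refine ⟨_, add_mem (growthLattice.monomial_mul_mem (a := 6) (b := 0)
    (D.evalTerms_mem (k := 0) (l₁ := -4) (l₂ := -4)
      (l := [(-392, 0, 0, 0), (63, 1, 0, 0), (-7, 0, 1, 0), (147, 0, 0, 1), (-10, 1, 0, 1),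
        (-17, 0, 1, 1), (-10, 1, 1, 0)]) (by decide))
    (by simp) (by simp) (by simp)) hz, ?_⟩
  rw [hK₁, h]
  simp only [traceTable, evalTerms_cons, evalTerms_nil, laurentMonomial, zpow_ofNat]
  push_cast
  ring

theorem map_T_eq (D : TraceSystem T S g u) (hK : IsTwistedTrace T S u 16 (-5) K) :
    ∃ w ∈ Λ 5 2 8, K (𝔪 1 0) = 𝔪 4 0 - 𝔪 6 (-2) + 7 * w := by
  obtain ⟨z, hz, h⟩ := (D.rec_left (-5)).eq_pow_mul_add
    (fun k => D.mem_boundLattice (N := N) k (-5)) 3 20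
  have h₁ : u (-1) (-5) = _ := D.table 1 (by decide) 5 (by decide)
  have hK₁ := hK 1 0
  norm_num [h₁] at h hK₁
  refine ⟨_, add_mem (growthLattice.monomial_mul_mem (a := 6) (b := 0)
    (D.evalTerms_mem (k := -1) (l₁ := -4) (l₂ := -4)
      (l := [(7, 1, 0, 0), (-6, 1, 0, 1), (-3, 1, 1, 0)]) (by decide))
    (by simp) (by simp) (by simp)) (growthLattice.monomial_mul_mem (a := -1) (b := 0) hz
    (by simp) (by simp) (by simp)), ?_⟩
  have hT := T.mul_inv
  have hg := D.relation
  rw [hK₁, h]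
  simp only [traceTable, evalTerms_cons, evalTerms_nil, laurentMonomial, zpow_neg,
    zpow_ofNat]
  push_cast
  linear_combination (-T ^ 6 : R) * hg + (T : R) ^ 4 * (T * ↑T⁻¹ + 1) * hT

theorem map_T_pow_four_eq (D : TraceSystem T S g u) (hK : IsTwistedTrace T S u 0 0 K) :
    ∃ w ∈ Λ 2 1 2, K (𝔪 4 0) = 3 * 𝔪 1 0 + 7 * w := by
  obtain ⟨z, hz, h⟩ := (D.rec_left 0).eq_pow_mul_add
    (fun k => D.mem_boundLattice (N := N) k 0) 3 16
  have h₁ : u (-5) 0 = _ := D.table 5 (by decide) 0 (by decide)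
  have hK₁ := hK 4 0
  norm_num [h₁] at h hK₁
  refine ⟨_, add_mem (growthLattice.monomial_mul_mem (a := 2) (b := 0)
    (D.evalTerms_mem (k := 0) (l₁ := -1) (l₂ := -2) (l := [(7, 0, 0, 0), (1, 1, 0, 0)])
      (by decide)) (by simp) (by simp) (by simp))
    (growthLattice.monomial_mul_mem (a := -4) (b := 0) hz (by simp) (by simp) (by simp)), ?_⟩
  have hT := T.mul_inv
  rw [hK₁, h]
  simp only [traceTable, evalTerms_cons, evalTerms_nil, laurentMonomial, zpow_neg,
    zpow_ofNat]
  push_cast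
  grind

theorem map_T_pow_six_mul_eq (D : TraceSystem T S g u) (hK : IsTwistedTrace T S u 0 0 K) :
    ∃ w ∈ Λ 2 1 2, K (𝔪 6 (-2)) = 6 * 𝔪 1 0 + 7 * w := by
  obtain ⟨z, hz, h⟩ := (D.rec_left (-1)).eq_pow_mul_add
    (fun k => D.mem_boundLattice (N := N) k (-1)) 4 24
  obtain ⟨y, hy, h'⟩ := (D.rec_right 24).eq_sq_mul_add
    (fun k => by rw [boundLattice_swap]; exact D.mem_boundLattice (N := N) 24 k) (-1)
  rw [boundLattice_swap] at hy
  have h₁ : u (-4) (-1) = _ := D.table 4 (by decide) 1 (by decide)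
  have hK₁ := hK 6 (-2)
  norm_num [h₁] at h h' hK₁
  refine ⟨_, add_mem (growthLattice.monomial_mul_mem (a := 2) (b := 0)
    (D.evalTerms_mem (k := 0) (l₁ := -1) (l₂ := -2) (l := [(7, 0, 0, 0), (-2, 0, 0, 1)])
      (by decide)) (by simp) (by simp) (by simp))
    (growthLattice.monomial_mul_mem (a := -6) (b := 0) (sub_mem hz hy) (by simp) (by simp)
      (by simp)), ?_⟩
  have hT := T.mul_inv
  rw [hK₁]
  simp only [traceTable, evalTerms_cons, evalTerms_nil, laurentMonomial, zpow_neg,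
    zpow_ofNat] at h ⊢
  push_cast at h ⊢
  grind

end TraceSystem
end TraceSystem

section Tower

variable {R : Type*} [CommRing R] {T S : Rˣ} {N : ℕ} {g : R} {u : ℤ → ℤ → R} {K₁ K₂ : R →+ R}

local notation "𝔪" => laurentMonomial T S
local notation "Λ" => growthLattice T S N

variable (T S N) in
/-- The filtration of `R` by `7 ^ n Λ + 7 ^ N R`, where `Λ` is the lattice in which the even terms
of the tower lie. -/
def towerFiltration (n : ℕ) : AddSubgroup R :=
  (Λ 2 1 2).map (AddMonoidHom.mulLeft (7 ^ n)) ⊔ (AddMonoidHom.mulLeft (7 ^ N : R)).range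

local notation "𝓕" => towerFiltration T S N

namespace towerFiltration

theorem mem_iff {n : ℕ} {x : R} : x ∈ 𝓕 n ↔ ∃ y ∈ Λ 2 1 2, ∃ r, 7 ^ n * y + 7 ^ N * r = x := by
  simp [towerFiltration, AddSubgroup.mem_sup]

theorem seven_pow_mul_lattice_mem {y : R} (hy : y ∈ Λ 2 1 2) (n : ℕ) : 7 ^ n * y ∈ 𝓕 n :=
  mem_iff.2 ⟨y, hy, 0, by simp⟩

theorem seven_pow_mul_mem (n : ℕ) (r : R) : 7 ^ N * r ∈ 𝓕 n :=
  mem_iff.2 ⟨0, zero_mem _, r, by simp⟩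

theorem pow_mul_mem {n : ℕ} {x : R} (hx : x ∈ 𝓕 n) (m : ℕ) : 7 ^ m * x ∈ 𝓕 (m + n) := by
  obtain ⟨y, hy, r, rfl⟩ := mem_iff.1 hx
  exact mem_iff.2 ⟨y, hy, 7 ^ m * r, by ring⟩

theorem antitone : Antitone 𝓕 := by
  refine antitone_nat_of_succ_le fun n x hx => ?_
  obtain ⟨y, hy, r, rfl⟩ := mem_iff.1 hx
  exact mem_iff.2 ⟨7 * y, by simpa using growthLattice.intCast_mul_mem hy 7, r, by ring⟩

theorem T_mem_lattice : 𝔪 1 0 ∈ Λ 2 1 2 := by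
  simpa using growthLattice.intCast_mul_monomial_mem (a := 1) (b := 0) (c := 1) (T := T) (S := S)
    (N := N) (k := 2) (l₁ := 1) (l₂ := 2) 0 (by simp) (by simp) (by simp) (by simp)

end towerFiltration

open towerFiltration

theorem exists_sub_zsmul_T_mem {x : R} (hx : x ∈ Λ 1 1 2) : ∃ t : ℤ, x - t • 𝔪 1 0 ∈ 𝓕 1 := by
  have hsup : x ∈ AddSubgroup.zmultiples (𝔪 1 0) ⊔ 𝓕 1 := by
    refine growthLattice.map_mem (K := AddMonoidHom.id R)
      (fun r => AddSubgroup.mem_sup_right (seven_pow_mul_mem 1 r)) (fun m a b h₁ h₂ hm => ?_) hx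
    rcases m with _ | m
    · obtain ⟨rfl, rfl⟩ : a = 1 ∧ b = 0 := by omega
      exact AddSubgroup.mem_sup_left (by simp)
    · refine AddSubgroup.mem_sup_right ?_
      have := seven_pow_mul_lattice_mem
        (growthLattice.seven_pow_mul_monomial_mem (T := T) (S := S) (N := N) h₁ h₂
          (k := 2) (m := m) (by omega)) 1
      rwa [← mul_assoc, ← pow_add, add_comm] at this
  obtain ⟨y, hy, z, hz, rfl⟩ := AddSubgroup.mem_sup.1 hsup
  obtain ⟨t, rfl⟩ := AddSubgroup.mem_zmultiples_iff.1 hy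
  exact ⟨t, by simpa using hz⟩

namespace TraceSystem

theorem exists_comp_sub_mem (D : TraceSystem T S g u) (h₁ : IsTwistedTrace T S u 16 (-5) K₁)
    (h₂ : IsTwistedTrace T S u 0 0 K₂) {n : ℕ} {x : R} (hx : x ∈ 𝓕 n) :
    ∃ t : ℤ, K₂ (K₁ x) - (7 ^ n * t) • 𝔪 1 0 ∈ 𝓕 (n + 1) := by
  obtain ⟨y, hy, r, rfl⟩ := mem_iff.1 hx
  have hmem : K₂ (K₁ y) ∈ Λ 1 1 2 :=
    growthLattice.mono (D.map_mem_growthLattice h₂ (D.map_mem_growthLattice h₁ hy))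
      (by norm_num) (by norm_num) (by norm_num)
  obtain ⟨t, ht⟩ := exists_sub_zsmul_T_mem hmem
  refine ⟨t, ?_⟩
  convert add_mem (pow_mul_mem ht n) (seven_pow_mul_mem (n + 1) (K₂ (K₁ r))) using 1
  simp only [map_add, map_seven_pow_mul, zsmul_eq_mul]
  push_cast
  ring

theorem map_mem_lattice (D : TraceSystem T S g u) (h₂ : IsTwistedTrace T S u 0 0 K₂) {w : R}
    (hw : w ∈ Λ 6 2 8) : K₂ w ∈ Λ 2 1 2 :=
  growthLattice.mono (D.map_mem_growthLattice h₂ hw) (by simp) (by simp) (by simp)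

theorem comp_T_sub_mem (D : TraceSystem T S g u) (h₁ : IsTwistedTrace T S u 16 (-5) K₁)
    (h₂ : IsTwistedTrace T S u 0 0 K₂) : K₂ (K₁ (𝔪 1 0)) - (4 : ℤ) • 𝔪 1 0 ∈ 𝓕 1 := by
  obtain ⟨w, hw, hKT⟩ := D.map_T_eq (N := N) h₁
  obtain ⟨y, hy, hT₄⟩ := D.map_T_pow_four_eq (N := N) h₂
  obtain ⟨z, hz, hT₆⟩ := D.map_T_pow_six_mul_eq (N := N) h₂
  have hw' := D.map_mem_lattice h₂ (growthLattice.mono hw (by simp) le_rfl le_rfl)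
  convert seven_pow_mul_lattice_mem (sub_mem (add_mem (sub_mem hy hz) hw') T_mem_lattice) 1 using 1
  have hK₂ := map_seven_pow_mul K₂ 1 w
  rw [pow_one] at hK₂ ⊢
  rw [hKT, map_add, map_sub, hT₄, hT₆, hK₂, zsmul_eq_mul]
  push_cast
  ring

theorem comp_one_sub_mem (D : TraceSystem T S g u) (h₁ : IsTwistedTrace T S u 16 (-5) K₁)
    (h₂ : IsTwistedTrace T S u 0 0 K₂) : K₂ (K₁ 1) - (7 * 9 : ℤ) • 𝔪 1 0 ∈ 𝓕 2 := by
  obtain ⟨w, hw, hK⟩ := D.map_one_eq (N := N) h₁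
  obtain ⟨y, hy, hT₄⟩ := D.map_T_pow_four_eq (N := N) h₂
  convert seven_pow_mul_lattice_mem (add_mem (growthLattice.intCast_mul_mem hy 3)
    (D.map_mem_lattice h₂ hw)) 2 using 1
  have h21 : K₂ (21 * 𝔪 4 0) = 21 * K₂ (𝔪 4 0) := by
    simpa [zsmul_eq_mul] using map_zsmul K₂ 21 (𝔪 4 0)
  have h49 := map_seven_pow_mul K₂ 2 w
  norm_num at h49 ⊢
  rw [hK, map_add, h21, hT₄, h49]
  ring

theorem exists_tower_sub_eq (D : TraceSystem T S g u) (h₁ : IsTwistedTrace T S u 16 (-5) K₁)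
    (h₂ : IsTwistedTrace T S u 0 0 K₂) {l : ℕ → R} (hl₀ : l 0 = 1)
    (hl : ∀ n, l (n + 1) = K₂ (K₁ (l n))) {α : ℕ} (hα : 1 ≤ α) :
    ∃ (x : ℤ) (r : R), l (α + 1) - x * l α = 7 ^ (α + 1) * r := by
  obtain ⟨n, rfl⟩ := Nat.exists_eq_add_of_le' hα
  obtain ⟨x, hx⟩ := exists_sub_zsmul_mem_of_tower (F := towerFiltration T S (n + 2)) (p := 7)
    (E := K₂.comp K₁) (c := 9) (e := 4) (τ := laurentMonomial T S 1 0) (l := l) antitone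
    (by norm_num) (by simpa using seven_pow_mul_lattice_mem T_mem_lattice 0)
    (fun k x hx => by simpa [add_comm] using pow_mul_mem hx 1)
    (fun k x hx => D.exists_comp_sub_mem h₁ h₂ hx) (by norm_num) (D.comp_T_sub_mem h₁ h₂)
    hl (by norm_num) (by simpa [hl, hl₀] using D.comp_one_sub_mem h₁ h₂) n
  obtain ⟨y, -, r, hr⟩ := mem_iff.1 hx
  refine ⟨x, y + r, ?_⟩
  rw [mul_add, hr, zsmul_eq_mul]

end TraceSystem
end Tower

/-! ### Klein's relations -/

section Klein

variable {R : Type*} [CommRing R] {a b c d e f : R}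

/-- The relations between the dissection components `a, b, c` of `ξ` and `d, e, f` of `η`,
whose cyclic invariants were studied by Klein. -/
structure KleinRelations (a b c d e f : R) : Prop where
  prod_left : a * b * c + 1 = 0
  prod_right : d * e * f + 1 = 0
  link₁ : c * f + a + d = 0
  link₂ : a * d + b + e = 0
  link₃ : b * e + c + f = 0

/-- The cyclically invariant function equal to `1 / T (q ^ 7)` in the application. -/
def kleinX (a b c : R) : R := -8 - (a ^ 3 * c + b ^ 3 * a + c ^ 3 * b)

/-- The cyclically invariant function of level 14 generating, with `kleinX a b c` and
`kleinX d e f`, the traces of monomials in `ξ` and `η`. -/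
def kleinG (a b c d e f : R) : R := 4 - (d * b * c + e * a * c + f * a * b)

/-- The representatives of the cyclic orbits of monomials that occur in powers of `a + b + c`. -/
def orbitMonomial (a b c : R) : ℕ → R
  | 1 => a * c
  | 2 => c ^ 3
  | 3 => a * b ^ 2
  | 4 => b
  | 5 => a ^ 2
  | 6 => c ^ 4
  | _ => 0

/-- The sum of the orbit of `orbitMonomial a b c k` under the cyclic shift `a → b → c → a`. -/
def orbitSum (a b c : R) (k : ℕ) : R :=
  orbitMonomial a b c k + orbitMonomial b c a k + orbitMonomial c a b k

/-- The basis `1, orbitSum a b c 1, …, orbitSum a b c 6` in which powers of `ξ` are expanded. -/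
def orbitBasis (a b c : R) : ℕ → R
  | 0 => 1
  | k + 1 => orbitSum a b c (k + 1)

/-- The value at `x` of the polynomial whose terms `c * x ^ a` are listed as `(c, a)`. -/
def evalTermsX (x : R) (l : List (ℤ × ℕ)) : R := (l.map fun t => (t.1 : R) * x ^ t.2).sum

/-- The coefficient of `orbitBasis a b c k` in `ξ ^ i`, as a polynomial in `kleinX a b c`; see
`evalTermsX` for the encoding. -/
def powerTerms : ℕ → ℕ → List (ℤ × ℕ)
  | 0, 0 => [(1, 0)]
  | 1, 0 => [(-1, 0)]
  | 1, 4 => [(1, 0)]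
  | 2, 0 => [(1, 0)]
  | 2, 1 => [(2, 0)]
  | 2, 4 => [(-2, 0)]
  | 2, 5 => [(1, 0)]
  | 3, 0 => [(-7, 0)]
  | 3, 1 => [(-6, 0)]
  | 3, 2 => [(1, 0)]
  | 3, 3 => [(3, 0)]
  | 4, 0 => [(-7, 0), (-4, 1)]
  | 4, 1 => [(2, 0)]
  | 4, 2 => [(2, 0)]
  | 4, 3 => [(-8, 0)]
  | 4, 4 => [(-4, 0)]
  | 4, 5 => [(-6, 0)]
  | 4, 6 => [(1, 0)]
  | 5, 0 => [(49, 0), (10, 1)]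
  | 5, 1 => [(-14, 0), (-1, 1)]
  | 5, 2 => [(-14, 0)]
  | 5, 3 => [(7, 0)]
  | 5, 4 => [(-5, 1)]
  | 6, 0 => [(49, 0)]
  | 6, 1 => [(21, 0), (-9, 1)]
  | 6, 2 => [(21, 0)]
  | 6, 3 => [(-35, 0), (-1, 1)]
  | 6, 4 => [(56, 0), (16, 1)]
  | 6, 5 => [(-14, 0), (-6, 1)]
  | 6, 6 => [(-14, 0)]
  | _, _ => []

/-- The trace of `orbitBasis a b c k * orbitBasis d e f l`, as a polynomial in `kleinX a b c`,
`kleinX d e f` and `kleinG a b c d e f`; see `evalTerms` for the encoding. -/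
def gramTerms : ℕ → ℕ → List (ℤ × ℕ × ℕ × ℕ)
  | 0, 0 => [(1, 0, 0, 0)]
  | 1, 4 => [(4, 0, 0, 0), (-1, 0, 0, 1)]
  | 1, 5 => [(-1, 0, 0, 0)]
  | 1, 6 => [(-25, 0, 0, 0), (3, 0, 0, 1), (-1, 0, 1, 0), (-1, 1, 0, 0)]
  | 2, 4 => [(13, 0, 0, 0), (-2, 0, 0, 1), (1, 1, 0, 0)]
  | 2, 5 => [(9, 0, 0, 0), (1, 0, 0, 1), (1, 0, 1, 0), (1, 1, 0, 0)]
  | 2, 6 => [(-20, 0, 0, 0), (5, 0, 0, 1), (1, 0, 1, 0), (-1, 1, 0, 0)]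
  | 3, 4 => [(-1, 0, 0, 0), (1, 0, 0, 1)]
  | 3, 5 => [(-12, 0, 0, 0), (2, 0, 0, 1), (-1, 1, 0, 0)]
  | 3, 6 => [(-6, 0, 0, 0), (-5, 0, 0, 1), (2, 0, 1, 0), (-1, 0, 1, 1), (-2, 1, 0, 0)]
  | 4, 1 => [(-3, 0, 0, 0), (1, 0, 0, 1)]
  | 5, 1 => [(-1, 0, 0, 0)]
  | 6, 1 => [(-4, 0, 0, 0), (-3, 0, 0, 1), (-1, 0, 1, 0), (-1, 1, 0, 0)]
  | 4, 2 => [(-1, 0, 0, 0), (2, 0, 0, 1), (1, 0, 1, 0)]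
  | 5, 2 => [(16, 0, 0, 0), (-1, 0, 0, 1), (1, 0, 1, 0), (1, 1, 0, 0)]
  | 6, 2 => [(15, 0, 0, 0), (-5, 0, 0, 1), (-1, 0, 1, 0), (1, 1, 0, 0)]
  | 4, 3 => [(6, 0, 0, 0), (-1, 0, 0, 1)]
  | 5, 3 => [(2, 0, 0, 0), (-2, 0, 0, 1), (-1, 0, 1, 0)]
  | 6, 3 => [(-41, 0, 0, 0), (5, 0, 0, 1), (-2, 0, 1, 0), (-5, 1, 0, 0), (1, 1, 0, 1)]
  | _, _ => []

namespace KleinRelations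

theorem symm (H : KleinRelations a b c d e f) : KleinRelations d e f a b c where
  prod_left := H.prod_right
  prod_right := H.prod_left
  link₁ := by linear_combination H.link₁
  link₂ := by linear_combination H.link₂
  link₃ := by linear_combination H.link₃

theorem rotate (H : KleinRelations a b c d e f) : KleinRelations b c a e f d where
  prod_left := by linear_combination H.prod_left
  prod_right := by linear_combination H.prod_right
  link₁ := H.link₂
  link₂ := H.link₃
  link₃ := H.link₁

theorem mul_sq_sub_sq_add (H : KleinRelations a b c d e f) : a * c ^ 2 - a ^ 2 + b = 0 := by
  linear_combination a * c * H.link₃ - e * H.prod_left - a * H.link₁ + H.link₂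

theorem kleinG_mul_sub_seven (H : KleinRelations a b c d e f) :
    kleinG a b c d e f * (kleinG a b c d e f - 7) = kleinX a b c + kleinX d e f := by
  obtain ⟨hp, hp', h₁, h₂, h₃⟩ := H
  simp only [kleinX, kleinG]
  grind

theorem kleinG_mul_sub (H : KleinRelations a b c d e f) :
    kleinG a b c d e f * (kleinX d e f - kleinX a b c) =
      7 * kleinX d e f + kleinX a b c * kleinX d e f := by
  obtain ⟨hp, hp', h₁, h₂, h₃⟩ := H
  simp only [kleinX, kleinG]
  grind

theorem kleinG_swap (H : KleinRelations a b c d e f) :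
    kleinG d e f a b c = 7 - kleinG a b c d e f := by
  obtain ⟨hp, -, h₁, h₂, h₃⟩ := H
  simp only [kleinG]
  grind

theorem pow_eq_sum_powerTerms (H : KleinRelations a b c d e f) {i : ℕ} (hi : i < 7) :
    (a + b + c - 1) ^ i =
      ∑ k ∈ Finset.range 7, evalTermsX (kleinX a b c) (powerTerms i k) * orbitBasis a b c k := by
  have hp := H.prod_left
  have h₁ := H.mul_sq_sub_sq_add
  have h₂ := H.rotate.mul_sq_sub_sq_add
  have h₃ := H.rotate.rotate.mul_sq_sub_sq_add
  interval_cases i <;>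
    simp [Finset.sum_range_succ, evalTermsX, powerTerms, orbitBasis, orbitSum, orbitMonomial,
      kleinX] <;>
    grind

theorem modular_equation (H : KleinRelations a b c d e f) {x X : R} (hx : x = a + b + c - 1)
    (hX : X = kleinX a b c) :
    x ^ 7 + 7 * x ^ 6 + 21 * x ^ 5 + 49 * x ^ 4 + 147 * x ^ 3 + 343 * x ^ 2 + 343 * x
      + X * (7 * x ^ 3 + 35 * x ^ 2 + 49 * x) = X ^ 2 := by
  have hp := H.prod_left
  have h₁ := H.mul_sq_sub_sq_add
  have h₂ := H.rotate.mul_sq_sub_sq_add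
  have h₃ := H.rotate.rotate.mul_sq_sub_sq_add
  rw [kleinX] at hX
  subst hx hX
  grind

theorem sum_orbitMonomial_mul (H : KleinRelations a b c d e f) {k l : ℕ} (hk : k ∈ Finset.Icc 1 3)
    (hl : l ∈ Finset.Icc 4 6) :
    orbitMonomial a b c k * orbitMonomial d e f l + orbitMonomial b c a k * orbitMonomial e f d l
      + orbitMonomial c a b k * orbitMonomial f d e l =
      evalTerms (kleinX a b c) (kleinX d e f) (kleinG a b c d e f) (gramTerms k l) := by
  obtain ⟨hp, hp', h₁, h₂, h₃⟩ := H
  fin_cases hk <;> fin_cases hl <;>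
    simp only [orbitMonomial, gramTerms, evalTerms_cons, evalTerms_nil, kleinX, kleinG] <;>
    push_cast <;> grind

theorem evalTerms_gramTerms_swap (x y g : R) {k l : ℕ} (hk : k ∈ Finset.Icc 1 3)
    (hl : l ∈ Finset.Icc 4 6) :
    evalTerms y x (7 - g) (gramTerms k l) = evalTerms x y g (gramTerms l k) := by
  fin_cases hk <;> fin_cases hl <;> simp only [gramTerms, evalTerms_cons, evalTerms_nil] <;>
    push_cast <;> ring

end KleinRelations
end Klein

section TermLists

variable {R : Type*} [CommRing R]

/-- Adds a term to a term list, merging it with the first term of the same exponents. -/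
def insertTerm (t : ℤ × ℕ × ℕ × ℕ) : List (ℤ × ℕ × ℕ × ℕ) → List (ℤ × ℕ × ℕ × ℕ)
  | [] => [t]
  | s :: l => if t.2 = s.2 then (t.1 + s.1, s.2) :: l else s :: insertTerm t l

/-- The term list of the product of two polynomials. -/
def mulTerms (l m : List (ℤ × ℕ × ℕ × ℕ)) : List (ℤ × ℕ × ℕ × ℕ) :=
  l.flatMap fun s => m.map fun t => (s.1 * t.1, s.2 + t.2)

theorem evalTerms_insertTerm (x y g : R) (t : ℤ × ℕ × ℕ × ℕ) (l : List (ℤ × ℕ × ℕ × ℕ)) :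
    evalTerms x y g (insertTerm t l) = evalTerms x y g (t :: l) := by
  induction l with
  | nil => rfl
  | cons s l ih =>
    rw [insertTerm]
    split_ifs with h
    · obtain ⟨c, a, b, e⟩ := t
      obtain ⟨c', v'⟩ := s
      obtain rfl : (a, b, e) = v' := h
      simp only [evalTerms_cons]
      push_cast
      ring
    · rw [evalTerms_cons, ih, evalTerms_cons, evalTerms_cons, evalTerms_cons]
      ring

theorem evalTerms_foldr_insertTerm (x y g : R) (l : List (ℤ × ℕ × ℕ × ℕ)) :
    evalTerms x y g (l.foldr insertTerm []) = evalTerms x y g l := by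
  induction l with
  | nil => rfl
  | cons s l ih => rw [List.foldr_cons, evalTerms_insertTerm, evalTerms_cons, ih, evalTerms_cons]

theorem evalTerms_eq_zero {l : List (ℤ × ℕ × ℕ × ℕ)} (hl : ∀ t ∈ l, t.1 = 0) (x y g : R) :
    evalTerms x y g l = 0 := by
  refine List.sum_eq_zero fun r hr => ?_
  obtain ⟨t, ht, rfl⟩ := List.mem_map.1 hr
  simp [hl t ht]

theorem evalTerms_append (x y g : R) (l m : List (ℤ × ℕ × ℕ × ℕ)) :
    evalTerms x y g (l ++ m) = evalTerms x y g l + evalTerms x y g m := by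
  simp [evalTerms]

theorem evalTerms_flatMap_range (x y g : R) (n : ℕ) (F : ℕ → List (ℤ × ℕ × ℕ × ℕ)) :
    evalTerms x y g ((List.range n).flatMap F) = ∑ k ∈ Finset.range n, evalTerms x y g (F k) := by
  induction n with
  | zero => rfl
  | succ n ih =>
    simp [List.range_succ, List.flatMap_append, evalTerms_append, ih, Finset.sum_range_succ]

theorem evalTerms_mulTerms (x y g : R) (l m : List (ℤ × ℕ × ℕ × ℕ)) :
    evalTerms x y g (mulTerms l m) = evalTerms x y g l * evalTerms x y g m := by
  have scale (s : ℤ × ℕ × ℕ × ℕ) : evalTerms x y g (m.map fun t => (s.1 * t.1, s.2 + t.2)) =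
      s.1 * x ^ s.2.1 * y ^ s.2.2.1 * g ^ s.2.2.2 * evalTerms x y g m := by
    rw [evalTerms, evalTerms, List.map_map, ← List.sum_map_mul_left]
    congr 2
    funext t
    simp only [Function.comp_apply, Prod.fst_add, Prod.snd_add]
    push_cast
    ring
  induction l with
  | nil => simp [mulTerms, evalTerms_nil]
  | cons s l ih =>
    rw [mulTerms, List.flatMap_cons, evalTerms_append, scale, ← mulTerms, ih, evalTerms_cons,
      add_mul]

theorem evalTerms_map_left (x y g : R) (l : List (ℤ × ℕ)) :
    evalTerms x y g (l.map fun t => (t.1, t.2, 0, 0)) = evalTermsX x l := by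
  simp [evalTerms, evalTermsX, Function.comp_def]

theorem evalTerms_map_right (x y g : R) (l : List (ℤ × ℕ)) :
    evalTerms x y g (l.map fun t => (t.1, 0, t.2, 0)) = evalTermsX y l := by
  simp [evalTerms, evalTermsX, Function.comp_def]

theorem map_evalTerms {R' : Type*} [CommRing R'] (φ : R →+* R') (x y g : R)
    (l : List (ℤ × ℕ × ℕ × ℕ)) :
    φ (evalTerms x y g l) = evalTerms (φ x) (φ y) (φ g) l := by
  simp [evalTerms, map_list_sum, Function.comp_def]

theorem map_evalTermsX {R' : Type*} [CommRing R'] (φ : R →+* R') (x : R) (l : List (ℤ × ℕ)) :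
    φ (evalTermsX x l) = evalTermsX (φ x) l := by
  simp [evalTermsX, map_list_sum, Function.comp_def]

/-- The trace of `ξ ^ i * η ^ j` obtained from `powerTerms` and `gramTerms`, minus its normal form
`traceTable i j`. Only for `i = j = 4` is the relation `g (y - x) = 7 y + x y` needed to identify
the two; it is subtracted 8 times. -/
def traceDefect (i j : ℕ) : List (ℤ × ℕ × ℕ × ℕ) :=
  ((List.range 7).flatMap fun k => (List.range 7).flatMap fun l =>
    mulTerms (mulTerms ((powerTerms i k).map fun t => (t.1, t.2, 0, 0))
      ((powerTerms j l).map fun t => (t.1, 0, t.2, 0))) (gramTerms k l)) ++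
    mulTerms [(-1, 0, 0, 0)] (traceTable i j) ++
    if i = 4 ∧ j = 4 then [(-8, 0, 1, 1), (8, 1, 0, 1), (56, 0, 1, 0), (8, 1, 1, 0)] else []

theorem traceDefect_normalized_eq_zero :
    ∀ i < 7, ∀ j < 7, ∀ t ∈ (traceDefect i j).foldr insertTerm [], t.1 = 0 := by
  decide +kernel

theorem sum_powerTerms_mul_gramTerms {x y g : R} (h : g * (y - x) = 7 * y + x * y) {i j : ℕ}
    (hi : i < 7) (hj : j < 7) :
    ∑ k ∈ Finset.range 7, ∑ l ∈ Finset.range 7, evalTermsX x (powerTerms i k) *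
      evalTermsX y (powerTerms j l) * evalTerms x y g (gramTerms k l) =
      evalTerms x y g (traceTable i j) := by
  have hrel : evalTerms x y g (if i = 4 ∧ j = 4 then
      [((-8 : ℤ), 0, 1, 1), (8, 1, 0, 1), (56, 0, 1, 0), (8, 1, 1, 0)] else []) = 0 := by
    split_ifs
    · simp only [evalTerms_cons, evalTerms_nil]
      push_cast
      linear_combination -8 * h
    · rfl
  have hdefect := evalTerms_eq_zero (traceDefect_normalized_eq_zero i hi j hj) x y g
  simp only [evalTerms_foldr_insertTerm, traceDefect, evalTerms_append, evalTerms_flatMap_range,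
    evalTerms_mulTerms, evalTerms_map_left, evalTerms_map_right, hrel, evalTerms_cons,
    evalTerms_nil] at hdefect
  push_cast at hdefect
  linear_combination hdefect

end TermLists

/-! ### Laurent series -/

section Laurent

variable {K : Type*} [CommRing K]

theorem coeff_mul_eq_zero {f g : LaurentSeries K} {n : ℤ}
    (h : ∀ i j : ℤ, i + j = n → f.coeff i = 0 ∨ g.coeff j = 0) : (f * g).coeff n = 0 := by
  rw [HahnSeries.coeff_mul]
  refine Finset.sum_eq_zero fun ij hij => ?_
  rcases h ij.1 ij.2 (Finset.mem_antidiagonal.1 hij).2.2 with h | h <;> simp [h]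

theorem coeff_intCast_mul (z : ℤ) (f : LaurentSeries K) (n : ℤ) :
    ((z : LaurentSeries K) * f).coeff n = z * f.coeff n := by
  rw [← zsmul_eq_mul, HahnSeries.coeff_smul, zsmul_eq_mul]

/-- The Laurent series whose terms all have degree at least `M`. -/
def orderGE (M : ℤ) : AddSubgroup (LaurentSeries K) where
  carrier := {f | ∀ i < M, f.coeff i = 0}
  add_mem' hf hg i hi := by simp [hf i hi, hg i hi]
  zero_mem' i _ := HahnSeries.coeff_zero
  neg_mem' hf i hi := by simp [hf i hi]

theorem mul_mem_orderGE {M N : ℤ} {f g : LaurentSeries K} (hf : f ∈ orderGE M)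
    (hg : g ∈ orderGE N) : f * g ∈ orderGE (M + N) := fun i hi => by
  refine coeff_mul_eq_zero fun a b hab => ?_
  by_cases h : a < M
  · exact Or.inl (hf a h)
  · exact Or.inr (hg b (by omega))

theorem orderGE_mono {M N : ℤ} (h : N ≤ M) {f : LaurentSeries K} (hf : f ∈ orderGE M) :
    f ∈ orderGE N :=
  fun i hi => hf i (by omega)

theorem one_mem_orderGE_zero : (1 : LaurentSeries K) ∈ orderGE 0 := fun i hi => by
  rw [HahnSeries.coeff_one, if_neg (by omega)]

theorem mul_mem_orderGE_zero {f g : LaurentSeries K} (hf : f ∈ orderGE 0) (hg : g ∈ orderGE 0) :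
    f * g ∈ orderGE 0 := by
  simpa using mul_mem_orderGE hf hg

theorem prod_mem_orderGE_zero {ι : Type*} {s : Finset ι} {f : ι → LaurentSeries K}
    (hf : ∀ i ∈ s, f i ∈ orderGE 0) : ∏ i ∈ s, f i ∈ orderGE 0 :=
  Finset.prod_induction f (· ∈ orderGE 0) (fun _ _ => mul_mem_orderGE_zero) one_mem_orderGE_zero hf

theorem ofPowerSeries_mem_orderGE_zero (f : PowerSeries K) :
    HahnSeries.ofPowerSeries ℤ K f ∈ orderGE 0 := fun i hi => by
  rw [HahnSeries.ofPowerSeries_apply]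
  apply HahnSeries.embDomain_of_notMem_range
  rintro ⟨m, hm⟩
  have : (m : ℤ) = i := hm
  omega

/-- `f` and `g` are power series that agree in all degrees below `M`. -/
structure EqUpTo (M : ℤ) (f g : LaurentSeries K) : Prop where
  left_mem : f ∈ orderGE 0
  right_mem : g ∈ orderGE 0
  sub_mem : f - g ∈ orderGE M

namespace EqUpTo

variable {M : ℤ} {f g h f' g' : LaurentSeries K}

theorem refl (hf : f ∈ orderGE 0) : EqUpTo M f f :=
  ⟨hf, hf, by simp [zero_mem]⟩

theorem symm (hfg : EqUpTo M f g) : EqUpTo M g f :=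
  ⟨hfg.right_mem, hfg.left_mem, by simpa using neg_mem hfg.sub_mem⟩

theorem trans (hfg : EqUpTo M f g) (hgh : EqUpTo M g h) : EqUpTo M f h :=
  ⟨hfg.left_mem, hgh.right_mem, by simpa using add_mem hfg.sub_mem hgh.sub_mem⟩

theorem mul (hfg : EqUpTo M f g) (hfg' : EqUpTo M f' g') : EqUpTo M (f * f') (g * g') := by
  refine ⟨mul_mem_orderGE_zero hfg.left_mem hfg'.left_mem,
    mul_mem_orderGE_zero hfg.right_mem hfg'.right_mem, ?_⟩
  have hl := mul_mem_orderGE hfg.sub_mem hfg'.left_mem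
  have hr := mul_mem_orderGE hfg.right_mem hfg'.sub_mem
  rw [add_zero] at hl
  rw [zero_add] at hr
  convert add_mem hl hr using 1
  ring

theorem prod {ι : Type*} {s : Finset ι} {f g : ι → LaurentSeries K}
    (h : ∀ i ∈ s, EqUpTo M (f i) (g i)) : EqUpTo M (∏ i ∈ s, f i) (∏ i ∈ s, g i) := by
  classical
  induction s using Finset.induction_on with
  | empty => exact refl one_mem_orderGE_zero
  | insert a s ha ih =>
    rw [Finset.prod_insert ha, Finset.prod_insert ha]
    exact (h a (Finset.mem_insert_self a s)).mul (ih fun i hi => h i (Finset.mem_insert_of_mem hi))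

theorem pow (hfg : EqUpTo M f g) (n : ℕ) : EqUpTo M (f ^ n) (g ^ n) := by
  simpa using prod (s := Finset.range n) fun _ _ => hfg

theorem sum {ι : Type*} {s : Finset ι} {f g : ι → LaurentSeries K}
    (h : ∀ i ∈ s, EqUpTo M (f i) (g i)) : EqUpTo M (∑ i ∈ s, f i) (∑ i ∈ s, g i) := by
  refine ⟨_root_.sum_mem fun i hi => (h i hi).left_mem,
    _root_.sum_mem fun i hi => (h i hi).right_mem, ?_⟩
  rw [← Finset.sum_sub_distrib]
  exact _root_.sum_mem fun i hi => (h i hi).sub_mem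

theorem eq_of_forall (h : ∀ M : ℕ, EqUpTo M f g) : f = g := by
  ext i
  have := (h (i.toNat + 1)).sub_mem i (by omega)
  simpa [sub_eq_zero] using this

end EqUpTo

/-- The monomial `q ^ n`. -/
def qPow (n : ℤ) : LaurentSeries K := HahnSeries.single n 1

theorem qPow_zero : (qPow 0 : LaurentSeries K) = 1 := rfl

theorem qPow_mul_qPow (m n : ℤ) : (qPow m * qPow n : LaurentSeries K) = qPow (m + n) := by
  simp [qPow]

theorem qPow_mul_qPow_eq {i j k l : ℤ} (h : i + j = k + l) :
    (qPow i * qPow j : LaurentSeries K) = qPow k * qPow l := by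
  rw [qPow_mul_qPow, qPow_mul_qPow, h]

theorem qPow_pow (m : ℤ) (n : ℕ) : (qPow m ^ n : LaurentSeries K) = qPow (m * n) := by
  simp [qPow, mul_comm]

theorem coeff_qPow (m n : ℤ) : (qPow m : LaurentSeries K).coeff n = if n = m then 1 else 0 := by
  simp [qPow, HahnSeries.coeff_single]

theorem coeff_qPow_mul (m n : ℤ) (f : LaurentSeries K) :
    (qPow m * f).coeff n = f.coeff (n - m) := by
  simp [qPow, HahnSeries.coeff_single_mul]

theorem qPow_mem_orderGE {M m : ℤ} (h : M ≤ m) : (qPow m : LaurentSeries K) ∈ orderGE M :=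
  fun i hi => by rw [coeff_qPow, if_neg (by omega)]

/-- `f` has lowest term `x q ^ n`, where `x = 0` is allowed. -/
structure HasLeadingTerm (f : LaurentSeries K) (n : ℤ) (x : K) : Prop where
  mem_orderGE : f ∈ orderGE n
  coeff_eq : f.coeff n = x

namespace HasLeadingTerm

variable {f g : LaurentSeries K} {m n : ℤ} {x y : K}

theorem qPow (n : ℤ) : HasLeadingTerm (qPow n : LaurentSeries K) n 1 :=
  ⟨qPow_mem_orderGE le_rfl, by rw [coeff_qPow, if_pos rfl]⟩

theorem mul (hf : HasLeadingTerm f n x) (hg : HasLeadingTerm g m y) :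
    HasLeadingTerm (f * g) (n + m) (x * y) := by
  refine ⟨mul_mem_orderGE hf.mem_orderGE hg.mem_orderGE, ?_⟩
  have htail : f - HahnSeries.C x * _root_.qPow n ∈ orderGE (n + 1) := fun i hi => by
    rw [HahnSeries.coeff_sub, HahnSeries.C_apply, HahnSeries.coeff_single_zero_mul, coeff_qPow]
    split_ifs with h
    · simp [h, hf.coeff_eq]
    · simp [hf.mem_orderGE i (by omega)]
  have hcoeff := mul_mem_orderGE htail hg.mem_orderGE (n + m) (by omega)
  rw [sub_mul, HahnSeries.coeff_sub, sub_eq_zero] at hcoeff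
  rw [hcoeff, mul_assoc, HahnSeries.C_apply, HahnSeries.coeff_single_zero_mul, coeff_qPow_mul,
    add_sub_cancel_left, hg.coeff_eq]

theorem one : HasLeadingTerm (1 : LaurentSeries K) 0 1 :=
  qPow 0

theorem pow (hf : HasLeadingTerm f n x) (k : ℕ) : HasLeadingTerm (f ^ k) (k * n) (x ^ k) := by
  induction k with
  | zero => simpa using one
  | succ k ih =>
    rw [pow_succ, pow_succ, Nat.cast_succ, add_one_mul]
    exact ih.mul hf

theorem sub (hf : HasLeadingTerm f n x) (hg : HasLeadingTerm g n y) :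
    HasLeadingTerm (f - g) n (x - y) :=
  ⟨sub_mem hf.mem_orderGE hg.mem_orderGE, by rw [HahnSeries.coeff_sub, hf.coeff_eq, hg.coeff_eq]⟩

theorem of_lt (hf : HasLeadingTerm f n x) (hmn : m < n) : HasLeadingTerm f m 0 :=
  ⟨orderGE_mono hmn.le hf.mem_orderGE, hf.mem_orderGE m hmn⟩

end HasLeadingTerm

/-- The substitution `q ↦ q ^ b`. -/
def expand (b : ℕ) [NeZero b] : LaurentSeries K →+* LaurentSeries K :=
  HahnSeries.embDomainRingHom (AddMonoidHom.mulLeft (b : ℤ))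
    (mul_right_injective₀ (NeZero.ne (b : ℤ)))
    fun _ _ => mul_le_mul_iff_right₀ (Nat.cast_pos.2 (NeZero.pos b))

section Expand

variable (b : ℕ) [NeZero b]

theorem coeff_expand_mul (f : LaurentSeries K) (n : ℤ) : (expand b f).coeff (b * n) = f.coeff n :=
  HahnSeries.embDomain_coeff (f := ⟨⟨fun n : ℤ => (b : ℤ) * n, _⟩, _⟩)

theorem coeff_expand_of_not_dvd {n : ℤ} (h : ¬ (b : ℤ) ∣ n) (f : LaurentSeries K) :
    (expand b f).coeff n = 0 :=
  HahnSeries.embDomain_of_notMem_range fun ⟨m, hm⟩ => h ⟨m, hm.symm⟩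

theorem expand_injective : Function.Injective (expand b : LaurentSeries K →+* LaurentSeries K) := by
  intro f g h
  ext n
  rw [← coeff_expand_mul b f, h, coeff_expand_mul]

theorem expand_qPow (m : ℤ) : expand b (qPow m : LaurentSeries K) = qPow (b * m) := by
  ext n
  by_cases h : (b : ℤ) ∣ n
  · obtain ⟨k, rfl⟩ := h
    simp [coeff_expand_mul, coeff_qPow, NeZero.ne b]
  · rw [coeff_expand_of_not_dvd b h, coeff_qPow, if_neg]
    rintro rfl
    exact h (dvd_mul_right _ _)

theorem expand_mem_orderGE {M : ℤ} {f : LaurentSeries K} (hf : f ∈ orderGE M) :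
    expand b f ∈ orderGE (b * M) := fun i hi => by
  by_cases h : (b : ℤ) ∣ i
  · obtain ⟨k, rfl⟩ := h
    rw [coeff_expand_mul]
    exact hf k (lt_of_mul_lt_mul_left hi (by omega))
  · exact coeff_expand_of_not_dvd b h f

theorem expand_expand (c : ℕ) [NeZero c] (f : LaurentSeries K) :
    expand b (expand c f) = expand (b * c) f := by
  ext n
  by_cases hbc : ((b * c : ℕ) : ℤ) ∣ n
  · obtain ⟨k, rfl⟩ := hbc
    rw [coeff_expand_mul, Nat.cast_mul, mul_assoc, coeff_expand_mul, coeff_expand_mul]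
  · rw [coeff_expand_of_not_dvd _ hbc]
    by_cases hb : (b : ℤ) ∣ n
    · obtain ⟨k, rfl⟩ := hb
      rw [coeff_expand_mul, coeff_expand_of_not_dvd]
      rw [Nat.cast_mul] at hbc
      exact fun h => hbc (mul_dvd_mul_left _ h)
    · exact coeff_expand_of_not_dvd b hb _

theorem expand_comm (c : ℕ) [NeZero c] (f : LaurentSeries K) :
    expand b (expand c f) = expand c (expand b f) := by
  simp only [expand_expand, mul_comm b c]

theorem EqUpTo.expand {M : ℕ} {f g : LaurentSeries K} (h : EqUpTo M f g) :
    EqUpTo M (expand b f) (expand b g) := by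
  refine ⟨by simpa using expand_mem_orderGE b h.left_mem,
    by simpa using expand_mem_orderGE b h.right_mem, ?_⟩
  rw [← map_sub]
  have hb := NeZero.one_le (n := b)
  exact orderGE_mono (by nlinarith) (expand_mem_orderGE b h.sub_mem)

theorem HasLeadingTerm.expand {f : LaurentSeries K} {n : ℤ} {x : K} (h : HasLeadingTerm f n x) :
    HasLeadingTerm (expand b f) (b * n) x :=
  ⟨expand_mem_orderGE b h.mem_orderGE, by rw [coeff_expand_mul, h.coeff_eq]⟩

end Expand

section ResidueClass

variable {m : ℕ}

variable (m) in
/-- The Laurent series supported on the degrees congruent to `r` modulo `m`. -/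
def residueClass (r : ZMod m) : AddSubgroup (LaurentSeries K) where
  carrier := {f | ∀ n : ℤ, (n : ZMod m) ≠ r → f.coeff n = 0}
  add_mem' hf hg i hi := by simp [hf i hi, hg i hi]
  zero_mem' i _ := HahnSeries.coeff_zero
  neg_mem' hf i hi := by simp [hf i hi]

theorem mul_mem_residueClass {r s : ZMod m} {f g : LaurentSeries K} (hf : f ∈ residueClass m r)
    (hg : g ∈ residueClass m s) : f * g ∈ residueClass m (r + s) := fun n hn => by
  refine coeff_mul_eq_zero fun i j hij => ?_
  by_cases h : (i : ZMod m) = r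
  · refine Or.inr (hg j fun h' => hn ?_)
    rw [← hij, Int.cast_add, h, h']
  · exact Or.inl (hf i h)

theorem qPow_mem_residueClass (n : ℤ) : (qPow n : LaurentSeries K) ∈ residueClass m n :=
  fun k hk => by
    rw [coeff_qPow, if_neg]
    rintro rfl
    exact hk rfl

theorem one_mem_residueClass : (1 : LaurentSeries K) ∈ residueClass m 0 := by
  rw [← qPow_zero, ← Int.cast_zero]
  exact qPow_mem_residueClass 0

theorem pow_mem_residueClass {r : ZMod m} {f : LaurentSeries K} (hf : f ∈ residueClass m r)
    (n : ℕ) : f ^ n ∈ residueClass m (n * r) := by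
  induction n with
  | zero => simpa using one_mem_residueClass
  | succ n ih =>
    rw [pow_succ, Nat.cast_succ, add_one_mul]
    exact mul_mem_residueClass ih hf

theorem expand_mem_residueClass (b : ℕ) [NeZero b] {r : ZMod m} {f : LaurentSeries K}
    (hf : f ∈ residueClass m r) : expand b f ∈ residueClass m (b * r) := fun n hn => by
  by_cases h : (b : ℤ) ∣ n
  · obtain ⟨k, rfl⟩ := h
    rw [coeff_expand_mul]
    refine hf k fun hk => hn ?_
    simp [hk]
  · exact coeff_expand_of_not_dvd b h f

theorem expand_mem_residueClass_zero {b : ℕ} [NeZero b] (h : m ∣ b) (f : LaurentSeries K) :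
    expand b f ∈ residueClass m 0 := fun n hn => by
  refine coeff_expand_of_not_dvd b (fun hbn => hn ?_) f
  rw [ZMod.intCast_zmod_eq_zero_iff_dvd]
  exact (Int.natCast_dvd_natCast.2 h).trans hbn

open Classical in
variable (m) in
/-- The part of a Laurent series supported on the degrees congruent to `r` modulo `m`. -/
def classPart (r : ZMod m) : LaurentSeries K →+ LaurentSeries K where
  toFun f :=
    { coeff n := if (n : ZMod m) = r then f.coeff n else 0
      isPWO_support' := f.isPWO_support.mono fun n hn => by
        rw [HahnSeries.mem_support]
        exact (ite_ne_right_iff.1 hn).2 }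
  map_zero' := by ext; simp
  map_add' f g := by ext; simp only [HahnSeries.coeff_add]; split_ifs <;> simp

theorem coeff_classPart_of_eq {r : ZMod m} {n : ℤ} (h : (n : ZMod m) = r) (f : LaurentSeries K) :
    (classPart m r f).coeff n = f.coeff n :=
  if_pos h

theorem classPart_mem_residueClass (r : ZMod m) (f : LaurentSeries K) :
    classPart m r f ∈ residueClass m r :=
  fun _ hn => if_neg hn

theorem classPart_of_mem {r : ZMod m} {f : LaurentSeries K} (hf : f ∈ residueClass m r) :
    classPart m r f = f := by
  ext n
  by_cases hn : (n : ZMod m) = r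
  · exact coeff_classPart_of_eq hn f
  · rw [classPart_mem_residueClass r f n hn, hf n hn]

theorem classPart_of_mem_of_ne {r s : ZMod m} {f : LaurentSeries K} (hf : f ∈ residueClass m s)
    (h : s ≠ r) : classPart m r f = 0 := by
  ext n
  by_cases hn : (n : ZMod m) = r
  · rw [coeff_classPart_of_eq hn, hf n (hn.trans_ne h.symm), HahnSeries.coeff_zero]
  · exact classPart_mem_residueClass r f n hn

theorem classPart_mul {r s : ZMod m} {f : LaurentSeries K} (hf : f ∈ residueClass m s)
    (g : LaurentSeries K) : classPart m r (f * g) = f * classPart m (r - s) g := by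
  have hmem : f * classPart m (r - s) g ∈ residueClass m r := by
    simpa using mul_mem_residueClass hf (classPart_mem_residueClass (r - s) g)
  ext n
  by_cases hn : (n : ZMod m) = r
  · rw [coeff_classPart_of_eq hn, ← sub_eq_zero, ← HahnSeries.coeff_sub, ← mul_sub]
    refine coeff_mul_eq_zero fun i j hij => ?_
    by_cases hi : (i : ZMod m) = s
    · right
      rw [HahnSeries.coeff_sub, coeff_classPart_of_eq, sub_self]
      rw [← hn, ← hi, ← hij, Int.cast_add, add_sub_cancel_left]
    · exact Or.inl (hf i hi)
  · rw [classPart_mem_residueClass r _ n hn, hmem n hn]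

theorem sum_classPart [NeZero m] (f : LaurentSeries K) : ∑ r, classPart m r f = f := by
  ext n
  rw [HahnSeries.coeff_sum, Finset.sum_eq_single (n : ZMod m)]
  · exact coeff_classPart_of_eq rfl f
  · exact fun r _ hr => classPart_mem_residueClass r f n hr.symm
  · simp

end ResidueClass

section AtkinOperator

variable (m : ℕ) [NeZero m]

/-- The operator `U_m`, which keeps the terms `q ^ (m n)` and turns them into `q ^ n`. -/
def atkinU : LaurentSeries K →+ LaurentSeries K where
  toFun f := HahnSeries.ofSuppBddBelow (fun n => f.coeff (m * n)) ⟨min 0 f.order, fun n hn => by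
    have hord : f.order ≤ m * n := HahnSeries.order_le_of_coeff_ne_zero hn
    have hm : 1 ≤ m := NeZero.one_le
    rw [min_le_iff]
    by_contra! h
    nlinarith [h.1, h.2]⟩
  map_zero' := by ext; simp
  map_add' _ _ := rfl

variable {m}

theorem coeff_atkinU (f : LaurentSeries K) (n : ℤ) : (atkinU m f).coeff n = f.coeff (m * n) :=
  rfl

theorem expand_atkinU (f : LaurentSeries K) : expand m (atkinU m f) = classPart m 0 f := by
  ext n
  by_cases h : (m : ℤ) ∣ n
  · obtain ⟨k, rfl⟩ := h
    rw [coeff_expand_mul, coeff_atkinU, coeff_classPart_of_eq (by simp)]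
  · rw [coeff_expand_of_not_dvd m h, classPart_mem_residueClass]
    rwa [Ne, ZMod.intCast_zmod_eq_zero_iff_dvd]

theorem expand_atkinU_of_mem {f : LaurentSeries K} (hf : f ∈ residueClass m 0) :
    expand m (atkinU m f) = f := by
  rw [expand_atkinU, classPart_of_mem hf]

theorem atkinU_of_mem_of_ne {r : ZMod m} {f : LaurentSeries K} (hf : f ∈ residueClass m r)
    (hr : r ≠ 0) : atkinU m f = 0 := by
  apply expand_injective m
  rw [expand_atkinU, classPart_of_mem_of_ne hf hr, map_zero]

theorem atkinU_expand_mul (f g : LaurentSeries K) : atkinU m (expand m f * g) = f * atkinU m g := by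
  apply expand_injective m
  rw [expand_atkinU, classPart_mul (expand_mem_residueClass_zero dvd_rfl f), sub_zero, map_mul,
    expand_atkinU]

theorem atkinU_mul_eq_zero {r s : ZMod m} {f g : LaurentSeries K}
    (hf : f ∈ residueClass m r) (hg : g ∈ residueClass m s) (h : r + s ≠ 0) :
    atkinU m (f * g) = 0 :=
  atkinU_of_mem_of_ne (mul_mem_residueClass hf hg) h

theorem atkinU_one : atkinU m (1 : LaurentSeries K) = 1 := by
  apply expand_injective m
  rw [expand_atkinU_of_mem one_mem_residueClass, map_one]

end AtkinOperator

end Laurent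

/-! ### Euler products -/

section EulerProduct

variable {K : Type*} [CommRing K]

/-- The partial product `∏_{1 ≤ k ≤ n} (1 - q ^ (b k))` of `J b`. -/
def eulerProd (b n : ℕ) : LaurentSeries K :=
  ∏ k ∈ Finset.range n, (1 - qPow (b * (k + 1)))

theorem eulerProd_zero (b : ℕ) : (eulerProd b 0 : LaurentSeries K) = 1 :=
  Finset.prod_range_zero _

theorem eulerProd_succ (b n : ℕ) :
    (eulerProd b (n + 1) : LaurentSeries K) = eulerProd b n * (1 - qPow (b * (n + 1))) :=
  Finset.prod_range_succ _ _

theorem one_sub_qPow_mem_orderGE_zero {m : ℤ} (hm : 0 ≤ m) :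
    (1 - qPow m : LaurentSeries K) ∈ orderGE 0 :=
  sub_mem one_mem_orderGE_zero (qPow_mem_orderGE hm)

theorem eulerProd_mem_orderGE_zero (b n : ℕ) : (eulerProd b n : LaurentSeries K) ∈ orderGE 0 :=
  prod_mem_orderGE_zero fun _ _ => one_sub_qPow_mem_orderGE_zero (by positivity)

theorem eqUpTo_eulerProd (b : ℕ) [NeZero b] {M n m : ℕ} (hM : M ≤ n + 1) (hnm : n ≤ m) :
    EqUpTo M (eulerProd b n : LaurentSeries K) (eulerProd b m) := by
  induction m, hnm using Nat.le_induction with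
  | base => exact EqUpTo.refl (eulerProd_mem_orderGE_zero b n)
  | succ m hnm ih =>
    refine ih.trans ⟨eulerProd_mem_orderGE_zero b m, eulerProd_mem_orderGE_zero b (m + 1), ?_⟩
    have hb : 1 ≤ b := NeZero.one_le
    have hq : (qPow (b * (m + 1)) : LaurentSeries K) ∈ orderGE M :=
      qPow_mem_orderGE (by norm_cast; nlinarith)
    rw [eulerProd_succ, mul_sub, mul_one, sub_sub_cancel]
    simpa using mul_mem_orderGE (eulerProd_mem_orderGE_zero b m) hq

theorem expand_eulerProd (b : ℕ) [NeZero b] (c n : ℕ) :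
    expand b (eulerProd c n : LaurentSeries K) = eulerProd (b * c) n := by
  rw [eulerProd, map_prod]
  refine Finset.prod_congr rfl fun k _ => ?_
  rw [map_sub, map_one, expand_qPow, Nat.cast_mul, mul_assoc]

/-- `J b` as a Laurent series. -/
def eulerJ (b : ℕ) : LaurentSeries ℤ :=
  HahnSeries.ofPowerSeries ℤ ℤ (J b)

theorem eulerJ_mem_orderGE_zero (b : ℕ) : eulerJ b ∈ orderGE 0 :=
  ofPowerSeries_mem_orderGE_zero (J b)

theorem ofPowerSeries_prod_one_sub_X_pow (b n : ℕ) :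
    HahnSeries.ofPowerSeries ℤ K
      (∏ k ∈ Finset.range n, (1 - (PowerSeries.X : PowerSeries K) ^ (b * (k + 1)))) =
    eulerProd b n := by
  rw [map_prod]
  refine Finset.prod_congr rfl fun k _ => ?_
  rw [map_sub, map_one, HahnSeries.ofPowerSeries_X_pow, qPow, Nat.cast_mul, Nat.cast_succ]

theorem eqUpTo_eulerJ (b : ℕ) [NeZero b] {M n : ℕ} (h : M ≤ n) :
    EqUpTo M (eulerJ b) (eulerProd b n) := by
  refine ⟨eulerJ_mem_orderGE_zero b, eulerProd_mem_orderGE_zero b n, fun i hi => ?_⟩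
  obtain hneg | hnonneg := lt_or_ge i 0
  · exact sub_mem (eulerJ_mem_orderGE_zero b) (eulerProd_mem_orderGE_zero b n) i hneg
  lift i to ℕ using hnonneg
  have hJ : (eulerJ b).coeff i = (eulerProd b (i + 1) : LaurentSeries ℤ).coeff i := by
    rw [← ofPowerSeries_prod_one_sub_X_pow, eulerJ, HahnSeries.ofPowerSeries_apply_coeff,
      HahnSeries.ofPowerSeries_apply_coeff, J, PowerSeries.coeff_mk]
  rw [HahnSeries.coeff_sub, hJ, ← HahnSeries.coeff_sub]
  exact (eqUpTo_eulerProd b (M := i + 1) (by omega) (by omega)).sub_mem i (by push_cast; omega)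

theorem expand_eulerJ (b : ℕ) [NeZero b] (c : ℕ) [NeZero c] :
    expand b (eulerJ c) = eulerJ (b * c) := by
  refine EqUpTo.eq_of_forall fun M => ?_
  have h := (eqUpTo_eulerJ c (le_refl M)).expand b
  rw [expand_eulerProd] at h
  exact h.trans (eqUpTo_eulerJ (b * c) le_rfl).symm

theorem isUnit_J (b : ℕ) [NeZero b] : IsUnit (J b) := by
  rw [PowerSeries.isUnit_iff_constantCoeff, ← PowerSeries.coeff_zero_eq_constantCoeff_apply, J,
    PowerSeries.coeff_mk]
  simp [NeZero.ne b]

/-- `J b` as a unit of the ring of Laurent series. -/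
def eulerJUnit (b : ℕ) [NeZero b] : (LaurentSeries ℤ)ˣ :=
  Units.map (HahnSeries.ofPowerSeries ℤ ℤ) (isUnit_J b).unit

theorem val_inv_eulerJUnit_mem_orderGE_zero (b : ℕ) [NeZero b] :
    ((eulerJUnit b)⁻¹ : (LaurentSeries ℤ)ˣ).val ∈ orderGE 0 :=
  ofPowerSeries_mem_orderGE_zero _

end EulerProduct

/-! ### A finite form of the theta product -/

section FiniteTheta

/-- The sign `(-1) ^ k`. -/
def altSign (k : ℤ) : ℤ := k.negOnePow

theorem altSign_zero : altSign 0 = 1 := by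
  simp [altSign]

theorem altSign_succ (k : ℤ) : altSign (k + 1) = -altSign k := by
  simp [altSign, Int.negOnePow_succ]

variable (b : ℕ)

/-- The inverse of `eulerProd b m`, extended by zero to negative `m` so that the recurrence
`invEulerProd_sub_one` holds for all integers `m`. -/
def invEulerProd (m : ℤ) : LaurentSeries ℤ :=
  if 0 ≤ m then
    HahnSeries.ofPowerSeries ℤ ℤ (PowerSeries.invOfUnit
      (∏ k ∈ Finset.range m.toNat, (1 - (PowerSeries.X : PowerSeries ℤ) ^ (b * (k + 1)))) 1)
  else 0

theorem invEulerProd_mem_orderGE_zero (m : ℤ) : invEulerProd b m ∈ orderGE 0 := by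
  rw [invEulerProd]
  split_ifs
  · exact ofPowerSeries_mem_orderGE_zero _
  · exact zero_mem _

theorem invEulerProd_of_neg {m : ℤ} (h : m < 0) : invEulerProd b m = 0 :=
  if_neg h.not_ge

variable (δ : ℕ) (e : ℤ → ℤ)

/-- The `k`-th summand of a finite form of `∑ₖ (-1) ^ k q ^ (e k)`: the monomial is weighted by
the inverse `q`-factorials of a Gaussian binomial coefficient. -/
def finiteThetaTerm (n : ℕ) (k : ℤ) : LaurentSeries ℤ :=
  (altSign k : LaurentSeries ℤ) * qPow (e k) * invEulerProd b (n - k) * invEulerProd b (n + δ + k)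

theorem finiteThetaTerm_eq_zero {n : ℕ} {k : ℤ} (hk : n < k ∨ k < -(n + δ)) :
    finiteThetaTerm b δ e n k = 0 := by
  rw [finiteThetaTerm]
  obtain hk | hk := hk
  · rw [invEulerProd_of_neg b (m := n - k) (by omega), mul_zero, zero_mul]
  · rw [invEulerProd_of_neg b (m := n + δ + k) (by omega), mul_zero]

theorem finite_support_mul_finiteThetaTerm (n : ℕ) (t : ℤ) (g : ℤ → LaurentSeries ℤ) :
    (Function.support fun k => g k * finiteThetaTerm b δ e n (k + t)).Finite := by
  refine (Set.finite_Icc (-(n + δ) - t : ℤ) (n - t)).subset fun k hk => ?_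
  by_contra hk'
  refine hk (mul_eq_zero_of_right _ (finiteThetaTerm_eq_zero b δ e ?_))
  rw [Set.mem_Icc] at hk'
  omega

theorem finsum_mul_finiteThetaTerm_add (n : ℕ) (t : ℤ) (g : ℤ → LaurentSeries ℤ) :
    ∑ᶠ k, g k * finiteThetaTerm b δ e n (k + t) =
      ∑ᶠ k, g (k - t) * finiteThetaTerm b δ e n k := by
  rw [← finsum_comp_equiv (Equiv.addRight t)
    (f := fun k => g (k - t) * finiteThetaTerm b δ e n k)]
  simp

/-- The finite form of `∑ₖ (-1) ^ k h(k) q ^ (e k)`. -/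
def finiteTheta (h : ℤ → ℤ) (n : ℕ) : LaurentSeries ℤ :=
  ∑ᶠ k : ℤ, (h k : LaurentSeries ℤ) * finiteThetaTerm b δ e n k

/-- The partial product `∏_{0 ≤ j < n} (1 - q ^ (1 + b j))`. -/
def oddProd (n : ℕ) : LaurentSeries ℤ :=
  ∏ j ∈ Finset.range n, (1 - qPow (1 + b * j))

theorem oddProd_succ (n : ℕ) : oddProd b (n + 1) = oddProd b n * (1 - qPow (1 + b * n)) :=
  Finset.prod_range_succ _ _

theorem oddProd_mem_orderGE_zero (n : ℕ) : oddProd b n ∈ orderGE 0 :=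
  prod_mem_orderGE_zero fun _ _ => one_sub_qPow_mem_orderGE_zero (by positivity)

variable [NeZero b]

theorem eulerProd_mul_invEulerProd (n : ℕ) : eulerProd b n * invEulerProd b n = 1 := by
  rw [invEulerProd, if_pos n.cast_nonneg, Int.toNat_natCast, ← ofPowerSeries_prod_one_sub_X_pow,
    ← map_mul, PowerSeries.mul_invOfUnit, map_one]
  simp [map_prod, NeZero.ne b]

theorem invEulerProd_zero : invEulerProd b 0 = 1 := by
  simpa [eulerProd_zero] using eulerProd_mul_invEulerProd b 0

theorem invEulerProd_sub_one (m : ℤ) :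
    invEulerProd b (m - 1) = (1 - qPow (b * m)) * invEulerProd b m := by
  obtain hneg | rfl | hpos := lt_trichotomy m 0
  · rw [invEulerProd_of_neg b hneg, invEulerProd_of_neg b (by omega), mul_zero]
  · rw [invEulerProd_of_neg b (by omega), mul_zero, qPow_zero, sub_self, zero_mul]
  · obtain ⟨n, rfl⟩ : ∃ n : ℕ, m = n + 1 := ⟨(m - 1).toNat, by omega⟩
    have hn := eulerProd_mul_invEulerProd b n
    have hsucc := eulerProd_mul_invEulerProd b (n + 1)
    rw [eulerProd_succ, Nat.cast_succ] at hsucc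
    rw [add_sub_cancel_right]
    linear_combination (-invEulerProd b n) * hsucc +
      (1 - qPow (b * (n + 1))) * invEulerProd b (n + 1) * hn

theorem eqUpTo_eulerJ_mul_invEulerProd {M : ℕ} {m : ℤ} (h : M ≤ m) :
    EqUpTo M (eulerJ b * invEulerProd b m) 1 := by
  lift m to ℕ using (by omega)
  rw [← eulerProd_mul_invEulerProd b m]
  exact (eqUpTo_eulerJ b (by exact_mod_cast h)).mul
    (EqUpTo.refl (invEulerProd_mem_orderGE_zero b m))

variable {b δ e}

theorem finiteThetaTerm_succ (hb : b * (1 + δ) = 2) (he : ∀ k, e (k + 1) = e k + 1 + b * k)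
    (n : ℕ) (k : ℤ) :
    (1 - qPow (1 + b * n) ^ 2) * (1 - qPow (b * (2 * n + 2 + δ))) *
        finiteThetaTerm b δ e (n + 1) k =
      (1 + qPow (1 + b * n) ^ 2) * finiteThetaTerm b δ e n k - qPow (1 + b * n) *
        (finiteThetaTerm b δ e n (k - 1) + finiteThetaTerm b δ e n (k + 1)) := by
  have hb' : (b : ℤ) * (1 + δ) = 2 := by exact_mod_cast hb
  have he' := he (k - 1)
  rw [sub_add_cancel] at he'
  have hsign := altSign_succ (k - 1)
  rw [sub_add_cancel] at hsign
  have hr₁ := invEulerProd_sub_one b (n + 1 - k)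
  have hr₂ := invEulerProd_sub_one b (n - k)
  have hs₁ := invEulerProd_sub_one b (n + 1 + δ + k)
  have hs₂ := invEulerProd_sub_one b (n + δ + k)
  rw [show (n + 1 - k - 1 : ℤ) = n - k by ring] at hr₁
  rw [show (n + 1 + δ + k - 1 : ℤ) = n + δ + k by ring] at hs₁
  have hleft : (qPow (1 + b * n) * qPow (e (k - 1)) : LaurentSeries ℤ) =
      qPow (e k) * qPow (b * (n + 1 - k)) := qPow_mul_qPow_eq (by rw [he']; ring)
  have hright : (qPow (1 + b * n) * qPow (e (k + 1)) : LaurentSeries ℤ) =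
      qPow (e k) * qPow (b * (n + 1 + δ + k)) :=
    qPow_mul_qPow_eq (by linear_combination he k - hb')
  have hsq : (qPow (1 + b * n) * qPow (1 + b * n) : LaurentSeries ℤ) =
      qPow (b * (n + 1 - k)) * qPow (b * (n + δ + k)) :=
    qPow_mul_qPow_eq (by linear_combination -hb')
  have hcross : (qPow (b * (n - k)) * qPow (b * (n + 1 + δ + k)) : LaurentSeries ℤ) =
      qPow (b * (n + 1 - k)) * qPow (b * (n + δ + k)) := qPow_mul_qPow_eq (by ring)
  have hprod : (qPow (b * (2 * n + 2 + δ)) : LaurentSeries ℤ) =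
      qPow (b * (n + 1 - k)) * qPow (b * (n + 1 + δ + k)) := by
    rw [qPow_mul_qPow]
    ring_nf
  simp only [finiteThetaTerm, Nat.cast_succ, altSign_succ, hsign, Int.cast_neg]
  rw [show (n - (k - 1) : ℤ) = n + 1 - k by ring, show (n - (k + 1) : ℤ) = n - k - 1 by ring,
    show (n + δ + (k - 1) : ℤ) = n + δ + k - 1 by ring,
    show (n + δ + (k + 1) : ℤ) = n + 1 + δ + k by ring, hr₂, hs₂, hr₁, hs₁, hprod]
  generalize invEulerProd b (n + 1 - k) = r, invEulerProd b (n + 1 + δ + k) = s at *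
  grind

variable {h : ℤ → ℤ}

theorem finiteTheta_succ (hb : b * (1 + δ) = 2) (he : ∀ k, e (k + 1) = e k + 1 + b * k)
    (hh : ∀ k, h (k + 1) + h (k - 1) = 2 * h k) (n : ℕ) :
    (1 - qPow (1 + b * n) ^ 2) * (1 - qPow (b * (2 * n + 2 + δ))) * finiteTheta b δ e h (n + 1) =
      (1 - qPow (1 + b * n)) ^ 2 * finiteTheta b δ e h n := by
  have hfin := finite_support_mul_finiteThetaTerm b δ e n
  have hfin₀ := finite_support_mul_finiteThetaTerm b δ e n 0
  have hfin₁ := finite_support_mul_finiteThetaTerm b δ e (n + 1) 0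
  simp only [add_zero] at hfin₀ hfin₁
  have hsum : ∀ f g : ℤ → LaurentSeries ℤ, (Function.support f).Finite →
      (Function.support g).Finite → (Function.support fun k => f k + g k).Finite :=
    fun f g hf hg => (hf.union hg).subset (Function.support_add f g)
  set Q := (qPow (1 + b * n) : LaurentSeries ℤ)
  have hterm (k : ℤ) : (1 - Q ^ 2) * (1 - qPow (b * (2 * n + 2 + δ))) *
        ((h k : LaurentSeries ℤ) * finiteThetaTerm b δ e (n + 1) k) =
      (1 + Q ^ 2) * (h k : LaurentSeries ℤ) * finiteThetaTerm b δ e n k -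
        (Q * (h k : LaurentSeries ℤ) * finiteThetaTerm b δ e n (k + -1) +
          Q * (h k : LaurentSeries ℤ) * finiteThetaTerm b δ e n (k + 1)) := by
    rw [← sub_eq_add_neg]
    linear_combination (h k : LaurentSeries ℤ) * finiteThetaTerm_succ hb he n k
  rw [finiteTheta, mul_finsum' _ _ (hfin₁ _), finsum_congr hterm,
    finsum_sub_distrib (hfin₀ _) (hsum _ _ (hfin (-1) _) (hfin 1 _)),
    finsum_add_distrib (hfin (-1) _) (hfin 1 _), finsum_mul_finiteThetaTerm_add,
    finsum_mul_finiteThetaTerm_add, ← finsum_add_distrib (hfin₀ _) (hfin₀ _),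
    ← finsum_sub_distrib (hfin₀ _) (hsum _ _ (hfin₀ _) (hfin₀ _)), finiteTheta,
    mul_finsum' _ _ (hfin₀ _)]
  refine finsum_congr fun k => ?_
  have hk : ((h (k + 1) + h (k - 1) : ℤ) : LaurentSeries ℤ) = (2 * h k : ℤ) := by rw [hh k]
  push_cast at hk
  rw [sub_neg_eq_add]
  linear_combination (-Q * finiteThetaTerm b δ e n k) * hk

theorem eulerProd_mul_finiteTheta (hb : b * (1 + δ) = 2)
    (he : ∀ k, e (k + 1) = e k + 1 + b * k) (hh : ∀ k, h (k + 1) + h (k - 1) = 2 * h k) (n : ℕ) :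
    eulerProd b (2 * n + δ) * finiteTheta b δ e h n =
      eulerProd b δ * finiteTheta b δ e h 0 * oddProd b n ^ 2 := by
  have hb' : (b : ℤ) * (1 + δ) = 2 := by exact_mod_cast hb
  induction n with
  | zero => simp [oddProd]
  | succ n ih =>
    have hsq : (qPow (1 + b * n) ^ 2 : LaurentSeries ℤ) = qPow (b * (2 * n + δ + 1)) := by
      rw [qPow_pow]
      congr 1
      push_cast
      linear_combination -hb'
    have hrec := finiteTheta_succ hb he hh n
    rw [hsq] at hrec
    rw [oddProd_succ, mul_pow, ← mul_assoc, ← ih, show 2 * (n + 1) + δ = 2 * n + δ + 1 + 1 by ring,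
      eulerProd_succ, eulerProd_succ]
    push_cast
    rw [show (2 * n + δ + 1 + 1 : ℤ) = 2 * n + 2 + δ by ring]
    linear_combination eulerProd b (2 * n + δ) * hrec

end FiniteTheta

/-! ### Theta series -/

section ThetaSeries

/-- The exponents `e k` are nonnegative and grow at least linearly in `|k|`. -/
structure HasLinearGrowth (e : ℤ → ℤ) : Prop where
  nonneg : ∀ k, 0 ≤ e k
  abs_le_add_one : ∀ k, |k| ≤ e k + 1

/-- The series `∑ₖ h(k) q ^ (e k)`, for exponents of linear growth. -/
def thetaSeries (e h : ℤ → ℤ) : LaurentSeries ℤ :=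
  HahnSeries.ofPowerSeries ℤ ℤ (PowerSeries.mk fun n => ∑ᶠ k ∈ {k | e k = n}, h k)

theorem thetaSeries_mem_orderGE_zero (e h : ℤ → ℤ) : thetaSeries e h ∈ orderGE 0 :=
  ofPowerSeries_mem_orderGE_zero _

variable {e : ℤ → ℤ}

theorem HasLinearGrowth.coeff_thetaSeries (he : HasLinearGrowth e) (h : ℤ → ℤ) (n : ℤ) :
    (thetaSeries e h).coeff n = ∑ᶠ k ∈ {k | e k = n}, h k := by
  obtain hneg | hnonneg := lt_or_ge n 0
  · have hempty : {k | e k = n} = ∅ :=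
      Set.eq_empty_of_forall_notMem fun k (hk : e k = n) => by
        have := he.nonneg k
        omega
    rw [thetaSeries_mem_orderGE_zero e h n hneg, hempty, finsum_mem_empty]
  · lift n to ℕ using hnonneg
    rw [thetaSeries, HahnSeries.ofPowerSeries_apply_coeff, PowerSeries.coeff_mk]

theorem HasLinearGrowth.eqUpTo_thetaSeries (he : HasLinearGrowth e) (h : ℤ → ℤ) {M : ℕ}
    {s : Finset ℤ} (hs : ∀ k, e k < M → k ∈ s) :
    EqUpTo M (thetaSeries e h) (∑ k ∈ s, (h k : LaurentSeries ℤ) * qPow (e k)) := by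
  refine ⟨thetaSeries_mem_orderGE_zero e h, sum_mem fun k _ => ?_, fun i hi => ?_⟩
  · rw [← zsmul_eq_mul]
    exact zsmul_mem (qPow_mem_orderGE (he.nonneg k)) _
  · rw [HahnSeries.coeff_sub, he.coeff_thetaSeries, HahnSeries.coeff_sum, sub_eq_zero,
      finsum_mem_eq_sum_of_inter_support_eq (t := s.filter (e · = i)) _ (by grind),
      Finset.sum_filter]
    refine Finset.sum_congr rfl fun k _ => ?_
    simp [coeff_intCast_mul, coeff_qPow, eq_comm]

end ThetaSeries

section ThetaLimit

variable {b δ : ℕ} [NeZero b] {e h : ℤ → ℤ}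

theorem eqUpTo_eulerJ_mul_eulerProd_mul_invEulerProd {M n : ℕ} (hn : M ≤ n) {m₁ m₂ : ℤ}
    (hm₁ : M ≤ m₁) (hm₂ : M ≤ m₂) :
    EqUpTo M (eulerJ b * eulerProd b n * invEulerProd b m₁ * invEulerProd b m₂) 1 := by
  have hprod := ((EqUpTo.refl (eulerJ_mem_orderGE_zero b)).mul (eqUpTo_eulerJ b hn).symm).mul
    (EqUpTo.refl (mul_mem_orderGE_zero (invEulerProd_mem_orderGE_zero b m₁)
      (invEulerProd_mem_orderGE_zero b m₂)))
  rw [← mul_assoc] at hprod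
  refine hprod.trans ?_
  convert (eqUpTo_eulerJ_mul_invEulerProd b hm₁).mul (eqUpTo_eulerJ_mul_invEulerProd b hm₂) using 1
  · ring
  · rw [mul_one]

theorem HasLinearGrowth.eqUpTo_finiteThetaTerm (he : HasLinearGrowth e) (h : ℤ → ℤ) (M : ℕ)
    (k : ℤ) :
    EqUpTo M (((h k * altSign k : ℤ) : LaurentSeries ℤ) * qPow (e k))
      (eulerJ b * (eulerProd b (2 * (2 * M) + δ) *
        ((h k : LaurentSeries ℤ) * finiteThetaTerm b δ e (2 * M) k))) := by
  set w := ((h k * altSign k : ℤ) : LaurentSeries ℤ) * qPow (e k) with hw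
  set r := eulerJ b * eulerProd b (2 * (2 * M) + δ) * invEulerProd b ((2 * M : ℕ) - k) *
    invEulerProd b ((2 * M : ℕ) + δ + k) with hr
  have hwr : eulerJ b * (eulerProd b (2 * (2 * M) + δ) *
      ((h k : LaurentSeries ℤ) * finiteThetaTerm b δ e (2 * M) k)) = w * r := by
    rw [finiteThetaTerm, hw, hr, Int.cast_mul]
    ring
  have hw_mem : w ∈ orderGE (e k) := by
    rw [hw, ← zsmul_eq_mul]
    exact zsmul_mem (qPow_mem_orderGE le_rfl) _
  have hw_mem₀ := orderGE_mono (he.nonneg k) hw_mem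
  rw [hwr]
  by_cases hk : |k| ≤ M
  · have hk' := abs_le.1 hk
    have hr_one : EqUpTo M r 1 := eqUpTo_eulerJ_mul_eulerProd_mul_invEulerProd (by omega)
      (by push_cast; omega) (by push_cast; omega)
    simpa using (EqUpTo.refl hw_mem₀).mul hr_one.symm
  · have hM : (M : ℤ) ≤ e k := by
      have := he.abs_le_add_one k
      omega
    have hr_mem : r ∈ orderGE 0 := mul_mem_orderGE_zero (mul_mem_orderGE_zero
      (mul_mem_orderGE_zero (eulerJ_mem_orderGE_zero b) (eulerProd_mem_orderGE_zero b _))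
      (invEulerProd_mem_orderGE_zero b _)) (invEulerProd_mem_orderGE_zero b _)
    have hwr_mem : w * r ∈ orderGE (e k) := by simpa using mul_mem_orderGE hw_mem hr_mem
    exact ⟨hw_mem₀, orderGE_mono (he.nonneg k) hwr_mem,
      orderGE_mono hM (sub_mem hw_mem hwr_mem)⟩

theorem HasLinearGrowth.eqUpTo_thetaSeries_oddProd (hG : HasLinearGrowth e)
    (hb : b * (1 + δ) = 2) (he : ∀ k, e (k + 1) = e k + 1 + b * k)
    (hh : ∀ k, h (k + 1) + h (k - 1) = 2 * h k) (M : ℕ) :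
    EqUpTo M (thetaSeries e fun k => h k * altSign k)
      (eulerJ b * (eulerProd b δ * finiteTheta b δ e h 0 * oddProd b (2 * M) ^ 2)) := by
  have hδ : δ ≤ 1 := by nlinarith [NeZero.one_le (n := b)]
  set s := Finset.Icc (-(2 * M + 1 : ℤ)) (2 * M + 1) with hs
  have hsupport : (Function.support fun k =>
      (h k : LaurentSeries ℤ) * finiteThetaTerm b δ e (2 * M) k) ⊆ s := fun k hk => by
    by_contra hks
    refine hk (mul_eq_zero_of_right _ (finiteThetaTerm_eq_zero b δ e ?_))
    rw [hs, Finset.coe_Icc, Set.mem_Icc] at hks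
    push_cast
    omega
  rw [← eulerProd_mul_finiteTheta hb he hh, finiteTheta,
    finsum_eq_sum_of_support_subset _ hsupport, Finset.mul_sum, Finset.mul_sum]
  refine (hG.eqUpTo_thetaSeries _ fun k hk => ?_).trans
    (EqUpTo.sum fun k _ => hG.eqUpTo_finiteThetaTerm h M k)
  have := abs_le.1 (hG.abs_le_add_one k)
  rw [hs, Finset.mem_Icc]
  omega

theorem oddProd_two_mul_eulerProd (n : ℕ) : oddProd 2 n * eulerProd 2 n = eulerProd 1 (2 * n) := by
  induction n with
  | zero => simp [oddProd, eulerProd]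
  | succ n ih =>
    rw [oddProd_succ, mul_add, mul_one, eulerProd_succ, eulerProd_succ, eulerProd_succ, ← ih]
    push_cast
    ring_nf

theorem oddProd_one (n : ℕ) : oddProd 1 n = eulerProd 1 n :=
  Finset.prod_congr rfl fun k _ => by rw [Nat.cast_one, one_mul, one_mul, add_comm]

theorem hasLinearGrowth_sq : HasLinearGrowth fun k => k ^ 2 :=
  ⟨fun k => sq_nonneg k, fun k => abs_le.2 ⟨by nlinarith, by nlinarith⟩⟩

theorem finiteTheta_sq_zero : finiteTheta 2 0 (fun k => k ^ 2) (fun _ => 1) 0 = 1 := by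
  rw [finiteTheta, finsum_eq_single _ 0]
  · simp [finiteThetaTerm, altSign_zero, qPow_zero, invEulerProd_zero]
  · intro k hk
    rw [finiteThetaTerm_eq_zero, mul_zero]
    push_cast
    omega

/-- Gauss's theta series `∑ₖ (-1) ^ k q ^ (k ^ 2)`. -/
def gaussTheta : LaurentSeries ℤ := thetaSeries (fun k => k ^ 2) altSign

theorem gaussTheta_mul_eulerJ_two : gaussTheta * eulerJ 2 = eulerJ 1 ^ 2 := by
  refine EqUpTo.eq_of_forall fun M => ?_
  have htheta : EqUpTo M gaussTheta (eulerJ 2 * oddProd 2 (2 * M) ^ 2) := by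
    simpa [finiteTheta_sq_zero, eulerProd_zero, gaussTheta] using
      hasLinearGrowth_sq.eqUpTo_thetaSeries_oddProd (b := 2) (δ := 0) (h := fun _ => 1) rfl
        (fun k => by push_cast; ring) (fun _ => by norm_num) M
  have hJ : EqUpTo M (oddProd 2 (2 * M) * eulerJ 2) (eulerJ 1) := by
    have hodd := (EqUpTo.refl (oddProd_mem_orderGE_zero 2 (2 * M))).mul
      (eqUpTo_eulerJ 2 (show M ≤ 2 * M by omega))
    rw [oddProd_two_mul_eulerProd] at hodd
    exact hodd.trans (eqUpTo_eulerJ 1 (by omega)).symm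
  refine (htheta.mul (EqUpTo.refl (eulerJ_mem_orderGE_zero 2))).trans ?_
  convert hJ.pow 2 using 1
  ring

/-- The triangular numbers `k (k + 1) / 2`; the division is exact. -/
def triangular (k : ℤ) : ℤ := k * (k + 1) / 2

theorem two_mul_triangular (k : ℤ) : 2 * triangular k = k * (k + 1) :=
  Int.mul_ediv_cancel' (Int.even_mul_succ_self k).two_dvd

theorem hasLinearGrowth_triangular : HasLinearGrowth triangular := by
  refine ⟨fun k => ?_, fun k => abs_le.2 ⟨?_, ?_⟩⟩ <;> have h := two_mul_triangular k
  · obtain hk | hk := le_or_gt 0 k <;> nlinarith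
  · nlinarith [sq_nonneg (k + 1), sq_nonneg (k + 2)]
  · nlinarith [sq_nonneg (2 * k - 1)]

theorem eulerProd_one_mul_finiteTheta_triangular_zero :
    eulerProd 1 1 * finiteTheta 1 1 triangular (fun k => 2 * k + 1) 0 = 2 := by
  have hinv := eulerProd_mul_invEulerProd 1 1
  have hsign : altSign (-1) = -1 := by simp [altSign]
  rw [finiteTheta, finsum_eq_sum_of_support_subset (s := {0, -1})]
  · rw [Finset.sum_pair (by norm_num)]
    simp only [finiteThetaTerm, altSign_zero, hsign, triangular]
    norm_num [qPow_zero, invEulerProd_zero]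
    push_cast at hinv
    linear_combination 2 * hinv
  · intro k hk
    by_contra hk'
    refine hk (mul_eq_zero_of_right _ (finiteThetaTerm_eq_zero 1 1 triangular ?_))
    simp only [Finset.coe_insert, Finset.coe_singleton, Set.mem_insert_iff,
      Set.mem_singleton_iff] at hk'
    push_cast
    omega

theorem two_mul_eulerJ_one_cubed :
    2 * eulerJ 1 ^ 3 = thetaSeries triangular fun k => (2 * k + 1) * altSign k := by
  refine EqUpTo.eq_of_forall fun M => ?_
  have htheta := hasLinearGrowth_triangular.eqUpTo_thetaSeries_oddProd (b := 1) (δ := 1)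
    (h := fun k => 2 * k + 1) rfl
    (fun k => by push_cast; nlinarith [two_mul_triangular k, two_mul_triangular (k + 1)])
    (fun k => by ring) M
  rw [eulerProd_one_mul_finiteTheta_triangular_zero, oddProd_one] at htheta
  refine EqUpTo.symm (htheta.trans ?_)
  have hJ := (eqUpTo_eulerJ 1 (show M ≤ 2 * M by omega)).symm.pow 2
  have htwo : (2 : LaurentSeries ℤ) ∈ orderGE 0 := by
    rw [← one_add_one_eq_two]
    exact add_mem one_mem_orderGE_zero one_mem_orderGE_zero
  convert (EqUpTo.refl (mul_mem_orderGE_zero htwo (eulerJ_mem_orderGE_zero 1))).mul hJ using 1 <;>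
    ring

end ThetaLimit

section ThetaDissection

variable {m : ℕ} {e : ℤ → ℤ}

theorem HasLinearGrowth.coeff_expand_thetaSeries [NeZero m] (he : HasLinearGrowth e)
    (h : ℤ → ℤ) (n : ℤ) :
    (expand m (thetaSeries e h)).coeff n = ∑ᶠ k ∈ {k | m * e k = n}, h k := by
  by_cases hdvd : (m : ℤ) ∣ n
  · obtain ⟨l, rfl⟩ := hdvd
    have hm : (m : ℤ) ≠ 0 := mod_cast NeZero.ne m
    simp only [coeff_expand_mul, he.coeff_thetaSeries, mul_right_inj' hm]
  · have hempty : {k | m * e k = n} = ∅ :=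
      Set.eq_empty_of_forall_notMem fun k hk => hdvd ⟨e k, Eq.symm hk⟩
    rw [coeff_expand_of_not_dvd m hdvd, hempty, finsum_mem_empty]

theorem HasLinearGrowth.classPart_thetaSeries [NeZero m] (he : HasLinearGrowth e) {h : ℤ → ℤ}
    {s t c : ℤ}
    (hclass : ∀ k, (e k : ZMod m) = t → (k : ZMod m) = s)
    (he_shift : ∀ j, e (m * j + s) = (m ^ 2 : ℕ) * e j + t)
    (hh_shift : ∀ j, h (m * j + s) = c * h j) :
    classPart m t (thetaSeries e h) =
      (c : LaurentSeries ℤ) * (qPow t * expand (m ^ 2) (thetaSeries e h)) := by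
  have hm : (m : ℤ) ≠ 0 := mod_cast NeZero.ne m
  have hinj : Function.Injective fun j : ℤ => m * j + s :=
    (add_left_injective s).comp (mul_right_injective₀ hm)
  ext n
  rw [coeff_intCast_mul, coeff_qPow_mul, he.coeff_expand_thetaSeries]
  by_cases hn : (n : ZMod m) = t
  · have hpre : {k | e k = n} = (fun j => m * j + s) '' {j | (m ^ 2 : ℕ) * e j = n - t} := by
      ext k
      refine ⟨fun (hk : e k = n) => ?_, ?_⟩
      · obtain ⟨j, hj⟩ := (ZMod.intCast_eq_intCast_iff_dvd_sub s k m).1 (hclass k (hk ▸ hn)).symm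
        obtain rfl : k = m * j + s := by omega
        exact ⟨j, (eq_sub_of_add_eq (he_shift j).symm).trans (congrArg (· - t) hk), rfl⟩
      · rintro ⟨j, hj, rfl⟩
        exact (he_shift j).trans (eq_sub_iff_add_eq.1 hj)
    rw [coeff_classPart_of_eq hn, he.coeff_thetaSeries, hpre, finsum_mem_image hinj.injOn]
    simp only [hh_shift, Int.cast_id, ← smul_eq_mul c, smul_finsum]
  · have hempty : {j | (m ^ 2 : ℕ) * e j = n - t} = ∅ := by
      refine Set.eq_empty_of_forall_notMem fun j hj => hn ?_
      rw [eq_comm, ZMod.intCast_eq_intCast_iff_dvd_sub]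
      exact ⟨m * e j, by rw [← Set.mem_ofPred.1 hj]; push_cast; ring⟩
    rw [classPart_mem_residueClass _ _ n hn, hempty, finsum_mem_empty, mul_zero]

theorem HasLinearGrowth.classPart_thetaSeries_eq_zero (he : HasLinearGrowth e) (h : ℤ → ℤ)
    {t : ZMod m} (ht : ∀ k, (e k : ZMod m) ≠ t) : classPart m t (thetaSeries e h) = 0 := by
  ext n
  by_cases hn : (n : ZMod m) = t
  · have hempty : {k | e k = n} = ∅ :=
      Set.eq_empty_of_forall_notMem fun k (hk : e k = n) => ht k (hk ▸ hn)
    rw [coeff_classPart_of_eq hn, he.coeff_thetaSeries, hempty, finsum_mem_empty,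
      HahnSeries.coeff_zero]
  · exact classPart_mem_residueClass t _ n hn

theorem coeff_eulerJ_one (n : ℕ) :
    (eulerJ 1).coeff (n : ℤ) = (PowerSeries.pentagonalSeries ℤ).coeff n := by
  obtain ⟨s, hs⟩ :=
    Filter.eventually_atTop.1 (PowerSeries.coeff_prod_one_sub_X_pow_eventually_eq ℤ n)
  obtain ⟨N, hN⟩ := s.exists_nat_subset_range
  rw [← hs (Finset.range (N + n + 1)) (hN.trans (Finset.range_mono (by omega)))]
  have h := (eqUpTo_eulerJ 1 (show n + 1 ≤ N + n + 1 by omega)).sub_mem n (by push_cast; omega)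
  rw [HahnSeries.coeff_sub, sub_eq_zero, ← ofPowerSeries_prod_one_sub_X_pow,
    HahnSeries.ofPowerSeries_apply_coeff] at h
  simpa using h

theorem hasLinearGrowth_pentagonal : HasLinearGrowth fun k => (pentagonal k : ℤ) := by
  refine ⟨fun k => Int.natCast_nonneg _, fun k => abs_le.2 ⟨?_, ?_⟩⟩ <;>
    have h := two_mul_natCast_pentagonal k
  · nlinarith [sq_nonneg (2 * k + 1), sq_nonneg k]
  · nlinarith [sq_nonneg (2 * k - 1)]

theorem eulerJ_one_eq_thetaSeries :
    eulerJ 1 = thetaSeries (fun k => (pentagonal k : ℤ)) altSign := by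
  ext n
  rw [hasLinearGrowth_pentagonal.coeff_thetaSeries]
  by_cases hn : ∃ k, (pentagonal k : ℤ) = n
  · obtain ⟨k, rfl⟩ := hn
    have hsingle : {l : ℤ | (pentagonal l : ℤ) = pentagonal k} = {k} := by
      ext l
      rw [Set.mem_ofPred, Nat.cast_inj, pentagonal_inj, Set.mem_singleton_iff]
    rw [coeff_eulerJ_one, PowerSeries.coeff_pentagonalSeries_pentagonal, hsingle,
      finsum_mem_singleton]
    rfl
  · have hempty : {l : ℤ | (pentagonal l : ℤ) = n} = ∅ :=
      Set.eq_empty_of_forall_notMem fun k hk => hn ⟨k, hk⟩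
    rw [hempty, finsum_mem_empty]
    obtain hneg | hnonneg := lt_or_ge n 0
    · exact eulerJ_mem_orderGE_zero 1 n hneg
    · lift n to ℕ using hnonneg
      rw [coeff_eulerJ_one, PowerSeries.coeff_pentagonalSeries_eq_zero]
      rintro ⟨k, hk⟩
      exact hn ⟨k, by rw [hk]⟩

theorem altSign_seven_mul_add (m j : ℤ) : altSign (7 * m + j) = altSign j * altSign m := by
  rw [altSign, Int.negOnePow_add, show 7 * m = m + 2 * (3 * m) by ring, Int.negOnePow_add,
    Int.negOnePow_two_mul, mul_one, Units.val_mul, altSign, altSign, mul_comm]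

theorem natCast_pentagonal_zmod_seven (k : ℤ) :
    (((pentagonal k : ℕ) : ℤ) : ZMod 7) = 4 * (k * (3 * k - 1)) := by
  have h := congrArg (Int.cast : ℤ → ZMod 7) (two_mul_natCast_pentagonal k)
  push_cast at h ⊢
  rw [← h, ← mul_assoc, show (4 * 2 : ZMod 7) = 1 from rfl, one_mul]

theorem classPart_two_eulerJ_one : classPart 7 2 (eulerJ 1) = -(qPow 2 * eulerJ 49) := by
  have h := hasLinearGrowth_pentagonal.classPart_thetaSeries (m := 7) (h := altSign) (s := -1)
    (t := 2) (c := -1)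
    (fun k => by
      rw [natCast_pentagonal_zmod_seven]
      generalize (k : ZMod 7) = x
      revert x
      decide)
    (fun j => by
      have h₁ := two_mul_natCast_pentagonal j
      have h₂ := two_mul_natCast_pentagonal (7 * j + (-1))
      push_cast
      linarith)
    (fun j => by
      rw [Nat.cast_ofNat, altSign_seven_mul_add]
      simp [altSign])
  rw [← eulerJ_one_eq_thetaSeries, expand_eulerJ] at h
  simpa using h

theorem classPart_eulerJ_one_eq_zero {t : ZMod 7} (ht : t ∈ ({3, 4, 6} : Finset (ZMod 7))) :
    classPart 7 t (eulerJ 1) = 0 := by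
  rw [eulerJ_one_eq_thetaSeries]
  refine hasLinearGrowth_pentagonal.classPart_thetaSeries_eq_zero _ fun k => ?_
  rw [natCast_pentagonal_zmod_seven]
  generalize (k : ZMod 7) = x
  revert x t
  decide

theorem intCast_triangular_zmod_seven (k : ℤ) :
    (triangular k : ZMod 7) = 4 * (k * (k + 1)) := by
  have h := congrArg (Int.cast : ℤ → ZMod 7) (two_mul_triangular k)
  push_cast at h ⊢
  rw [← h, ← mul_assoc, show (4 * 2 : ZMod 7) = 1 from rfl, one_mul]

theorem two_mul_classPart_six_eulerJ_one_cubed :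
    2 * classPart 7 6 (eulerJ 1 ^ 3) = -(14 * (qPow 6 * eulerJ 49 ^ 3)) := by
  have h := hasLinearGrowth_triangular.classPart_thetaSeries (m := 7)
    (h := fun k => (2 * k + 1) * altSign k) (s := 3) (t := 6) (c := -7)
    (fun k => by
      rw [intCast_triangular_zmod_seven]
      generalize (k : ZMod 7) = x
      revert x
      decide)
    (fun j => by
      have h₁ := two_mul_triangular j
      have h₂ := two_mul_triangular (7 * j + 3)
      push_cast
      linarith)
    (fun j => by
      rw [Nat.cast_ofNat, altSign_seven_mul_add,
        show altSign 3 = -1 by simp [altSign, Int.negOnePow_odd 3 ⟨1, by norm_num⟩]]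
      ring)
  rw [← two_mul_eulerJ_one_cubed, map_mul (expand _), map_pow, expand_eulerJ, map_ofNat,
    two_mul (eulerJ 1 ^ 3), map_add, ← two_mul] at h
  push_cast at h
  linear_combination h

theorem classPart_zero_gaussTheta : classPart 7 0 gaussTheta = expand 49 gaussTheta := by
  have h := hasLinearGrowth_sq.classPart_thetaSeries (m := 7) (h := altSign) (s := 0) (t := 0)
    (c := 1)
    (fun k => by
      push_cast
      generalize (k : ZMod 7) = x
      revert x
      decide)
    (fun j => by push_cast; ring)
    (fun j => by rw [Nat.cast_ofNat, altSign_seven_mul_add, altSign_zero])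
  simpa [qPow_zero, gaussTheta] using h

theorem classPart_gaussTheta_eq_zero {t : ZMod 7} (ht : t ∈ ({3, 5, 6} : Finset (ZMod 7))) :
    classPart 7 t gaussTheta = 0 := by
  refine hasLinearGrowth_sq.classPart_thetaSeries_eq_zero _ fun k => ?_
  push_cast
  generalize (k : ZMod 7) = x
  revert x t
  decide

end ThetaDissection

/-! ### The dissection of `J₁ / J₄₉` -/

section ClassPart

variable {K : Type*} [CommRing K] {m : ℕ}

theorem classPart_mul_eq_sum [NeZero m] (r : ZMod m) (f g : LaurentSeries K) :
    classPart m r (f * g) = ∑ s, classPart m s f * classPart m (r - s) g := by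
  nth_rewrite 1 [← sum_classPart (m := m) f]
  rw [Finset.sum_mul, map_sum]
  exact Finset.sum_congr rfl fun s _ => classPart_mul (classPart_mem_residueClass s f) g

theorem classPart_expand [NeZero m] {b : ℕ} [NeZero b] (hb : IsUnit (b : ZMod m)) (r : ZMod m)
    (f : LaurentSeries K) : classPart m (b * r) (expand b f) = expand b (classPart m r f) := by
  have hmem (s : ZMod m) : expand b (classPart m s f) ∈ residueClass m (b * s) :=
    expand_mem_residueClass b (classPart_mem_residueClass s f)
  nth_rewrite 1 [← sum_classPart (m := m) f]
  rw [map_sum, map_sum, Finset.sum_eq_single r, classPart_of_mem (hmem r)]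
  · exact fun s _ hs => classPart_of_mem_of_ne (hmem s) (hb.mul_right_injective.ne hs)
  · exact fun h => absurd (Finset.mem_univ r) h

theorem hasLeadingTerm_classPart {f : LaurentSeries K} {M n : ℤ} (hf : f ∈ orderGE M)
    (hn : n < M + m) : HasLeadingTerm (classPart m n f) n (f.coeff n) := by
  refine ⟨fun i hi => ?_, coeff_classPart_of_eq rfl f⟩
  by_cases hclass : (i : ZMod m) = n
  · have hle := Int.le_of_dvd (by omega) ((ZMod.intCast_eq_intCast_iff_dvd_sub i n m).1 hclass)
    rw [coeff_classPart_of_eq hclass, hf i (by omega)]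
  · exact classPart_mem_residueClass _ f i hclass

instance [CharZero K] : CharZero (LaurentSeries K) :=
  charZero_of_injective_ringHom (HahnSeries.C_injective (Γ := ℤ) (R := K))

end ClassPart

section KleinCriterion

variable {R : Type*} [CommRing R] [IsDomain R] {a b c d e f : R}

theorem eq_zero_of_cyclic {p q r u v w : R} (hd : d ≠ 0) (he : e ≠ 0) (hf : f ≠ 0)
    (h₁ : w * p = f * u) (h₂ : u * q = d * v) (h₃ : v * r = e * w) (hne : p * q * r ≠ f * d * e) :
    u = 0 ∧ v = 0 ∧ w = 0 := by
  have hprod : u * v * w = 0 := by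
    by_contra hprod
    refine hne (mul_left_cancel₀ hprod ?_)
    linear_combination u * q * (v * r) * h₁ + f * u * (v * r) * h₂ + f * u * (d * v) * h₃
  have hu : u = 0 → v = 0 := fun h => by simpa [h, hd] using h₂.symm
  have hv : v = 0 → w = 0 := fun h => by simpa [h, he] using h₃.symm
  have hw : w = 0 → u = 0 := fun h => by simpa [h, hf] using h₁.symm
  simp only [mul_eq_zero] at hprod
  tauto

theorem KleinRelations.of_cyclic (hprod_left : a * b * c + 1 = 0) (hprod_right : d * e * f + 1 = 0)
    (hcycle₁ : (b * e + c + f) * (c * f - a) = f * (c * f + a + d))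
    (hcycle₂ : (c * f + a + d) * (a * d - b) = d * (a * d + b + e))
    (hcycle₃ : (a * d + b + e) * (b * e - c) = e * (b * e + c + f))
    (hne : (c * f - a) * (a * d - b) * (b * e - c) ≠ -1) : KleinRelations a b c d e f := by
  have hd : d ≠ 0 := by rintro rfl; simp at hprod_right
  have he : e ≠ 0 := by rintro rfl; simp at hprod_right
  have hf : f ≠ 0 := by rintro rfl; simp at hprod_right
  obtain ⟨hu, hv, hw⟩ := eq_zero_of_cyclic hd he hf hcycle₁ hcycle₂ hcycle₃ fun h =>
    hne (h.trans (by linear_combination hprod_right))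
  exact ⟨hprod_left, hprod_right, hu, hv, hw⟩

theorem KleinRelations.of_sq_relations {x y z : R} (htwo : (2 : R) ≠ 0)
    (hprod_left : a * b * c + 1 = 0) (hprod_right : d * e * f + 1 = 0)
    (h₁ : 2 * (a * c) + x - e * y = 0) (h₂ : 2 * (a * b) + y - f * z = 0)
    (h₄ : 2 * (b * c) + z - d * x = 0) (h₃ : c * c - 2 * a - d - e * z = 0)
    (h₆ : a * a - 2 * b - e - f * x = 0) (h₅ : b * b - 2 * c - f - d * y = 0)
    (hne : (c * f - a) * (a * d - b) * (b * e - c) ≠ -1) : KleinRelations a b c d e f := by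
  have hx : x = -(b * c * (e * f) + a * b * e + a * c) := by
    apply mul_left_cancel₀ htwo
    linear_combination h₁ + e * h₂ + e * f * h₄ + x * hprod_right
  have hy : y = -(c * a * (f * d) + b * c * f + b * a) := by
    apply mul_left_cancel₀ htwo
    linear_combination h₂ + f * h₄ + f * d * h₁ + y * hprod_right
  have hz : z = -(a * b * (d * e) + c * a * d + c * b) := by
    apply mul_left_cancel₀ htwo
    linear_combination h₄ + d * h₁ + d * e * h₂ + z * hprod_right
  subst hx hy hz
  refine .of_cyclic hprod_left hprod_right ?_ ?_ ?_ hne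
  · linear_combination f * h₃ - (a * b * e + c * a) * hprod_right
  · linear_combination d * h₆ - (b * c * f + a * b) * hprod_right
  · linear_combination e * h₅ - (c * a * d + b * c) * hprod_right

end KleinCriterion

section EulerRatio

/-- The substitution `q ↦ q ^ b` on the units of the ring of Laurent series. -/
def expandUnits {K : Type*} [CommRing K] (b : ℕ) [NeZero b] :
    (LaurentSeries K)ˣ →* (LaurentSeries K)ˣ :=
  Units.map (expand b : LaurentSeries K →+* LaurentSeries K).toMonoidHom

theorem expandUnits_eulerJUnit (b c : ℕ) [NeZero b] [NeZero c] :
    expandUnits b (eulerJUnit c) = eulerJUnit (b * c) :=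
  Units.ext (expand_eulerJ b c)

theorem expand_inv_eulerJUnit (b c : ℕ) [NeZero b] [NeZero c] :
    expand b ((eulerJUnit c)⁻¹ : (LaurentSeries ℤ)ˣ).val =
      ((eulerJUnit (b * c))⁻¹ : (LaurentSeries ℤ)ˣ).val := by
  rw [← expandUnits_eulerJUnit, ← map_inv]
  rfl

theorem eulerJ_mul_inv_eulerJUnit (b : ℕ) [NeZero b] :
    eulerJ b * ((eulerJUnit b)⁻¹ : (LaurentSeries ℤ)ˣ).val = 1 :=
  (eulerJUnit b).mul_inv

theorem eulerJ_mem_residueClass_zero {m b : ℕ} [NeZero b] (h : m ∣ b) :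
    eulerJ b ∈ residueClass m 0 := by
  have hJ := expand_mem_residueClass_zero h (eulerJ 1)
  simpa only [expand_eulerJ, mul_one] using hJ

theorem inv_eulerJUnit_mem_residueClass_zero {m b : ℕ} [NeZero b] (h : m ∣ b) :
    ((eulerJUnit b)⁻¹ : (LaurentSeries ℤ)ˣ).val ∈ residueClass m 0 := by
  have hJ := expand_mem_residueClass_zero h ((eulerJUnit 1)⁻¹ : (LaurentSeries ℤ)ˣ).val
  simpa only [expand_inv_eulerJUnit, mul_one] using hJ

theorem coeff_eulerJ_one_pentagonal (k : ℤ) : (eulerJ 1).coeff (pentagonal k) = altSign k := by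
  rw [coeff_eulerJ_one, PowerSeries.coeff_pentagonalSeries_pentagonal]
  rfl

/-- The monomial `q ^ n` as a unit of the ring of Laurent series. -/
def qPowUnit (n : ℤ) : (LaurentSeries ℤ)ˣ where
  val := qPow n
  inv := qPow (-n)
  val_inv := by rw [qPow_mul_qPow, add_neg_cancel, qPow_zero]
  inv_val := by rw [qPow_mul_qPow, neg_add_cancel, qPow_zero]

/-- The quotient `ξ = q⁻² J₁ / J₄₉`; with this normalization its part of degree class `0` is
`-1`. -/
def eulerRatio : (LaurentSeries ℤ)ˣ :=
  qPowUnit (-2) * eulerJUnit 1 * (eulerJUnit 49)⁻¹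

theorem val_eulerRatio :
    (eulerRatio : LaurentSeries ℤ) =
      qPow (-2) * ((eulerJUnit 49)⁻¹ : (LaurentSeries ℤ)ˣ).val * eulerJ 1 :=
  mul_right_comm _ _ _

theorem qPow_mul_inv_eulerJUnit_mem_residueClass :
    qPow (-2) * ((eulerJUnit 49)⁻¹ : (LaurentSeries ℤ)ˣ).val ∈ residueClass 7 (-2) := by
  simpa using mul_mem_residueClass (qPow_mem_residueClass (-2))
    (inv_eulerJUnit_mem_residueClass_zero (m := 7) (b := 49) (by norm_num))

theorem classPart_eulerRatio (r : ZMod 7) :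
    classPart 7 r (eulerRatio : LaurentSeries ℤ) =
      qPow (-2) * ((eulerJUnit 49)⁻¹ : (LaurentSeries ℤ)ˣ).val *
        classPart 7 (r + 2) (eulerJ 1) := by
  rw [val_eulerRatio, classPart_mul qPow_mul_inv_eulerJUnit_mem_residueClass, sub_neg_eq_add]

theorem classPart_zero_eulerRatio : classPart 7 0 (eulerRatio : LaurentSeries ℤ) = -1 := by
  have hq : (qPow (-2) * qPow 2 : LaurentSeries ℤ) = 1 := qPow_mul_qPow _ _
  rw [classPart_eulerRatio, zero_add, classPart_two_eulerJ_one]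
  linear_combination -eulerJ_mul_inv_eulerJUnit 49 -
    eulerJ 49 * ((eulerJUnit 49)⁻¹ : (LaurentSeries ℤ)ˣ).val * hq

theorem classPart_eulerRatio_eq_zero {r : ZMod 7} (hr : r ∈ ({1, 2, 4} : Finset (ZMod 7))) :
    classPart 7 r (eulerRatio : LaurentSeries ℤ) = 0 := by
  rw [classPart_eulerRatio, classPart_eulerJ_one_eq_zero, mul_zero]
  revert r
  decide

/-- The part of `ξ` of degree class `3`. -/
def kleinA : LaurentSeries ℤ := classPart 7 3 eulerRatio

/-- The part of `ξ` of degree class `6`. -/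
def kleinB : LaurentSeries ℤ := classPart 7 6 eulerRatio

/-- The part of `ξ` of degree class `5`. -/
def kleinC : LaurentSeries ℤ := classPart 7 5 eulerRatio

theorem classPart_eulerRatio_eq_vecCons (r : ZMod 7) :
    classPart 7 r (eulerRatio : LaurentSeries ℤ) = ![-1, 0, 0, kleinA, 0, kleinC, kleinB] r := by
  fin_cases r
  exacts [classPart_zero_eulerRatio, classPart_eulerRatio_eq_zero (r := 1) (by decide),
    classPart_eulerRatio_eq_zero (r := 2) (by decide), rfl,
    classPart_eulerRatio_eq_zero (r := 4) (by decide), rfl, rfl]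

theorem eq_sum_of_classPart {f : LaurentSeries ℤ} {u : Fin 7 → LaurentSeries ℤ}
    (hf : ∀ r : ZMod 7, classPart 7 r f = u r) : f = ∑ r, u r :=
  (sum_classPart f).symm.trans (Finset.sum_congr rfl fun r _ => hf r)

theorem val_eulerRatio_eq_kleinA_add :
    (eulerRatio : LaurentSeries ℤ) = kleinA + kleinB + kleinC - 1 := by
  rw [eq_sum_of_classPart classPart_eulerRatio_eq_vecCons]
  simp only [Fin.sum_univ_seven, Fin.isValue, Matrix.cons_val_zero, Matrix.cons_val_one,
    Matrix.cons_val]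
  ring

theorem classPart_seven_mul {f g : LaurentSeries ℤ} {u v : Fin 7 → LaurentSeries ℤ}
    (hf : ∀ r : ZMod 7, classPart 7 r f = u r) (hg : ∀ r : ZMod 7, classPart 7 r g = v r)
    (r : Fin 7) : classPart 7 (r : ZMod 7) (f * g) = ∑ s, u s * v (r - s) := by
  refine (classPart_mul_eq_sum _ f g).trans (Finset.sum_congr rfl fun s _ => ?_)
  rw [hf, hg]
  rfl

theorem classPart_zero_eulerRatio_cubed :
    classPart 7 0 ((eulerRatio : LaurentSeries ℤ) ^ 3) = 6 * (kleinA * kleinB * kleinC) - 1 := by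
  have h := classPart_seven_mul classPart_eulerRatio_eq_vecCons
    (classPart_seven_mul classPart_eulerRatio_eq_vecCons classPart_eulerRatio_eq_vecCons) 0
  rw [pow_three]
  refine h.trans ?_
  simp only [Fin.sum_univ_seven, Fin.isValue, Matrix.cons_val_zero, Matrix.cons_val_one,
    Matrix.cons_val, sub_zero, sub_self, Fin.reduceSub]
  ring

theorem kleinA_mul_kleinB_mul_kleinC : kleinA * kleinB * kleinC + 1 = 0 := by
  have hinv := eulerJ_mul_inv_eulerJUnit 49
  have hcube := two_mul_classPart_six_eulerJ_one_cubed
  set ι := ((eulerJUnit 49)⁻¹ : (LaurentSeries ℤ)ˣ).val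
  have hq : (qPow (-2) ^ 3 * qPow 6 : LaurentSeries ℤ) = 1 := by
    rw [qPow_pow, qPow_mul_qPow]
    rfl
  have hpart : 6 * (kleinA * kleinB * kleinC) - 1 =
      (qPow (-2) * ι) ^ 3 * classPart 7 6 (eulerJ 1 ^ 3) := by
    rw [← classPart_zero_eulerRatio_cubed, val_eulerRatio, mul_pow,
      classPart_mul (pow_mem_residueClass qPow_mul_inv_eulerJUnit_mem_residueClass 3)]
    rfl
  have htwelve : (12 : LaurentSeries ℤ) ≠ 0 := by norm_num
  refine (mul_eq_zero.1 ?_).resolve_left htwelve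
  linear_combination 2 * hpart + (qPow (-2) * ι) ^ 3 * hcube - 14 * (eulerJ 49 * ι) ^ 3 * hq -
    14 * ((eulerJ 49 * ι) ^ 2 + eulerJ 49 * ι + 1) * hinv

theorem coeff_zero_eulerJ_one : (eulerJ 1).coeff 0 = 1 := by
  have h := coeff_eulerJ_one_pentagonal 0
  have hzero := two_mul_natCast_pentagonal 0
  rwa [show (pentagonal 0 : ℤ) = 0 by omega, altSign_zero] at h

theorem hasLeadingTerm_eulerJ (b : ℕ) [NeZero b] : HasLeadingTerm (eulerJ b) 0 1 := by
  have h := (⟨eulerJ_mem_orderGE_zero 1, coeff_zero_eulerJ_one⟩ :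
    HasLeadingTerm (eulerJ 1) 0 1).expand b
  rwa [expand_eulerJ, mul_one, mul_zero] at h

theorem hasLeadingTerm_inv_eulerJUnit (b : ℕ) [NeZero b] :
    HasLeadingTerm ((eulerJUnit b)⁻¹ : (LaurentSeries ℤ)ˣ).val 0 1 := by
  refine ⟨val_inv_eulerJUnit_mem_orderGE_zero b, ?_⟩
  have h := ((hasLeadingTerm_eulerJ b).mul
    ⟨val_inv_eulerJUnit_mem_orderGE_zero b, rfl⟩).coeff_eq
  rw [eulerJ_mul_inv_eulerJUnit, add_zero, one_mul] at h
  exact h.symm.trans HasLeadingTerm.one.coeff_eq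

theorem hasLeadingTerm_classPart_eulerRatio {n : ℤ} (hn : n < 5) :
    HasLeadingTerm (classPart 7 n (eulerRatio : LaurentSeries ℤ)) n ((eulerJ 1).coeff (n + 2)) := by
  have hJ := hasLeadingTerm_classPart (m := 7) (n := n + 2) (eulerJ_mem_orderGE_zero 1) (by omega)
  have h := ((HasLeadingTerm.qPow (-2)).mul (hasLeadingTerm_inv_eulerJUnit 49)).mul hJ
  rw [classPart_eulerRatio]
  convert h using 1
  · push_cast
    rfl
  · ring
  · ring

theorem hasLeadingTerm_kleinA : HasLeadingTerm kleinA 3 1 := by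
  have hcoeff : (eulerJ 1).coeff 5 = 1 := coeff_eulerJ_one_pentagonal 2
  rw [← hcoeff]
  exact hasLeadingTerm_classPart_eulerRatio (n := 3) (by norm_num)

theorem hasLeadingTerm_kleinB : HasLeadingTerm kleinB (-1) (-1) := by
  have h := hasLeadingTerm_classPart_eulerRatio (n := -1) (by norm_num)
  have hcoeff : (eulerJ 1).coeff (-1 + 2) = -1 := coeff_eulerJ_one_pentagonal 1
  rwa [hcoeff] at h

theorem hasLeadingTerm_kleinC : HasLeadingTerm kleinC (-2) 1 := by
  rw [← coeff_zero_eulerJ_one]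
  exact hasLeadingTerm_classPart_eulerRatio (n := -2) (by norm_num)

/-- The part of `ξ(q²)` of degree class `3`. -/
def kleinD : LaurentSeries ℤ := expand 2 kleinC

/-- The part of `ξ(q²)` of degree class `6`. -/
def kleinE : LaurentSeries ℤ := expand 2 kleinA

/-- The part of `ξ(q²)` of degree class `5`. -/
def kleinF : LaurentSeries ℤ := expand 2 kleinB

theorem kleinD_mul_kleinE_mul_kleinF : kleinD * kleinE * kleinF + 1 = 0 := by
  have h := congrArg (expand 2) kleinA_mul_kleinB_mul_kleinC
  rw [map_add, map_mul, map_mul, map_one, map_zero] at h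
  rw [kleinD, kleinE, kleinF]
  linear_combination h

theorem kleinA_mem_residueClass : kleinA ∈ residueClass 7 3 := classPart_mem_residueClass _ _

theorem kleinB_mem_residueClass : kleinB ∈ residueClass 7 6 := classPart_mem_residueClass _ _

theorem kleinC_mem_residueClass : kleinC ∈ residueClass 7 5 := classPart_mem_residueClass _ _

theorem kleinD_mem_residueClass : kleinD ∈ residueClass 7 3 :=
  expand_mem_residueClass 2 kleinC_mem_residueClass

theorem kleinE_mem_residueClass : kleinE ∈ residueClass 7 6 :=
  expand_mem_residueClass 2 kleinA_mem_residueClass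

theorem kleinF_mem_residueClass : kleinF ∈ residueClass 7 5 :=
  expand_mem_residueClass 2 kleinB_mem_residueClass

theorem expand_two_eulerRatio :
    expand 2 (eulerRatio : LaurentSeries ℤ) = kleinD + kleinE + kleinF - 1 := by
  rw [val_eulerRatio_eq_kleinA_add, map_sub, map_add, map_add, map_one, kleinD, kleinE, kleinF]
  ring

theorem classPart_expand_two_eulerRatio (r : ZMod 7) :
    classPart 7 r (expand 2 (eulerRatio : LaurentSeries ℤ)) =
      ![-1, 0, 0, kleinD, 0, kleinF, kleinE] r := by
  have hr : r = (2 : ℕ) * (4 * r) := by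
    revert r
    decide
  have htwo : IsUnit ((2 : ℕ) : ZMod 7) := (ZMod.isUnit_iff_coprime 2 7).2 (by norm_num)
  rw [hr, classPart_expand htwo, classPart_eulerRatio_eq_vecCons, ← hr]
  fin_cases r
  exacts [(map_neg _ _).trans (congrArg _ (map_one _)), map_zero _, map_zero _, rfl, map_zero _,
    rfl, rfl]

theorem kleinFactors_mul_ne_neg_one :
    (kleinC * kleinF - kleinA) * (kleinA * kleinD - kleinB) * (kleinB * kleinE - kleinC) ≠ -1 := by
  have hD := hasLeadingTerm_kleinC.expand 2
  have hE := hasLeadingTerm_kleinA.expand 2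
  have hF := hasLeadingTerm_kleinB.expand 2
  have h₁ := (hasLeadingTerm_kleinC.mul hF).sub (hasLeadingTerm_kleinA.of_lt (by norm_num))
  have h₂ := (hasLeadingTerm_kleinA.mul hD).sub hasLeadingTerm_kleinB
  have h₃ := ((hasLeadingTerm_kleinB.mul hE).of_lt (by norm_num)).sub hasLeadingTerm_kleinC
  have h := ((h₁.mul h₂).mul h₃).coeff_eq
  intro hneg
  rw [← kleinD, ← kleinE, ← kleinF, hneg] at h
  norm_num at h

/-- The theta quotient `φ(-q) J₉₈ / J₄₉²`, which equals `ξ(q)² / ξ(q²)`. -/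
def thetaRatio : LaurentSeries ℤ :=
  eulerJ 98 * ((eulerJUnit 49)⁻¹ : (LaurentSeries ℤ)ˣ).val ^ 2 * gaussTheta

theorem classPart_thetaRatio (r : ZMod 7) :
    classPart 7 r thetaRatio =
      eulerJ 98 * ((eulerJUnit 49)⁻¹ : (LaurentSeries ℤ)ˣ).val ^ 2 * classPart 7 r gaussTheta := by
  have hJ : eulerJ 98 ∈ residueClass 7 0 := eulerJ_mem_residueClass_zero (by norm_num)
  have hinv := pow_mem_residueClass
    (inv_eulerJUnit_mem_residueClass_zero (m := 7) (b := 49) (by norm_num)) 2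
  have hmem := mul_mem_residueClass hJ hinv
  rw [thetaRatio, classPart_mul hmem]
  congr 2
  simp

theorem classPart_zero_thetaRatio : classPart 7 0 thetaRatio = 1 := by
  have h := congrArg (expand 49) gaussTheta_mul_eulerJ_two
  have hinv := eulerJ_mul_inv_eulerJUnit 49
  rw [map_mul, map_pow, expand_eulerJ, expand_eulerJ] at h
  rw [classPart_thetaRatio, classPart_zero_gaussTheta]
  linear_combination ((eulerJUnit 49)⁻¹ : (LaurentSeries ℤ)ˣ).val ^ 2 * h +
    (eulerJ 49 * ((eulerJUnit 49)⁻¹ : (LaurentSeries ℤ)ˣ).val + 1) * hinv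

theorem classPart_thetaRatio_eq_zero {r : ZMod 7} (hr : r ∈ ({3, 5, 6} : Finset (ZMod 7))) :
    classPart 7 r thetaRatio = 0 := by
  rw [classPart_thetaRatio, classPart_gaussTheta_eq_zero hr, mul_zero]

theorem classPart_thetaRatio_eq_vecCons (r : ZMod 7) :
    classPart 7 r thetaRatio =
      ![1, classPart 7 1 thetaRatio, classPart 7 2 thetaRatio, 0, classPart 7 4 thetaRatio, 0, 0]
        r := by
  fin_cases r
  exacts [classPart_zero_thetaRatio, rfl, rfl, classPart_thetaRatio_eq_zero (r := 3) (by decide),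
    rfl, classPart_thetaRatio_eq_zero (r := 5) (by decide),
    classPart_thetaRatio_eq_zero (r := 6) (by decide)]

theorem eulerRatio_sq :
    (eulerRatio : LaurentSeries ℤ) * eulerRatio = expand 2 eulerRatio.val * thetaRatio := by
  have hq : (qPow (-2) * qPow (-2) : LaurentSeries ℤ) = qPow (2 * -2) := qPow_mul_qPow _ _
  have hinv := eulerJ_mul_inv_eulerJUnit 98
  have hgauss := gaussTheta_mul_eulerJ_two
  rw [val_eulerRatio, map_mul, map_mul, expand_qPow, expand_inv_eulerJUnit, expand_eulerJ,
    thetaRatio, Nat.cast_ofNat, ← hq]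
  norm_num only
  linear_combination
    -(qPow (-2) * ((eulerJUnit 49)⁻¹ : (LaurentSeries ℤ)ˣ).val) ^ 2 * hgauss
    -(qPow (-2) * ((eulerJUnit 49)⁻¹ : (LaurentSeries ℤ)ˣ).val) ^ 2 * gaussTheta * eulerJ 2 * hinv

theorem kleinRelations : KleinRelations kleinA kleinB kleinC kleinD kleinE kleinF := by
  have h (r : Fin 7) := (classPart_seven_mul classPart_eulerRatio_eq_vecCons
    classPart_eulerRatio_eq_vecCons r).symm.trans ((congrArg (classPart 7 r) eulerRatio_sq).trans
      (classPart_seven_mul classPart_expand_two_eulerRatio classPart_thetaRatio_eq_vecCons r))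
  have h₁ := h 1
  have h₂ := h 2
  have h₃ := h 3
  have h₄ := h 4
  have h₅ := h 5
  have h₆ := h 6
  simp only [Fin.sum_univ_seven, Fin.isValue, Matrix.cons_val_zero, Matrix.cons_val_one,
    Matrix.cons_val, sub_zero, sub_self, Fin.reduceSub]
    at h₁ h₂ h₃ h₄ h₅ h₆
  refine .of_sq_relations (x := classPart 7 1 thetaRatio) (y := classPart 7 2 thetaRatio)
    (z := classPart 7 4 thetaRatio) two_ne_zero kleinA_mul_kleinB_mul_kleinC
    kleinD_mul_kleinE_mul_kleinF ?_ ?_ ?_ ?_ ?_ ?_ kleinFactors_mul_ne_neg_one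
  · linear_combination h₁
  · linear_combination h₂
  · linear_combination h₄
  · linear_combination h₃
  · linear_combination h₆
  · linear_combination h₅

end EulerRatio

/-! ### Norms over the twists `q ↦ ζ ^ i q` -/

section Twist

theorem prod_eq_neg_one_pow_mul_coeff_zero {R ι : Type*} [CommRing R] [IsDomain R]
    {P : Polynomial R} (hP : P.Monic) {s : Finset ι} (hs : s.card = P.natDegree) {r : ι → R}
    (hinj : Set.InjOn r s) (hroot : ∀ i ∈ s, P.IsRoot (r i)) :
    ∏ i ∈ s, r i = (-1) ^ P.natDegree * P.coeff 0 := by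
  have hprod : (∏ i ∈ s, (Polynomial.X - Polynomial.C (r i))).Monic :=
    Polynomial.monic_prod_of_monic _ _ fun i _ => Polynomial.monic_X_sub_C (r i)
  have hdegree : (∏ i ∈ s, (Polynomial.X - Polynomial.C (r i))).degree = (s.card : WithBot ℕ) := by
    rw [Polynomial.degree_prod]
    simp
  have hPdegree : P.degree = s.card := by
    rw [Polynomial.degree_eq_natDegree hP.ne_zero, hs]
  have hP_eq := Polynomial.eq_of_degree_le_of_eval_index_eq s hinj hPdegree.le
    (hPdegree.trans hdegree.symm) (hP.trans hprod.symm) fun i hi => by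
      rw [Polynomial.eval_prod, Finset.prod_eq_zero hi (by simp), (hroot i hi).eq_zero]
  have hcoeff : P.coeff 0 = (-1) ^ s.card * ∏ i ∈ s, r i := by
    rw [hP_eq, Polynomial.coeff_zero_eq_eval_zero, Polynomial.eval_prod, ← Finset.prod_neg]
    simp
  rw [hcoeff, ← hs, ← mul_assoc, ← mul_pow]
  simp

theorem prod_range_mul_mul_prod {M : Type*} [CommMonoid M] {p : ℕ} (hp : p ≠ 0) {F G H : ℕ → M}
    (hF : ∀ k, ¬ p ∣ k → H k = F k) (hG : ∀ k, H (p * k) = G k) (N : ℕ) :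
    (∏ k ∈ Finset.range (p * N), H (k + 1)) * ∏ k ∈ Finset.range N, F (p * (k + 1)) =
      (∏ k ∈ Finset.range (p * N), F (k + 1)) * ∏ k ∈ Finset.range N, G (k + 1) := by
  induction N with
  | zero => simp
  | succ N ih =>
    obtain ⟨m, rfl⟩ := Nat.exists_eq_succ_of_ne_zero hp
    have hmid : ∏ k ∈ Finset.range m, H ((m + 1) * N + k + 1) =
        ∏ k ∈ Finset.range m, F ((m + 1) * N + k + 1) :=
      Finset.prod_congr rfl fun k hk => hF _ <| by
        rw [add_assoc, Nat.dvd_add_right (dvd_mul_right _ _)]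
        exact Nat.not_dvd_of_pos_of_lt k.succ_pos (by simpa using hk)
    have hlast : (m + 1) * N + m + 1 = (m + 1) * (N + 1) := by ring
    simp only [Nat.succ_eq_add_one] at ih ⊢
    simp only [mul_add_one (m + 1) N, Finset.prod_range_add, Finset.prod_range_succ, hmid] at ih ⊢
    simp only [← mul_add_one (m + 1) N] at ih ⊢
    rw [hlast, hG]
    grind

variable {K : Type*} [Field K] [CharZero K]

/-- The substitution `q ↦ z q`. -/
def twist (z : Kˣ) : LaurentSeries ℤ →+* LaurentSeries K where
  toFun f :=
    { coeff n := ((z ^ n : Kˣ) : K) * f.coeff n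
      isPWO_support' := f.isPWO_support.mono fun n hn => by
        rw [Function.mem_support] at hn
        exact fun h => hn (by simp [h]) }
  map_one' := by
    ext n
    by_cases h : n = 0 <;> simp [HahnSeries.coeff_one, h]
  map_zero' := by
    ext n
    simp
  map_add' f g := by
    ext n
    simp [mul_add]
  map_mul' f g := by
    ext n
    simp only [HahnSeries.coeff_mul, Int.cast_sum, Finset.mul_sum]
    refine Finset.sum_congr ?_ fun ij hij => ?_
    · ext ij
      simp [Finset.mem_antidiagonal, zpow_ne_zero]
    · rw [← (Finset.mem_antidiagonal.1 hij).2.2, zpow_add]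
      push_cast
      ring

theorem coeff_twist (z : Kˣ) (f : LaurentSeries ℤ) (n : ℤ) :
    (twist z f).coeff n = ((z ^ n : Kˣ) : K) * f.coeff n :=
  rfl

theorem twist_injective (z : Kˣ) : Function.Injective (twist z) := fun f g h => by
  ext n
  have hn := congrArg (fun f => f.coeff n) h
  simpa [coeff_twist, zpow_ne_zero] using hn

theorem twist_mem_orderGE (z : Kˣ) {M : ℤ} {f : LaurentSeries ℤ} (hf : f ∈ orderGE M) :
    twist z f ∈ orderGE M := fun n hn => by
  rw [coeff_twist, hf n hn, Int.cast_zero, mul_zero]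

theorem EqUpTo.twist (z : Kˣ) {M : ℤ} {f g : LaurentSeries ℤ} (h : EqUpTo M f g) :
    EqUpTo M (twist z f) (twist z g) :=
  ⟨twist_mem_orderGE z h.left_mem, twist_mem_orderGE z h.right_mem, by
    rw [← map_sub]
    exact twist_mem_orderGE z h.sub_mem⟩

theorem twist_qPow (z : Kˣ) (m : ℤ) :
    twist z (qPow m) = HahnSeries.C ((z ^ m : Kˣ) : K) * qPow m := by
  ext n
  rw [coeff_twist, coeff_qPow, HahnSeries.C_mul_eq_smul, HahnSeries.coeff_smul, coeff_qPow]
  by_cases h : n = m <;> simp [h]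

theorem twist_one_qPow (m : ℤ) : twist (1 : Kˣ) (qPow m) = qPow m := by
  simp [twist_qPow]

theorem twist_one_eulerProd (b n : ℕ) : twist (1 : Kˣ) (eulerProd b n) = eulerProd b n := by
  simp only [eulerProd, map_prod, map_sub, map_one, twist_one_qPow]

theorem twist_of_mem_residueClass_zero {n : ℕ} {z : Kˣ} (hz : z ^ n = 1) {f : LaurentSeries ℤ}
    (hf : f ∈ residueClass n 0) : twist z f = twist 1 f := by
  ext k
  rw [coeff_twist, coeff_twist]
  by_cases h : (k : ZMod n) = 0
  · obtain ⟨j, rfl⟩ := (ZMod.intCast_zmod_eq_zero_iff_dvd k n).1 h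
    rw [zpow_mul, zpow_natCast, hz, one_zpow, one_zpow]
  · simp [hf k h]

/-- The product of the `n` series obtained from `f` by the substitutions `q ↦ z ^ i q`. -/
def twistNorm (z : Kˣ) (n : ℕ) : LaurentSeries ℤ →* LaurentSeries K :=
  ∏ i ∈ Finset.range n, (twist (z ^ i) : LaurentSeries ℤ →* LaurentSeries K)

theorem twistNorm_apply (z : Kˣ) (n : ℕ) (f : LaurentSeries ℤ) :
    twistNorm z n f = ∏ i ∈ Finset.range n, twist (z ^ i) f :=
  MonoidHom.finsetProd_apply _ _ _

theorem twistNorm_of_mem_residueClass_zero {n : ℕ} {z : Kˣ} (hz : z ^ n = 1)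
    {f : LaurentSeries ℤ} (hf : f ∈ residueClass n 0) : twistNorm z n f = twist 1 f ^ n := by
  rw [twistNorm_apply, Finset.prod_congr rfl fun i _ => twist_of_mem_residueClass_zero
    (by rw [pow_right_comm, hz, one_pow]) hf, Finset.prod_const, Finset.card_range]

theorem twistNorm_qPow {n : ℕ} (hn : Odd n) {z : Kˣ} (hz : z ^ n = 1) (m : ℤ) :
    twistNorm z n (qPow m) = qPow (n * m) := by
  have hsum : ∑ i ∈ Finset.range n, i = n * ((n - 1) / 2) := by
    rw [Finset.sum_range_id, Nat.mul_div_assoc _ (hn.tsub_odd odd_one).two_dvd]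
  have hprod : ∏ i ∈ Finset.range n, (z ^ i) ^ m = 1 := by
    rw [Finset.prod_zpow, Finset.prod_pow_eq_pow_sum, hsum, pow_mul, hz, one_pow, one_zpow]
  simp only [twistNorm_apply, twist_qPow, Finset.prod_mul_distrib, ← map_prod]
  rw [← Units.coe_prod, hprod, Units.val_one, map_one, one_mul, Finset.prod_const,
    Finset.card_range, qPow_pow, mul_comm]

theorem twistNorm_one_sub_qPow {n : ℕ} [NeZero n] {z : Kˣ} (hz : IsPrimitiveRoot z n) {m : ℕ}
    (hm : m.Coprime n) : twistNorm z n (1 - qPow m) = 1 - qPow (n * m) := by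
  have hroot : IsPrimitiveRoot (HahnSeries.C ((z ^ m : Kˣ) : K) : LaurentSeries K) n :=
    (IsPrimitiveRoot.coe_units_iff.2 (hz.pow_of_coprime m hm)).map_of_injective
      HahnSeries.C_injective
  have h := congrArg (Polynomial.eval 1)
    (X_pow_sub_C_eq_prod hroot (NeZero.pos n) (rfl : (qPow m : LaurentSeries K) ^ n = _))
  simp only [Polynomial.eval_prod, Polynomial.eval_sub, Polynomial.eval_pow, Polynomial.eval_X,
    Polynomial.eval_C, one_pow, qPow_pow] at h
  rw [mul_comm, h, twistNorm_apply]
  refine Finset.prod_congr rfl fun i _ => ?_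
  rw [map_sub, map_one, twist_qPow, ← map_pow, zpow_natCast, pow_right_comm,
    Units.val_pow_eq_pow_val]

section Prime

variable {p : ℕ} [Fact p.Prime] {z : Kˣ}

theorem twistNorm_eulerProd (hz : IsPrimitiveRoot z p) (N : ℕ) :
    twistNorm z p (eulerProd 1 (p * N)) * eulerProd (p * p) N =
      eulerProd p (p * N) * eulerProd p N ^ p := by
  have hp : p.Prime := Fact.out
  have hcoprime (k : ℕ) (hk : ¬ p ∣ k) :
      twistNorm z p (1 - qPow k) = (1 - qPow (p * k) : LaurentSeries K) :=
    twistNorm_one_sub_qPow hz ((hp.coprime_iff_not_dvd.2 hk).symm)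
  have hdvd (k : ℕ) :
      twistNorm z p (1 - qPow (p * k : ℕ)) = (1 - qPow (p * k) : LaurentSeries K) ^ p := by
    have hmem : (1 - qPow (p * k : ℕ) : LaurentSeries ℤ) ∈ residueClass p 0 := by
      refine sub_mem one_mem_residueClass ?_
      simpa using qPow_mem_residueClass (K := ℤ) (m := p) (p * k : ℕ)
    rw [twistNorm_of_mem_residueClass_zero hz.pow_eq_one hmem, map_sub, map_one, twist_one_qPow,
      Nat.cast_mul]
  have h := prod_range_mul_mul_prod hp.ne_zero hcoprime hdvd N
  simpa [eulerProd, mul_assoc, Finset.prod_pow] using h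

theorem twistNorm_eulerJ_one (hz : IsPrimitiveRoot z p) :
    twistNorm z p (eulerJ 1) * twist 1 (eulerJ (p * p)) = twist 1 (eulerJ p) ^ (p + 1) := by
  refine EqUpTo.eq_of_forall fun M => ?_
  have hp : p.Prime := Fact.out
  have hM : M ≤ p * M := Nat.le_mul_of_pos_left M hp.pos
  have hnorm : EqUpTo M (twistNorm z p (eulerJ 1)) (twistNorm z p (eulerProd 1 (p * M))) := by
    simp only [twistNorm_apply]
    exact EqUpTo.prod fun i _ => (eqUpTo_eulerJ 1 hM).twist _
  have hleft := hnorm.mul ((eqUpTo_eulerJ (p * p) (le_refl M)).twist (1 : Kˣ))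
  have hright := ((eqUpTo_eulerJ p hM).twist (1 : Kˣ)).mul
    (((eqUpTo_eulerJ p (le_refl M)).twist (1 : Kˣ)).pow p)
  simp only [twist_one_eulerProd] at hleft hright
  rw [twistNorm_eulerProd hz] at hleft
  rw [pow_succ']
  exact hleft.trans hright.symm

end Prime

end Twist

section KleinX

theorem kleinX_mem_residueClass_zero {K : Type*} [CommRing K] {a b c : LaurentSeries K}
    (ha : a ∈ residueClass 7 3) (hb : b ∈ residueClass 7 6) (hc : c ∈ residueClass 7 5) :
    kleinX a b c ∈ residueClass 7 0 := by
  have hconst : (8 : LaurentSeries K) ∈ residueClass 7 0 := by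
    have h := nsmul_mem (one_mem_residueClass (K := K) (m := 7)) 8
    rwa [nsmul_eq_mul, mul_one] at h
  exact sub_mem (neg_mem hconst) (add_mem (add_mem
    (mul_mem_residueClass (pow_mem_residueClass ha 3) hc)
    (mul_mem_residueClass (pow_mem_residueClass hb 3) ha))
    (mul_mem_residueClass (pow_mem_residueClass hc 3) hb))

theorem hasLeadingTerm_eulerRatio : HasLeadingTerm (eulerRatio : LaurentSeries ℤ) (-2) 1 := by
  rw [val_eulerRatio]
  exact ((HasLeadingTerm.qPow (-2)).mul (hasLeadingTerm_inv_eulerJUnit 49)).mul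
    (hasLeadingTerm_eulerJ 1)

variable {K : Type*} [Field K] [CharZero K] {z : Kˣ}

theorem injOn_twist_eulerRatio (hz : IsPrimitiveRoot z 7) :
    Set.InjOn (fun i => twist (z ^ i) (eulerRatio : LaurentSeries ℤ)) (Finset.range 7) := by
  intro i hi j hj hij
  have hcoeff := congrArg (fun f => f.coeff (-2)) hij
  simp only [coeff_twist, hasLeadingTerm_eulerRatio.coeff_eq, Int.cast_one, mul_one,
    Units.val_inj] at hcoeff
  have hpow : (z ^ 2) ^ i = (z ^ 2) ^ j := by
    rw [pow_right_comm z 2 i, pow_right_comm z 2 j]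
    exact inv_injective hcoeff
  exact (hz.pow_of_coprime 2 (by norm_num)).pow_inj (Finset.mem_range.1 hi)
    (Finset.mem_range.1 hj) hpow

theorem twistNorm_eulerRatio (hz : IsPrimitiveRoot z 7) :
    twistNorm z 7 (eulerRatio : LaurentSeries ℤ) = twist 1
      ((qPow (-7) * eulerJ 7 ^ 4 * ((eulerJUnit 49)⁻¹ : (LaurentSeries ℤ)ˣ).val ^ 4) ^ 2) := by
  have : Fact (Nat.Prime 7) := ⟨by norm_num⟩
  have hJ : twistNorm z 7 (eulerJ 1) * twist 1 (eulerJ 49) = twist 1 (eulerJ 7) ^ 8 :=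
    twistNorm_eulerJ_one (p := 7) hz
  have hinv := congrArg (twist (1 : Kˣ)) (eulerJ_mul_inv_eulerJUnit 49)
  have hq : (qPow (-7) : LaurentSeries K) ^ 2 = qPow ((7 : ℕ) * -2) := qPow_pow _ _
  have hι := inv_eulerJUnit_mem_residueClass_zero (m := 7) (b := 49) (by norm_num)
  rw [map_mul, map_one] at hinv
  simp only [val_eulerRatio, map_mul, map_pow, twistNorm_qPow (by decide : Odd 7) hz.pow_eq_one,
    twistNorm_of_mem_residueClass_zero hz.pow_eq_one hι, twist_one_qPow, mul_pow, hq]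
  set ι := twist (1 : Kˣ) ((eulerJUnit 49)⁻¹ : (LaurentSeries ℤ)ˣ).val
  linear_combination qPow ((7 : ℕ) * -2) * ι ^ 8 * hJ -
    qPow ((7 : ℕ) * -2) * twistNorm z 7 (eulerJ 1) * ι ^ 7 * hinv

/-- The monic polynomial of degree `7` satisfied by `ξ`, with coefficients in `ℤ[X]` for
`X = kleinX`. -/
def modularPoly {R : Type*} [CommRing R] (x : R) : Polynomial R :=
  .X ^ 7 + 7 * .X ^ 6 + 21 * .X ^ 5 + 49 * .X ^ 4 + .C (147 + 7 * x) * .X ^ 3 +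
    .C (343 + 35 * x) * .X ^ 2 + .C (343 + 49 * x) * .X - .C (x ^ 2)

theorem twistNorm_eulerRatio_eq_kleinX (hz : IsPrimitiveRoot z 7) :
    twistNorm z 7 (eulerRatio : LaurentSeries ℤ) = twist 1 (kleinX kleinA kleinB kleinC ^ 2) := by
  have hmod := kleinRelations.modular_equation val_eulerRatio_eq_kleinA_add rfl
  have hX := kleinX_mem_residueClass_zero kleinA_mem_residueClass kleinB_mem_residueClass
    kleinC_mem_residueClass
  set X := kleinX kleinA kleinB kleinC
  set P := modularPoly (twist (1 : Kˣ) X) with hP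
  have hdegree : P.natDegree = 7 := by
    rw [hP, modularPoly]
    compute_degree!
  have hmonic : P.Monic := by
    rw [hP, modularPoly]
    monicity!
  have hroot (i : ℕ) : P.IsRoot (twist (z ^ i) (eulerRatio : LaurentSeries ℤ)) := by
    have h := congrArg (twist (z ^ i)) hmod
    have hzi : (z ^ i) ^ 7 = 1 := by rw [pow_right_comm, hz.pow_eq_one, one_pow]
    simp only [map_add, map_mul, map_pow, map_ofNat, twist_of_mem_residueClass_zero hzi hX] at h
    simp only [hP, modularPoly, Polynomial.IsRoot.def, Polynomial.eval_add, Polynomial.eval_sub,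
      Polynomial.eval_mul, Polynomial.eval_pow, Polynomial.eval_X, Polynomial.eval_C,
      Polynomial.eval_ofNat]
    linear_combination h
  have hcoeff : P.coeff 0 = -twist 1 (X ^ 2) := by
    simp [hP, modularPoly, Polynomial.coeff_zero_eq_eval_zero]
  rw [twistNorm_apply, prod_eq_neg_one_pow_mul_coeff_zero hmonic
    (by rw [hdegree, Finset.card_range]) (injOn_twist_eulerRatio hz) fun i _ => hroot i, hdegree,
    hcoeff]
  ring

theorem hasLeadingTerm_kleinX : HasLeadingTerm (kleinX kleinA kleinB kleinC) (-7) 1 := by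
  have hconst : (-8 : LaurentSeries ℤ) ∈ orderGE 0 := by
    simpa using neg_mem (nsmul_mem (one_mem_orderGE_zero (K := ℤ)) 8)
  have hconst' : HasLeadingTerm (-8 : LaurentSeries ℤ) (-7) 0 :=
    ⟨orderGE_mono (by norm_num) hconst, hconst (-7) (by norm_num)⟩
  have hAC := ((hasLeadingTerm_kleinA.pow 3).mul hasLeadingTerm_kleinC).of_lt (m := -7)
    (by norm_num)
  have hBA := ((hasLeadingTerm_kleinB.pow 3).mul hasLeadingTerm_kleinA).of_lt (m := -7)
    (by norm_num)
  have hCB := (hasLeadingTerm_kleinC.pow 3).mul hasLeadingTerm_kleinB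
  rw [kleinX, ← sub_sub, ← sub_sub]
  simpa using ((hconst'.sub hAC).sub hBA).sub hCB

end KleinX

theorem kleinX_eq_eulerQuotient :
    kleinX kleinA kleinB kleinC =
      qPow (-7) * eulerJ 7 ^ 4 * ((eulerJUnit 49)⁻¹ : (LaurentSeries ℤ)ˣ).val ^ 4 := by
  obtain ⟨z, hz⟩ : ∃ z : ℂˣ, IsPrimitiveRoot z 7 :=
    have h := Complex.isPrimitiveRoot_exp 7 (by norm_num)
    ⟨_, h.isUnit_unit (by norm_num)⟩
  have hlead : HasLeadingTerm (qPow (-7) * eulerJ 7 ^ 4 *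
      ((eulerJUnit 49)⁻¹ : (LaurentSeries ℤ)ˣ).val ^ 4) (-7) 1 := by
    simpa using ((HasLeadingTerm.qPow (-7)).mul ((hasLeadingTerm_eulerJ 7).pow 4)).mul
      ((hasLeadingTerm_inv_eulerJUnit 49).pow 4)
  have hsq := twist_injective (1 : ℂˣ)
    ((twistNorm_eulerRatio_eq_kleinX hz).symm.trans (twistNorm_eulerRatio hz))
  refine (sq_eq_sq_iff_eq_or_eq_neg.1 hsq).resolve_right fun hneg => ?_
  have hcoeff := hasLeadingTerm_kleinX.coeff_eq
  rw [hneg, HahnSeries.coeff_neg, hlead.coeff_eq] at hcoeff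
  norm_num at hcoeff

/-! ### Traces from the dissection -/

section ResidueOrbit

variable {K : Type*} [CommRing K] {r : ZMod 7} {p q w p' q' w' a b c : LaurentSeries K}

/-- Three series supported on the degrees in the classes `r`, `2 r`, `4 r` modulo `7`. -/
structure IsResidueOrbit (r : ZMod 7) (p q w : LaurentSeries K) : Prop where
  mem₁ : p ∈ residueClass 7 r
  mem₂ : q ∈ residueClass 7 (2 * r)
  mem₄ : w ∈ residueClass 7 (4 * r)

namespace IsResidueOrbit

theorem rotate (h : IsResidueOrbit r p q w) : IsResidueOrbit (2 * r) q w p where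
  mem₁ := h.mem₂
  mem₂ := by convert h.mem₄ using 2; ring
  mem₄ := by
    have hr : ∀ r : ZMod 7, 4 * (2 * r) = r := by decide
    rw [hr]
    exact h.mem₁

theorem atkinU_sum (h : IsResidueOrbit r p q w) (hr : r ≠ 0) : atkinU 7 (p + q + w) = 0 := by
  have hne : ∀ r : ZMod 7, r ≠ 0 → 2 * r ≠ 0 ∧ 4 * r ≠ 0 := by decide
  rw [map_add, map_add, atkinU_of_mem_of_ne h.mem₁ hr, atkinU_of_mem_of_ne h.mem₂ (hne r hr).1,
    atkinU_of_mem_of_ne h.mem₄ (hne r hr).2, add_zero, add_zero]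

theorem atkinU_sum_mul_sum (h : IsResidueOrbit r p q w) (h' : IsResidueOrbit r p' q' w')
    (hr : r ≠ 0) : atkinU 7 ((p + q + w) * (p' + q' + w')) = 0 := by
  have hne : ∀ r : ZMod 7, r ≠ 0 → r + r ≠ 0 ∧ r + 2 * r ≠ 0 ∧ r + 4 * r ≠ 0 ∧ 2 * r + r ≠ 0 ∧
      2 * r + 2 * r ≠ 0 ∧ 2 * r + 4 * r ≠ 0 ∧ 4 * r + r ≠ 0 ∧ 4 * r + 2 * r ≠ 0 ∧
      4 * r + 4 * r ≠ 0 := by decide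
  obtain ⟨h₁₁, h₁₂, h₁₄, h₂₁, h₂₂, h₂₄, h₄₁, h₄₂, h₄₄⟩ := hne r hr
  simp only [add_mul, mul_add, map_add, atkinU_mul_eq_zero h.mem₁ h'.mem₁ h₁₁,
    atkinU_mul_eq_zero h.mem₁ h'.mem₂ h₁₂, atkinU_mul_eq_zero h.mem₁ h'.mem₄ h₁₄,
    atkinU_mul_eq_zero h.mem₂ h'.mem₁ h₂₁, atkinU_mul_eq_zero h.mem₂ h'.mem₂ h₂₂,
    atkinU_mul_eq_zero h.mem₂ h'.mem₄ h₂₄, atkinU_mul_eq_zero h.mem₄ h'.mem₁ h₄₁,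
    atkinU_mul_eq_zero h.mem₄ h'.mem₂ h₄₂, atkinU_mul_eq_zero h.mem₄ h'.mem₄ h₄₄, add_zero]

theorem atkinU_sum_mul_sum_neg (h : IsResidueOrbit r p q w) (h' : IsResidueOrbit (-r) p' q' w')
    (hr : r ≠ 0) :
    atkinU 7 ((p + q + w) * (p' + q' + w')) = atkinU 7 (p * p' + q * q' + w * w') := by
  have hne : ∀ r : ZMod 7, r ≠ 0 → r + 2 * -r ≠ 0 ∧ r + 4 * -r ≠ 0 ∧ 2 * r + -r ≠ 0 ∧
      2 * r + 4 * -r ≠ 0 ∧ 4 * r + -r ≠ 0 ∧ 4 * r + 2 * -r ≠ 0 := by decide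
  obtain ⟨h₁₂, h₁₄, h₂₁, h₂₄, h₄₁, h₄₂⟩ := hne r hr
  simp only [add_mul, mul_add, map_add, atkinU_mul_eq_zero h.mem₁ h'.mem₂ h₁₂,
    atkinU_mul_eq_zero h.mem₁ h'.mem₄ h₁₄, atkinU_mul_eq_zero h.mem₂ h'.mem₁ h₂₁,
    atkinU_mul_eq_zero h.mem₂ h'.mem₄ h₂₄, atkinU_mul_eq_zero h.mem₄ h'.mem₁ h₄₁,
    atkinU_mul_eq_zero h.mem₄ h'.mem₂ h₄₂, add_zero, zero_add]

theorem orbitMonomial_mem_residueClass (h : IsResidueOrbit r a b c) {k : ℕ}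
    (hk : k ∈ Finset.Icc 1 6) :
    orbitMonomial a b c k ∈ residueClass 7 ((if k ≤ 3 then 5 else 2) * r) := by
  have hr : ∀ r : ZMod 7, 5 * r = r + 4 * r ∧ 5 * r = (3 : ℕ) * (4 * r) ∧
      5 * r = r + (2 : ℕ) * (2 * r) ∧ 2 * r = (2 : ℕ) * r ∧ 2 * r = (4 : ℕ) * (4 * r) := by decide
  obtain ⟨h₁, h₂, h₃, h₅, h₆⟩ := hr r
  fin_cases hk
  · exact h₁ ▸ mul_mem_residueClass h.mem₁ h.mem₄
  · exact h₂ ▸ pow_mem_residueClass h.mem₄ 3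
  · exact h₃ ▸ mul_mem_residueClass h.mem₁ (pow_mem_residueClass h.mem₂ 2)
  · exact h.mem₂
  · exact h₅ ▸ pow_mem_residueClass h.mem₁ 2
  · exact h₆ ▸ pow_mem_residueClass h.mem₄ 4

theorem isResidueOrbit_orbitMonomial (h : IsResidueOrbit 3 a b c) {k : ℕ}
    (hk : k ∈ Finset.Icc 1 6) :
    IsResidueOrbit (if k ≤ 3 then 1 else -1) (orbitMonomial a b c k) (orbitMonomial b c a k)
      (orbitMonomial c a b k) := by
  have h₁ := h.orbitMonomial_mem_residueClass hk
  have h₂ := h.rotate.orbitMonomial_mem_residueClass hk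
  have h₄ := h.rotate.rotate.orbitMonomial_mem_residueClass hk
  split_ifs at h₁ h₂ h₄ ⊢ <;> exact ⟨h₁, h₂, h₄⟩

end IsResidueOrbit
end ResidueOrbit

section KleinDescent

variable {K : Type*} [CommRing K] {a b c d e f x y g : LaurentSeries K}

/-- Solutions of the Klein relations with components in the residue classes `3, 6, 5` modulo `7`;
the invariants `kleinX` and `kleinG` are then series in `q ^ 7`, obtained from `x`, `y`, `g` by
`q ↦ q ^ 7`. -/
structure KleinDescent (a b c d e f x y g : LaurentSeries K) : Prop where
  relations : KleinRelations a b c d e f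
  orbit_left : IsResidueOrbit 3 a b c
  orbit_right : IsResidueOrbit 3 d e f
  expand_left : expand 7 x = kleinX a b c
  expand_right : expand 7 y = kleinX d e f
  expand_mixed : expand 7 g = kleinG a b c d e f

namespace KleinDescent

theorem symm (H : KleinDescent a b c d e f x y g) : KleinDescent d e f a b c y x (7 - g) where
  relations := H.relations.symm
  orbit_left := H.orbit_right
  orbit_right := H.orbit_left
  expand_left := H.expand_right
  expand_right := H.expand_left
  expand_mixed := by rw [map_sub, map_ofNat, H.expand_mixed, H.relations.kleinG_swap]

theorem mul_sub_seven (H : KleinDescent a b c d e f x y g) : g * (g - 7) = x + y := by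
  apply expand_injective 7
  simpa only [map_mul, map_sub, map_add, map_ofNat, H.expand_left, H.expand_right, H.expand_mixed]
    using H.relations.kleinG_mul_sub_seven

theorem mul_sub (H : KleinDescent a b c d e f x y g) : g * (y - x) = 7 * y + x * y := by
  apply expand_injective 7
  simpa only [map_mul, map_sub, map_add, map_ofNat, H.expand_left, H.expand_right, H.expand_mixed]
    using H.relations.kleinG_mul_sub

theorem mul_mul_add (H : KleinDescent a b c d e f x y g) :
    x * y * g + 7 * x * g = y ^ 2 - x ^ 2 := by
  linear_combination (y - x) * H.mul_sub_seven - g * H.mul_sub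

theorem atkinU_orbitSum_mul (H : KleinDescent a b c d e f x y g) {k l : ℕ}
    (hk : k ∈ Finset.Icc 1 3) (hl : l ∈ Finset.Icc 4 6) :
    atkinU 7 (orbitSum a b c k * orbitSum d e f l) = evalTerms x y g (gramTerms k l) := by
  simp only [Finset.mem_Icc] at hk hl
  have hleft := H.orbit_left.isResidueOrbit_orbitMonomial (k := k) (Finset.mem_Icc.2 (by omega))
  have hright := H.orbit_right.isResidueOrbit_orbitMonomial (k := l) (Finset.mem_Icc.2 (by omega))
  rw [if_pos (by omega)] at hleft
  rw [if_neg (by omega)] at hright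
  rw [orbitSum, orbitSum, hleft.atkinU_sum_mul_sum_neg hright (by decide),
    H.relations.sum_orbitMonomial_mul (Finset.mem_Icc.2 hk) (Finset.mem_Icc.2 hl),
    ← H.expand_left, ← H.expand_right, ← H.expand_mixed, ← map_evalTerms]
  simpa only [mul_one, atkinU_one] using
    atkinU_expand_mul (m := 7) (evalTerms x y g (gramTerms k l)) 1

theorem atkinU_orbitBasis_zero_mul (H : KleinDescent a b c d e f x y g) {l : ℕ} (hl : l < 7) :
    atkinU 7 (orbitBasis a b c 0 * orbitBasis d e f l) = evalTerms x y g (gramTerms 0 l) := by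
  rw [orbitBasis, one_mul]
  rcases l with - | l
  · simp [orbitBasis, atkinU_one, gramTerms, evalTerms]
  · have horbit := H.orbit_right.isResidueOrbit_orbitMonomial (k := l + 1)
      (Finset.mem_Icc.2 (by omega))
    have hnil : gramTerms 0 (l + 1) = [] := by simp [gramTerms]
    rw [orbitBasis, orbitSum, horbit.atkinU_sum (by split_ifs <;> decide), hnil, evalTerms_nil]

theorem atkinU_orbitBasis_mul_zero (H : KleinDescent a b c d e f x y g) {k : ℕ} (hk : k < 7) :
    atkinU 7 (orbitBasis a b c k * orbitBasis d e f 0) = evalTerms x y g (gramTerms k 0) := by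
  have hswap := H.symm.atkinU_orbitBasis_zero_mul hk
  rw [mul_comm, hswap]
  interval_cases k <;> simp [gramTerms, evalTerms]

theorem atkinU_orbitSum_mul_orbitSum_eq_zero (H : KleinDescent a b c d e f x y g) {k l : ℕ}
    (hk : k ∈ Finset.Icc 1 6) (hl : l ∈ Finset.Icc 1 6) (hkl : k ≤ 3 ↔ l ≤ 3) :
    atkinU 7 (orbitSum a b c k * orbitSum d e f l) = 0 := by
  have hleft := H.orbit_left.isResidueOrbit_orbitMonomial hk
  have hright := H.orbit_right.isResidueOrbit_orbitMonomial hl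
  simp only [← hkl] at hright
  exact hleft.atkinU_sum_mul_sum hright (by split_ifs <;> decide)

theorem atkinU_orbitBasis_mul (H : KleinDescent a b c d e f x y g) {k l : ℕ} (hk : k < 7)
    (hl : l < 7) :
    atkinU 7 (orbitBasis a b c k * orbitBasis d e f l) = evalTerms x y g (gramTerms k l) := by
  rcases k with - | k
  · exact H.atkinU_orbitBasis_zero_mul hl
  rcases l with - | l
  · exact H.atkinU_orbitBasis_mul_zero hk
  rw [orbitBasis, orbitBasis]
  by_cases hkl : k + 1 ≤ 3 ↔ l + 1 ≤ 3
  · have hnil : ∀ k < 6, ∀ l < 6, (k + 1 ≤ 3 ↔ l + 1 ≤ 3) → gramTerms (k + 1) (l + 1) = [] := by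
      decide
    rw [H.atkinU_orbitSum_mul_orbitSum_eq_zero (Finset.mem_Icc.2 (by omega))
      (Finset.mem_Icc.2 (by omega)) hkl, hnil k (by omega) l (by omega) hkl, evalTerms_nil]
  · by_cases hk' : k + 1 ≤ 3
    · exact H.atkinU_orbitSum_mul (Finset.mem_Icc.2 (by omega)) (Finset.mem_Icc.2 (by omega))
    · have hl' : l + 1 ∈ Finset.Icc 1 3 := Finset.mem_Icc.2 (by omega)
      have hk' : k + 1 ∈ Finset.Icc 4 6 := Finset.mem_Icc.2 (by omega)
      rw [mul_comm, H.symm.atkinU_orbitSum_mul hl' hk',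
        KleinRelations.evalTerms_gramTerms_swap _ _ _ hl' hk']

theorem atkinU_pow_mul_pow (H : KleinDescent a b c d e f x y g) {i j : ℕ} (hi : i < 7)
    (hj : j < 7) :
    atkinU 7 ((a + b + c - 1) ^ i * (d + e + f - 1) ^ j) = evalTerms x y g (traceTable i j) := by
  rw [H.relations.pow_eq_sum_powerTerms hi, H.relations.symm.pow_eq_sum_powerTerms hj,
    Finset.sum_mul_sum, map_sum, ← sum_powerTerms_mul_gramTerms H.mul_sub hi hj]
  refine Finset.sum_congr rfl fun k hk => ?_
  rw [map_sum]
  refine Finset.sum_congr rfl fun l hl => ?_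
  rw [← H.expand_left, ← H.expand_right, ← map_evalTermsX, ← map_evalTermsX, mul_mul_mul_comm,
    ← map_mul, atkinU_expand_mul,
    H.atkinU_orbitBasis_mul (Finset.mem_range.1 hk) (Finset.mem_range.1 hl)]

end KleinDescent
end KleinDescent

section ModularRec

variable {K : Type*} [CommRing K]

theorem sum_modularTerms_eq_one {R : Type*} [CommRing R] {ξ t x : R} (hx : x * t = 1)
    (hmod : ξ ^ 7 + 7 * ξ ^ 6 + 21 * ξ ^ 5 + 49 * ξ ^ 4 + 147 * ξ ^ 3 + 343 * ξ ^ 2 + 343 * ξ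
      + x * (7 * ξ ^ 3 + 35 * ξ ^ 2 + 49 * ξ) = x ^ 2) :
    ∑ s ∈ modularTerms, (s.1 : R) * t ^ s.2.1 * ξ ^ s.2.2 = 1 := by
  rw [modularTerms]
  repeat rw [Finset.sum_insert (by decide)]
  rw [Finset.sum_singleton]
  push_cast
  linear_combination t ^ 2 * hmod + (x * t + 1 - t * (7 * ξ ^ 3 + 35 * ξ ^ 2 + 49 * ξ)) * hx

theorem modularRec_atkinU {ξ : (LaurentSeries K)ˣ} {t : LaurentSeries K}
    (hsum : ∑ s ∈ modularTerms, (s.1 : LaurentSeries K) * expand 7 t ^ s.2.1 *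
      (ξ : LaurentSeries K) ^ s.2.2 = 1) (f : LaurentSeries K) :
    ModularRec t fun i => atkinU 7 ((ξ ^ (-i) : (LaurentSeries K)ˣ) * f) := fun i => by
  have hshift (n : ℕ) : (ξ ^ (-(i - n)) : (LaurentSeries K)ˣ).val =
      (ξ : LaurentSeries K) ^ n * (ξ ^ (-i) : (LaurentSeries K)ˣ).val := by
    rw [← Units.val_pow_eq_pow_val, ← Units.val_mul, ← zpow_natCast, ← zpow_add, neg_sub,
      sub_eq_add_neg]
  beta_reduce
  conv_lhs => rw [← one_mul (_ * f), ← hsum, Finset.sum_mul, map_sum]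
  refine Finset.sum_congr rfl fun s _ => ?_
  rw [hshift, ← atkinU_expand_mul, map_mul (expand 7), map_intCast (expand 7), map_pow (expand 7)]
  simp only [mul_assoc]

end ModularRec

/-! ### The tower -/

section AtkinTrace

variable {K : Type*} [CommRing K] {a b c d e f g : LaurentSeries K}
  {T S ξ η : (LaurentSeries K)ˣ}

variable (ξ η) in
/-- The doubly indexed family `U₇ (ξ ^ (-i) * η ^ (-j))`. -/
def atkinTrace (i j : ℤ) : LaurentSeries K := atkinU 7 (ξ ^ (-i) * η ^ (-j) : (LaurentSeries K)ˣ)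

variable (ξ η) in
/-- The operator `f ↦ U₇ (ξ ^ (-m) * η ^ (-n) * f)`. -/
def twistedU (m n : ℤ) : LaurentSeries K →+ LaurentSeries K :=
  (atkinU 7).comp (AddMonoidHom.mulLeft ((ξ ^ (-m) * η ^ (-n) : (LaurentSeries K)ˣ) :
    LaurentSeries K))

theorem twistedU_zero : twistedU ξ η 0 0 = atkinU 7 := by
  ext f : 1
  simp [twistedU]

theorem zpow_eq_map_mul_zpow {G : Type*} [CommGroup G] {φ : G →* G} {t x : G}
    (h : t * φ t * x ^ 4 = 1) (n : ℤ) : t ^ n = φ (t ^ (-n)) * x ^ (-(4 * n)) := by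
  have ht : t = (φ t)⁻¹ * (x ^ (4 : ℤ))⁻¹ := by
    rw [← mul_inv, eq_inv_iff_mul_eq_one, ← mul_assoc]
    exact_mod_cast h
  rw [map_zpow, zpow_neg, zpow_neg, zpow_mul, ← inv_zpow, ← inv_zpow, ← mul_zpow, ← ht]

theorem isTwistedTrace_twistedU (hT : T * expandUnits 7 T * ξ ^ 4 = 1)
    (hS : S * expandUnits 7 S * η ^ 4 = 1) (m n : ℤ) :
    IsTwistedTrace T S (atkinTrace ξ η) m n (twistedU ξ η m n) := fun i j => by
  have hunit : ξ ^ (-m) * η ^ (-n) * (T ^ i * S ^ j) =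
      expandUnits 7 (T ^ (-i) * S ^ (-j)) * (ξ ^ (-(4 * i + m)) * η ^ (-(4 * j + n))) := by
    rw [zpow_eq_map_mul_zpow hT, zpow_eq_map_mul_zpow hS, map_mul, neg_add, neg_add, zpow_add,
      zpow_add, mul_comm (ξ ^ (-m) * _), mul_mul_mul_comm (expandUnits 7 _), mul_assoc,
      mul_mul_mul_comm (ξ ^ _)]
  calc twistedU ξ η m n (laurentMonomial T S i j)
      = atkinU 7 (ξ ^ (-m) * η ^ (-n) * (T ^ i * S ^ j) : (LaurentSeries K)ˣ) := rfl
    _ = atkinU 7 (expand 7 (laurentMonomial T S (-i) (-j)) *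
          (ξ ^ (-(4 * i + m)) * η ^ (-(4 * j + n)) : (LaurentSeries K)ˣ).val) := by
        rw [hunit]; rfl
    _ = _ := atkinU_expand_mul _ _

theorem KleinDescent.modularRec_left {x y : LaurentSeries K}
    (H : KleinDescent a b c d e f x y g) {t : LaurentSeries K} (ht : x * t = 1)
    (hξ : (ξ : LaurentSeries K) = a + b + c - 1) (w : LaurentSeries K) :
    ModularRec t fun i => atkinU 7 ((ξ ^ (-i) : (LaurentSeries K)ˣ) * w) := by
  refine modularRec_atkinU (sum_modularTerms_eq_one (x := expand 7 x) ?_ ?_) w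
  · rw [← map_mul, ht, map_one]
  · exact H.relations.modular_equation hξ H.expand_left

theorem KleinDescent.traceSystem (H : KleinDescent a b c d e f ↑T⁻¹ ↑S⁻¹ g)
    (hξ : (ξ : LaurentSeries K) = a + b + c - 1) (hη : (η : LaurentSeries K) = d + e + f - 1) :
    TraceSystem T S g (atkinTrace ξ η) where
  relation := H.mul_mul_add
  rec_left j := H.modularRec_left T.inv_mul hξ (η ^ (-j) : (LaurentSeries K)ˣ)
  rec_right i := by
    have h := H.symm.modularRec_left S.inv_mul hη (ξ ^ (-i) : (LaurentSeries K)ˣ)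
    simp only [mul_comm _ (ξ ^ (-i) : (LaurentSeries K)ˣ).val] at h
    exact h
  table i hi j hj := by
    rw [atkinTrace, neg_neg, neg_neg, zpow_natCast, zpow_natCast, Units.val_mul,
      Units.val_pow_eq_pow_val, Units.val_pow_eq_pow_val, hξ, hη, H.atkinU_pow_mul_pow hi hj]

end AtkinTrace

section Hauptmodul

/-- The level 7 Hauptmodul `T = q J₇ ^ 4 / J₁ ^ 4`. -/
def hauptmodul : (LaurentSeries ℤ)ˣ :=
  qPowUnit 1 * eulerJUnit 7 ^ 4 * (eulerJUnit 1)⁻¹ ^ 4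

theorem expandUnits_qPowUnit (b : ℕ) [NeZero b] (n : ℤ) :
    expandUnits b (qPowUnit n) = qPowUnit (b * n) :=
  Units.ext (expand_qPow b n)

theorem expandUnits_seven_hauptmodul :
    expandUnits 7 hauptmodul = qPowUnit 7 * eulerJUnit 49 ^ 4 * (eulerJUnit 7)⁻¹ ^ 4 := by
  simp only [hauptmodul, map_mul, map_pow, map_inv, expandUnits_qPowUnit, expandUnits_eulerJUnit]
  norm_num

theorem mul_mul_pow_four_eq_one {G : Type*} [CommGroup G] {q q' q'' : G}
    (hq : q * q' * q'' ^ 4 = 1) (j₁ j₇ j₄₉ : G) :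
    q * j₇ ^ 4 * j₁⁻¹ ^ 4 * (q' * j₄₉ ^ 4 * j₇⁻¹ ^ 4) * (q'' * j₁ * j₄₉⁻¹) ^ 4 = 1 :=
  calc q * j₇ ^ 4 * j₁⁻¹ ^ 4 * (q' * j₄₉ ^ 4 * j₇⁻¹ ^ 4) * (q'' * j₁ * j₄₉⁻¹) ^ 4
      = q * q' * q'' ^ 4 * (j₁ * j₁⁻¹ * (j₇ * j₇⁻¹) * (j₄₉ * j₄₉⁻¹)) ^ 4 := by
        simp only [mul_pow, mul_left_comm, mul_assoc]
    _ = 1 := by simp only [hq, mul_inv_cancel, mul_one, one_pow]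

theorem hauptmodul_mul_expandUnits_mul_eulerRatio_pow :
    hauptmodul * expandUnits 7 hauptmodul * eulerRatio ^ 4 = 1 := by
  have hq : qPowUnit 1 * qPowUnit 7 * qPowUnit (-2) ^ 4 = 1 := Units.ext <| by
    change (qPow 1 * qPow 7 * qPow (-2) ^ 4 : LaurentSeries ℤ) = 1
    rw [qPow_pow, qPow_mul_qPow, qPow_mul_qPow]
    exact qPow_zero
  rw [expandUnits_seven_hauptmodul, hauptmodul, eulerRatio]
  exact mul_mul_pow_four_eq_one hq _ _ _

theorem expand_inv_hauptmodul :
    expand 7 (hauptmodul⁻¹ : (LaurentSeries ℤ)ˣ).val = kleinX kleinA kleinB kleinC := by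
  change ((expandUnits 7 hauptmodul⁻¹ : (LaurentSeries ℤ)ˣ) : LaurentSeries ℤ) = _
  rw [kleinX_eq_eulerQuotient, map_inv, expandUnits_seven_hauptmodul, inv_pow, mul_inv, mul_inv,
    inv_inv, ← inv_pow, mul_right_comm]
  rfl

theorem kleinX_kleinD : kleinX kleinD kleinE kleinF = expand 2 (kleinX kleinA kleinB kleinC) := by
  simp only [kleinX, kleinD, kleinE, kleinF, map_sub, map_add, map_mul, map_pow, map_neg,
    map_ofNat]
  ring

theorem kleinG_mem_residueClass_zero {K : Type*} [CommRing K] {a b c d e f : LaurentSeries K}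
    (h : IsResidueOrbit 3 a b c) (h' : IsResidueOrbit 3 d e f) :
    kleinG a b c d e f ∈ residueClass 7 0 := by
  have hconst : (4 : LaurentSeries K) ∈ residueClass 7 0 := by
    simpa using nsmul_mem (one_mem_residueClass (K := K) (m := 7)) 4
  exact sub_mem hconst (add_mem (add_mem
    (mul_mem_residueClass (mul_mem_residueClass h'.mem₁ h.mem₂) h.mem₄)
    (mul_mem_residueClass (mul_mem_residueClass h'.mem₂ h.mem₁) h.mem₄))
    (mul_mem_residueClass (mul_mem_residueClass h'.mem₄ h.mem₁) h.mem₂))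

/-- The function of level 14 given by `7`-dissection of `kleinG`. -/
def mixedInvariant : LaurentSeries ℤ :=
  atkinU 7 (kleinG kleinA kleinB kleinC kleinD kleinE kleinF)

theorem kleinDescent :
    KleinDescent kleinA kleinB kleinC kleinD kleinE kleinF ↑hauptmodul⁻¹
      ↑(expandUnits 2 hauptmodul)⁻¹ mixedInvariant := by
  have hleft : IsResidueOrbit 3 kleinA kleinB kleinC :=
    ⟨kleinA_mem_residueClass, kleinB_mem_residueClass, kleinC_mem_residueClass⟩
  have hright : IsResidueOrbit 3 kleinD kleinE kleinF :=
    ⟨kleinD_mem_residueClass, kleinE_mem_residueClass, kleinF_mem_residueClass⟩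
  refine ⟨kleinRelations, hleft, hright, expand_inv_hauptmodul, ?_,
    expand_atkinU_of_mem (kleinG_mem_residueClass_zero hleft hright)⟩
  rw [kleinX_kleinD, ← expand_inv_hauptmodul, expand_comm, ← map_inv]
  rfl

theorem traceSystem_hauptmodul :
    TraceSystem hauptmodul (expandUnits 2 hauptmodul) mixedInvariant
      (atkinTrace eulerRatio (expandUnits 2 eulerRatio)) :=
  kleinDescent.traceSystem val_eulerRatio_eq_kleinA_add expand_two_eulerRatio

theorem isTwistedTrace_hauptmodul (m n : ℤ) :
    IsTwistedTrace hauptmodul (expandUnits 2 hauptmodul)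
      (atkinTrace eulerRatio (expandUnits 2 eulerRatio)) m n
      (twistedU eulerRatio (expandUnits 2 eulerRatio) m n) := by
  have hT := hauptmodul_mul_expandUnits_mul_eulerRatio_pow
  refine isTwistedTrace_twistedU hT ?_ m n
  have hcomm :
      expandUnits 7 (expandUnits 2 hauptmodul) = expandUnits 2 (expandUnits 7 hauptmodul) :=
    Units.ext (expand_comm 7 2 _)
  rw [hcomm, ← map_pow, ← map_mul, ← map_mul, hT, map_one]

theorem mul_pow_mul_inv_eq_zpow_mul {G : Type*} [CommGroup G] {q q' q'' : G}
    (hq : q ^ 12 * q' ^ 16 = q'' ^ 5) (j₁ j₂ j₄₉ j₉₈ : G) :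
    q ^ 12 * j₂ ^ 5 * j₄₉ ^ 16 * (j₁ ^ 16 * j₉₈ ^ 5)⁻¹ =
      (q' * j₁ * j₄₉⁻¹) ^ (-16 : ℤ) * (q'' * j₂ * j₉₈⁻¹) ^ (5 : ℤ) := by
  rw [zpow_neg, eq_inv_mul_iff_mul_eq]
  norm_cast
  calc (q' * j₁ * j₄₉⁻¹) ^ 16 * (q ^ 12 * j₂ ^ 5 * j₄₉ ^ 16 * (j₁ ^ 16 * j₉₈ ^ 5)⁻¹)
      = q ^ 12 * q' ^ 16 * (j₂ * j₉₈⁻¹) ^ 5 * (j₁ * j₁⁻¹ * (j₄₉ * j₄₉⁻¹)) ^ 16 := by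
        simp only [mul_pow, mul_inv, ← inv_pow, mul_comm, mul_left_comm, mul_assoc]
    _ = (q'' * j₂ * j₉₈⁻¹) ^ 5 := by
        rw [hq, mul_inv_cancel, mul_inv_cancel, mul_one, one_pow, mul_one, ← mul_pow, mul_assoc]

theorem eq_eulerRatio_zpow_mul {A : LaurentSeries ℤ}
    (hA : A * HahnSeries.ofPowerSeries ℤ ℤ ((J 1) ^ 16 * (J 98) ^ 5)
        = HahnSeries.ofPowerSeries ℤ ℤ (PowerSeries.X ^ 12 * (J 2) ^ 5 * (J 49) ^ 16)) :
    A = (eulerRatio ^ (-16 : ℤ) * expandUnits 2 eulerRatio ^ (5 : ℤ) : (LaurentSeries ℤ)ˣ) := by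
  have hA' : A * (eulerJUnit 1 ^ 16 * eulerJUnit 98 ^ 5 : (LaurentSeries ℤ)ˣ) =
      (qPowUnit 1 ^ 12 * eulerJUnit 2 ^ 5 * eulerJUnit 49 ^ 16 : (LaurentSeries ℤ)ˣ) := by
    simp only [map_mul, map_pow, HahnSeries.ofPowerSeries_X] at hA
    exact hA
  have hq : qPowUnit 1 ^ 12 * qPowUnit (-2) ^ 16 = qPowUnit (2 * -2) ^ 5 := Units.ext <| by
    change (qPow 1 ^ 12 * qPow (-2) ^ 16 : LaurentSeries ℤ) = qPow (2 * -2) ^ 5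
    rw [qPow_pow, qPow_pow, qPow_pow, qPow_mul_qPow]
    rfl
  have hη : expandUnits 2 eulerRatio = qPowUnit (2 * -2) * eulerJUnit 2 * (eulerJUnit 98)⁻¹ := by
    rw [eulerRatio, map_mul, map_mul, map_inv, expandUnits_qPowUnit, expandUnits_eulerJUnit,
      expandUnits_eulerJUnit]
    rfl
  rw [(Units.eq_mul_inv_iff_mul_eq _).2 hA', ← Units.val_mul, hη, eulerRatio,
    mul_pow_mul_inv_eq_zpow_mul hq]

end Hauptmodul

/-- in the d₅ tower (`A₅ = q^{12}·J_2^5·J_49^{16}/(J_1^{16}·J_98^5)`,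
`L_0 = 1`, `L_{2β+1} = U_7(A₅·L_{2β})`, `L_{2β+2} = U_7(L_{2β+1})`), for every `α ≥ 1`
there is an integer `x` with `L_{2α+2} ≡ x·L_{2α} (mod 7^{α+1})` coefficientwise. -/
theorem stmt17
    (U : LaurentSeries ℤ → LaurentSeries ℤ)
    (hU : ∀ (f : LaurentSeries ℤ) (n : ℤ), (U f).coeff n = f.coeff (7 * n))
    (A5 : LaurentSeries ℤ)
    (hA5 : A5 * HahnSeries.ofPowerSeries ℤ ℤ ((J 1) ^ 16 * (J 98) ^ 5)
        = HahnSeries.ofPowerSeries ℤ ℤ (PowerSeries.X ^ 12 * (J 2) ^ 5 * (J 49) ^ 16))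
    (L : ℕ → LaurentSeries ℤ) (hL0 : L 0 = 1)
    (hLodd : ∀ β : ℕ, L (2 * β + 1) = U (A5 * L (2 * β)))
    (hLeven : ∀ β : ℕ, L (2 * β + 2) = U (L (2 * β + 1)))
    (α : ℕ) (hα : 1 ≤ α) :
    ∃ x : ℤ, ∀ n : ℤ,
      Int.ModEq (7 ^ (α + 1)) ((L (2 * α + 2)).coeff n) (x * (L (2 * α)).coeff n) := by
  obtain rfl : U = atkinU 7 := by
    ext f n
    exact hU f n
  have hodd (n : ℕ) : L (2 * n + 1) =
      twistedU eulerRatio (expandUnits 2 eulerRatio) 16 (-5) (L (2 * n)) := by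
    rw [hLodd, eq_eulerRatio_zpow_mul hA5]
    rfl
  have heven (n : ℕ) : L (2 * (n + 1)) =
      twistedU eulerRatio (expandUnits 2 eulerRatio) 0 0 (L (2 * n + 1)) := by
    rw [twistedU_zero]
    exact hLeven n
  obtain ⟨x, r, hr⟩ := traceSystem_hauptmodul.exists_tower_sub_eq
    (isTwistedTrace_hauptmodul 16 (-5)) (isTwistedTrace_hauptmodul 0 0) (l := fun n => L (2 * n))
    hL0 (fun n => by rw [heven, hodd]) hα
  refine ⟨x, fun n => (Int.modEq_iff_dvd.2 ⟨r.coeff n, ?_⟩).symm⟩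
  have hcoeff := congrArg (fun f => f.coeff n) hr
  have hpow := coeff_intCast_mul (7 ^ (α + 1)) r n
  push_cast at hpow
  simpa only [HahnSeries.coeff_sub, coeff_intCast_mul, hpow, mul_add_one, Int.cast_id] using hcoeff
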